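/- arXiv:1706.06331 — 10 statements merged into one kernel-verified Lean document; each statement's English description precedes it below -/
import Mathlib

section
/- Let d ≥ 1 and for each η ∈ ℤ^d let a⁰_η, a¹_η : ℝ^d → ℝ and R_η : ℝ^d × (0,1] → ℝ. Assume there is C > 0 such that |a⁰_η(x) − a⁰_η(x+h)| ≤ C|h| and |a¹_η(x) − a¹_η(x+h)| ≤ C|h| for all η ∈ ℤ^d and x,h ∈ ℝ^d, that for each fixed x and η the value a¹_η(x) is finite, and that sup_{x,η} |R_η(x,ε)| ≤ Cε² for all ε ∈ (0,1]. Suppose the symmetry relation a⁰_η(x) + ε a¹_η(x) + R_η(x,ε) = a⁰_{−η}(x+εη) + ε a¹_{−η}(x+εη) + R_{−η}(x+εη, ε) holds for all η ∈ ℤ^d, x ∈ ℝ^d and ε ∈ (0,1]. Then a⁰_η(x) = a⁰_{−η}(x) for every η ∈ ℤ^d and x ∈ ℝ^d; in other words, the leading symbol ξ ↦ Σ_η a⁰_η(x) e^{−i η·ξ} is an even function of ξ. -/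
open scoped RealInnerProductSpace Classical
noncomputable section

/-- `ℝ^d` as a Euclidean space. -/
abbrev Ed (d : ℕ) := EuclideanSpace ℝ (Fin d)

/-- The lattice vector `η ∈ ℤ^d` regarded as a vector of `ℝ^d`. -/
def zv {d : ℕ} (η : Fin d → ℤ) : Ed d :=
  (EuclideanSpace.equiv (Fin d) ℝ).symm (fun i => (η i : ℝ))

/-- Lemma 1.2 (b): the leading coefficients `a⁰_η` are even in `η`, as a consequence of the
symmetry (reversibility) relation for the full coefficients
`a_η(x,ε) = a⁰_η(x) + ε a¹_η(x) + R_η(x,ε)` together with the uniform Lipschitz bounds on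
`a⁰, a¹` and the `O(ε²)` bound on the remainder. -/
theorem stmt0 (d : ℕ) (hd : 1 ≤ d)
    (a0 a1 : (Fin d → ℤ) → Ed d → ℝ)
    (R : (Fin d → ℤ) → Ed d → ℝ → ℝ)
    (C : ℝ) (hC : 0 < C)
    (hlip0 : ∀ (η : Fin d → ℤ) (x h : Ed d), |a0 η x - a0 η (x + h)| ≤ C * ‖h‖)
    (hlip1 : ∀ (η : Fin d → ℤ) (x h : Ed d), |a1 η x - a1 η (x + h)| ≤ C * ‖h‖)
    (hR : ∀ (η : Fin d → ℤ) (x : Ed d), ∀ ε ∈ Set.Ioc (0:ℝ) 1, |R η x ε| ≤ C * ε ^ 2)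
    (hsym : ∀ (η : Fin d → ℤ) (x : Ed d), ∀ ε ∈ Set.Ioc (0:ℝ) 1,
      a0 η x + ε * a1 η x + R η x ε
        = a0 (-η) (x + ε • zv η) + ε * a1 (-η) (x + ε • zv η) + R (-η) (x + ε • zv η) ε) :
    ∀ (η : Fin d → ℤ) (x : Ed d), a0 η x = a0 (-η) x := by
  intro η x
  set N := ‖zv η‖ with hN
  have hN0 : 0 ≤ N := norm_nonneg _
  have key : ∀ ε ∈ Set.Ioc (0:ℝ) 1, |a0 η x - a0 (-η) x|
      ≤ ε * (2 * (C * N) + |a1 η x| + |a1 (-η) x| + 2 * C) := by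
    intro ε hε
    have hs := hsym η x ε hε
    have h0 := hlip0 (-η) x (ε • zv η)
    have h1 := hlip1 (-η) x (ε • zv η)
    have r1 := hR η x ε hε
    have r2 := hR (-η) (x + ε • zv η) ε hε
    obtain ⟨e0, e1⟩ := hε
    rw [norm_smul, Real.norm_of_nonneg e0.le, ← hN] at h0 h1
    have hsq : C * ε ^ 2 ≤ C * ε := by
      apply mul_le_mul_of_nonneg_left _ hC.le
      nlinarith
    have hCN : 0 ≤ C * N := mul_nonneg hC.le hN0
    have h1' : |ε * (a1 (-η) x - a1 (-η) (x + ε • zv η))| ≤ ε * (C * N) := by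
      rw [abs_mul, abs_of_pos e0]
      apply mul_le_mul_of_nonneg_left _ e0.le
      nlinarith
    have b1 : |ε * a1 η x| = ε * |a1 η x| := by rw [abs_mul, abs_of_pos e0]
    have b2 : |ε * a1 (-η) x| = ε * |a1 (-η) x| := by rw [abs_mul, abs_of_pos e0]
    have b1' := abs_le.1 b1.le
    have b2' := abs_le.1 b2.le
    rw [abs_le] at h0 h1' r1 r2 ⊢
    constructor <;> linarith [h0.1, h0.2, h1'.1, h1'.2, r1.1, r1.2, r2.1, r2.2,
      b1'.1, b1'.2, b2'.1, b2'.2]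
  set K := 2 * (C * N) + |a1 η x| + |a1 (-η) x| + 2 * C with hK
  have hKpos : 0 < K := by positivity
  by_contra hne
  have hD : 0 < |a0 η x - a0 (-η) x| := abs_pos.2 (sub_ne_zero.2 hne)
  set D := |a0 η x - a0 (-η) x|
  have hk := key (min 1 (D / (2 * K))) ⟨lt_min one_pos (by positivity), min_le_left _ _⟩
  have h2 : min 1 (D / (2 * K)) * K ≤ D / (2 * K) * K :=
    mul_le_mul_of_nonneg_right (min_le_right _ _) hKpos.le
  have h3 : D / (2 * K) * K = D / 2 := by field_simp
  linarith
end
end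

section
/- Fix x ∈ ℝ^d and let ã : ℤ^d → ℝ (write ã_η := ã(η)). Assume: Σ_{η∈ℤ^d} ã_η = 0; ã_η ≤ 0 for η ≠ 0; ã_η = ã_{−η} for all η; for every c > 0 there is C > 0 with Σ_{η∈ℤ^d} e^{2c|η|} ã_η² ≤ C; and the real span of {η ∈ ℤ^d : ã_η < 0} is all of ℝ^d. Then the symmetric matrix B ∈ ℝ^{d×d} with entries B_{νμ} = −(1/2) Σ_{η∈ℤ^d} ã_η η_ν η_μ is well defined and positive definite, and the function t₀(ξ) := Σ_{η∈ℤ^d} ã_η cos(η·ξ) satisfies: there exist C′, δ > 0 such that |t₀(ξ) − ⟨ξ, Bξ⟩| ≤ C′|ξ|⁴ for all |ξ| ≤ δ. -/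
open scoped RealInnerProductSpace Classical
noncomputable section

lemma aux_int : Summable (fun n : ℤ => Real.exp (-|(n:ℝ)|)) := by
  have h : Summable (fun n : ℕ => Real.exp (-(n:ℝ))) := Real.summable_exp_neg_nat
  apply Summable.of_nat_of_neg
  · simpa using h
  · simpa using h

lemma aux_prod (d : ℕ) : Summable (fun η : Fin d → ℤ => ∏ i, Real.exp (-|(η i:ℝ)|)) := by
  induction d with
  | zero => exact Summable.of_finite
  | succ d ih =>
    rw [← (Fin.consEquiv (fun _ : Fin (d+1) => ℤ)).summable_iff]
    have := aux_int.mul_of_nonneg ih (fun _ => (Real.exp_pos _).le)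
      (fun _ => Finset.prod_nonneg fun _ _ => (Real.exp_pos _).le)
    refine this.congr ?_
    rintro ⟨n, η⟩
    simp [Fin.consEquiv, Fin.prod_univ_succ]

lemma zv_apply {d : ℕ} (η : Fin d → ℤ) (i : Fin d) : zv η i = (η i : ℝ) := rfl

lemma abs_le_zv {d : ℕ} (η : Fin d → ℤ) (i : Fin d) : |(η i : ℝ)| ≤ ‖zv η‖ := by
  rw [← zv_apply]
  exact PiLp.norm_apply_le (zv η) i

lemma aux_exp (d : ℕ) : Summable (fun η : Fin d → ℤ => Real.exp (-(d * ‖zv η‖))) := by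
  refine (aux_prod d).of_nonneg_of_le (fun _ => (Real.exp_pos _).le) (fun η => ?_)
  rw [← Real.exp_sum]
  apply Real.exp_le_exp.2
  rw [Finset.sum_neg_distrib]
  apply neg_le_neg
  calc ∑ i, |(η i : ℝ)| ≤ ∑ i : Fin d, ‖zv η‖ := Finset.sum_le_sum fun i _ => abs_le_zv η i
    _ = _ := by simp

lemma aux_moment (d : ℕ) (a : (Fin d → ℤ) → ℝ)
    (h : Summable (fun η : Fin d → ℤ => Real.exp (2 * ((d+1)/2) * ‖zv η‖) * (a η) ^ 2)) :
    Summable (fun η : Fin d → ℤ => |a η| * ‖zv η‖ ^ 4) := by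
  refine (h.add ((aux_exp d).mul_left (Nat.factorial 8 : ℝ))).of_nonneg_of_le
    (fun η => by positivity) (fun η => ?_)
  set n := ‖zv η‖ with hn
  have hn0 : 0 ≤ n := norm_nonneg _
  have h1 : n ^ 8 / (Nat.factorial 8 : ℝ) ≤ Real.exp n := Real.pow_div_factorial_le_exp n hn0 8
  have h2 : n ^ 8 ≤ (Nat.factorial 8 : ℝ) * Real.exp n := by
    rw [div_le_iff₀ (by positivity)] at h1
    linarith
  set u := Real.exp ((d+1)/2 * n) with hu
  have hu0 : 0 < u := Real.exp_pos _
  have e1 : Real.exp (2 * ((d+1)/2) * n) = u ^ 2 := by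
    rw [hu, sq, ← Real.exp_add]; congr 1; ring
  have e2 : Real.exp (-(d * n)) * u ^ 2 = Real.exp n := by
    rw [← e1, ← Real.exp_add]; congr 1; ring
  rw [e1]
  have h3 : (n ^ 4 / u) ^ 2 ≤ (Nat.factorial 8 : ℝ) * Real.exp (-(d * n)) := by
    rw [div_pow, div_le_iff₀ (by positivity), mul_assoc, e2]
    calc (n^4)^2 = n ^ 8 := by ring
      _ ≤ _ := h2
  have h4 : |a η| * n ^ 4 = (u * |a η|) * (n ^ 4 / u) := by field_simp
  have h5 : u ^ 2 * a η ^ 2 = (u * |a η|) ^ 2 := by rw [mul_pow, sq_abs]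
  rw [h4, h5]
  nlinarith [sq_nonneg ((u * |a η|) - (n ^ 4 / u)), sq_nonneg (u * |a η|), sq_nonneg (n ^ 4 / u)]

lemma aux_cos (t : ℝ) : |Real.cos t - 1 + t ^ 2 / 2| ≤ 3 * t ^ 4 := by
  rcases le_total |t| 1 with h | h
  · have := Real.cos_bound h
    have e : |t| ^ 4 = t ^ 4 := by
      rw [show (4:ℕ) = 2 * 2 by norm_num, pow_mul, pow_mul, sq_abs]
    rw [e] at this
    have h4 : 0 ≤ t ^ 4 := by positivity
    rw [show Real.cos t - 1 + t ^ 2 / 2 = Real.cos t - (1 - t ^ 2 / 2) by ring]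
    linarith
  · have h1 : 1 ≤ t ^ 2 := by rw [← sq_abs]; nlinarith
    have h2 : t ^ 2 ≤ t ^ 4 := by nlinarith
    rw [abs_le]
    constructor <;> linarith [Real.neg_one_le_cos t, Real.cos_le_one t]

lemma aux_inner {d : ℕ} (η : Fin d → ℤ) (ξ : Ed d) : ⟪zv η, ξ⟫ = ∑ i, ξ i * (η i : ℝ) := by
  rw [PiLp.inner_apply]
  simp [zv_apply]

/-- Lemma 1.2 (c): for fixed `x`, the leading symbol `t₀(ξ) = Σ_η ã_η cos(η·ξ)` has the
expansion `t₀(ξ) = ⟨ξ, Bξ⟩ + O(|ξ|⁴)` at `ξ = 0`, where the symmetric matrix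
`B_{νμ} = -(1/2) Σ_η ã_η η_ν η_μ` is well defined and positive definite. -/
theorem stmt1 (d : ℕ) (hd : 1 ≤ d) (a : (Fin d → ℤ) → ℝ)
    (hsum : HasSum a 0)
    (hneg : ∀ η : Fin d → ℤ, η ≠ 0 → a η ≤ 0)
    (heven : ∀ η : Fin d → ℤ, a η = a (-η))
    (hdecay : ∀ c : ℝ, 0 < c → ∃ C : ℝ, 0 < C ∧
      Summable (fun η : Fin d → ℤ => Real.exp (2 * c * ‖zv η‖) * (a η) ^ 2) ∧
      ∑' η : Fin d → ℤ, Real.exp (2 * c * ‖zv η‖) * (a η) ^ 2 ≤ C)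
    (hspan : Submodule.span ℝ {w : Ed d | ∃ η : Fin d → ℤ, a η < 0 ∧ w = zv η} = ⊤) :
    (∀ ν μ : Fin d, Summable (fun η : Fin d → ℤ => a η * (η ν : ℝ) * (η μ : ℝ)))
    ∧ ∀ B : Matrix (Fin d) (Fin d) ℝ,
        (∀ ν μ : Fin d, B ν μ = -(1/2) * ∑' η : Fin d → ℤ, a η * (η ν : ℝ) * (η μ : ℝ)) →
        (∀ ν μ : Fin d, B ν μ = B μ ν)
        ∧ (∀ ξ : Ed d, ξ ≠ 0 → 0 < ∑ ν : Fin d, ∑ μ : Fin d, ξ ν * B ν μ * ξ μ)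
        ∧ ∃ C' : ℝ, 0 < C' ∧ ∃ δ : ℝ, 0 < δ ∧ ∀ ξ : Ed d, ‖ξ‖ ≤ δ →
            |(∑' η : Fin d → ℤ, a η * Real.cos ⟪zv η, ξ⟫)
                - ∑ ν : Fin d, ∑ μ : Fin d, ξ ν * B ν μ * ξ μ|
              ≤ C' * ‖ξ‖ ^ 4 := by
  have hM : Summable (fun η : Fin d → ℤ => |a η| * ‖zv η‖ ^ 4) := by
    obtain ⟨C, -, h, -⟩ := hdecay ((d+1)/2) (by positivity)
    exact aux_moment d a h
  have hS : ∀ ν μ : Fin d, Summable (fun η : Fin d → ℤ => a η * (η ν : ℝ) * (η μ : ℝ)) := by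
    intro ν μ
    refine Summable.of_norm_bounded (hsum.summable.abs.add hM) (fun η => ?_)
    rw [Real.norm_eq_abs, abs_mul, abs_mul, mul_assoc]
    have h1 := abs_le_zv η ν
    have h2 := abs_le_zv η μ
    have h3 : |(η ν : ℝ)| * |(η μ : ℝ)| ≤ ‖zv η‖ * ‖zv η‖ :=
      mul_le_mul h1 h2 (abs_nonneg _) (norm_nonneg _)
    have h4 : ‖zv η‖ * ‖zv η‖ ≤ 1 + ‖zv η‖ ^ 4 := by
      nlinarith [sq_nonneg (‖zv η‖ ^ 2 - 1), sq_nonneg (‖zv η‖ ^ 2)]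
    calc |a η| * (|(η ν : ℝ)| * |(η μ : ℝ)|) ≤ |a η| * (1 + ‖zv η‖ ^ 4) :=
          mul_le_mul_of_nonneg_left (h3.trans h4) (abs_nonneg _)
      _ = _ := by ring
  refine ⟨hS, fun B hB => ?_⟩
  have hQ : ∀ ξ : Ed d, HasSum (fun η : Fin d → ℤ => -(1/2) * (a η * ⟪zv η, ξ⟫ ^ 2))
      (∑ ν : Fin d, ∑ μ : Fin d, ξ ν * B ν μ * ξ μ) := by
    intro ξ
    have h : HasSum (fun η : Fin d → ℤ => ∑ ν : Fin d, ∑ μ : Fin d,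
        ξ ν * (-(1/2) * (a η * (η ν : ℝ) * (η μ : ℝ))) * ξ μ)
        (∑ ν : Fin d, ∑ μ : Fin d, ξ ν * B ν μ * ξ μ) := by
      refine hasSum_sum fun ν _ => hasSum_sum fun μ _ => ?_
      rw [hB]
      exact (((hS ν μ).hasSum.mul_left _).mul_left _).mul_right _
    convert h using 2 with η
    rw [aux_inner, sq, Finset.sum_mul_sum, Finset.mul_sum, Finset.mul_sum]
    refine Finset.sum_congr rfl fun ν _ => ?_
    rw [Finset.mul_sum, Finset.mul_sum]
    refine Finset.sum_congr rfl fun μ _ => ?_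
    ring
  refine ⟨fun ν μ => ?_, fun ξ hξ => ?_, ?_⟩
  · rw [hB, hB]
    congr 2
    ext η
    ring
  · have hnn : ∀ η, 0 ≤ -(1/2) * (a η * ⟪zv η, ξ⟫ ^ 2) := by
      intro η
      by_cases h0 : η = 0
      · have : zv η = 0 := by
          subst h0; ext i; simp [zv_apply]
        simp [this]
      · nlinarith [mul_nonneg (neg_nonneg.2 (hneg η h0)) (sq_nonneg ⟪zv η, ξ⟫)]
    obtain ⟨η, hη, hne⟩ : ∃ η, a η < 0 ∧ ⟪zv η, ξ⟫ ≠ 0 := by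
      by_contra! hcon
      apply hξ
      have hle : Submodule.span ℝ {w : Ed d | ∃ η : Fin d → ℤ, a η < 0 ∧ w = zv η}
          ≤ (Submodule.span ℝ {ξ})ᗮ := by
        rw [Submodule.span_le]
        rintro w ⟨η, hη, rfl⟩
        rw [SetLike.mem_coe, Submodule.mem_orthogonal_singleton_iff_inner_left]
        exact hcon η hη
      rw [hspan] at hle
      have := hle (Submodule.mem_top (x := ξ))
      rw [Submodule.mem_orthogonal_singleton_iff_inner_left] at this
      exact inner_self_eq_zero.1 this
    rw [← (hQ ξ).tsum_eq]
    refine (hQ ξ).summable.tsum_pos hnn η ?_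
    have : 0 < ⟪zv η, ξ⟫ ^ 2 := by positivity
    nlinarith [mul_pos (neg_pos.2 hη) this]
  · refine ⟨3 * (∑' η, |a η| * ‖zv η‖ ^ 4) + 1, ?_, 1, one_pos, fun ξ _ => ?_⟩
    · have : 0 ≤ ∑' η, |a η| * ‖zv η‖ ^ 4 := tsum_nonneg fun η => by positivity
      linarith
    have hc : Summable (fun η : Fin d → ℤ => a η * Real.cos ⟪zv η, ξ⟫) := by
      refine Summable.of_norm_bounded hsum.summable.abs (fun η => ?_)
      rw [Real.norm_eq_abs, abs_mul]
      exact mul_le_of_le_one_right (abs_nonneg _) (Real.abs_cos_le_one _)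
    have hd' := (hc.hasSum.sub hsum).sub (hQ ξ)
    rw [sub_zero] at hd'
    rw [← hd'.tsum_eq, ← Real.norm_eq_abs]
    have hb := (hM.hasSum.mul_left 3).mul_right (‖ξ‖ ^ 4)
    refine (tsum_of_norm_bounded hb fun η => ?_).trans ?_
    · rw [Real.norm_eq_abs, show a η * Real.cos ⟪zv η, ξ⟫ - a η - -(1/2) * (a η * ⟪zv η, ξ⟫ ^ 2)
        = a η * (Real.cos ⟪zv η, ξ⟫ - 1 + ⟪zv η, ξ⟫ ^ 2 / 2) by ring, abs_mul]
      have h1 := aux_cos ⟪zv η, ξ⟫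
      have h2 : ⟪zv η, ξ⟫ ^ 4 ≤ (‖zv η‖ * ‖ξ‖) ^ 4 := by
        have := pow_le_pow_left₀ (abs_nonneg _) (abs_real_inner_le_norm (zv η) ξ) 4
        rwa [Even.pow_abs (by decide)] at this
      calc _ ≤ |a η| * (3 * (‖zv η‖ * ‖ξ‖) ^ 4) :=
            mul_le_mul_of_nonneg_left (by linarith) (abs_nonneg _)
        _ = _ := by ring
    · gcongr
      linarith
end
end

section
/- Let ε ∈ (0,1] and let a : ℤ^d × (εℤ)^d → ℝ, (η,x) ↦ a_η(x). Assume there exist c > 0 and C > 0 such that Σ_{η∈ℤ^d} e^{2c|η|} a_η(x)² ≤ C² for every x ∈ (εℤ)^d. Then (Tu)(x) := Σ_{η∈ℤ^d} a_η(x) u(x+εη) defines a bounded linear operator T on ℓ²((εℤ)^d), with operator norm bounded by a constant depending only on C, c and d (in particular uniform in ε). If in addition a_η(x) = a_{−η}(x+εη) for all η ∈ ℤ^d and x ∈ (εℤ)^d, then T is symmetric: ⟨u, Tv⟩ = ⟨Tu, v⟩ for all u, v ∈ ℓ²((εℤ)^d). -/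
open scoped RealInnerProductSpace Classical
noncomputable section

/-- The lattice point `εm ∈ (εℤ)^d` of integer coordinates `m`. -/
def pt (d : ℕ) (ε : ℝ) (m : Fin d → ℤ) : Fin d → ℝ := fun i => ε * (m i : ℝ)

theorem aux_summable_pi (d : ℕ) (f : ℤ → ℝ) (hf : Summable f) (h0 : ∀ n, 0 ≤ f n) :
    Summable (fun η : Fin d → ℤ => ∏ i, f (η i)) := by
  refine summable_of_sum_le (c := ∏ _i : Fin d, ∑' n, f n)
    (fun η => Finset.prod_nonneg fun i _ => h0 _) (fun s => ?_)
  have hsub : s ⊆ Fintype.piFinset (fun i : Fin d => s.image (fun η => η i)) := by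
    intro η hη
    rw [Fintype.mem_piFinset]
    intro i
    exact Finset.mem_image_of_mem (fun η : Fin d → ℤ => η i) hη
  calc ∑ η ∈ s, ∏ i, f (η i)
      ≤ ∑ η ∈ Fintype.piFinset (fun i : Fin d => s.image (fun η => η i)), ∏ i, f (η i) :=
        Finset.sum_le_sum_of_subset_of_nonneg hsub
          (fun η _ _ => Finset.prod_nonneg fun i _ => h0 _)
    _ = ∏ i : Fin d, ∑ n ∈ s.image (fun η => η i), f n := by
        rw [Finset.prod_univ_sum]
    _ ≤ ∏ _i : Fin d, ∑' n, f n :=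
        Finset.prod_le_prod (fun i _ => Finset.sum_nonneg fun n _ => h0 n)
          (fun i _ => hf.sum_le_tsum _ (fun n _ => h0 n))

theorem aux_summable_int (b : ℝ) (hb : 0 < b) :
    Summable (fun n : ℤ => Real.exp (-(b * |(n : ℝ)|))) := by
  have h : Summable (fun n : ℕ => Real.exp (n * (-b))) :=
    Real.summable_exp_nat_mul_iff.mpr (by linarith)
  apply Summable.of_nat_of_neg
  · refine h.congr fun n => ?_
    simp [mul_comm]
  · refine h.congr fun n => ?_
    simp [mul_comm]

theorem aux_summable_exp (d : ℕ) (c : ℝ) (hc : 0 < c) :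
    Summable (fun η : Fin d → ℤ => Real.exp (-(c * ‖zv η‖))) := by
  have hb : 0 < c / (d + 1) := by positivity
  refine Summable.of_nonneg_of_le (fun η => (Real.exp_pos _).le) (fun η => ?_)
    (aux_summable_pi d _ (aux_summable_int _ hb) (fun n => (Real.exp_pos _).le))
  rw [← Real.exp_sum, Real.exp_le_exp, Finset.sum_neg_distrib, neg_le_neg_iff, ← Finset.mul_sum]
  have h1 : ∑ i, |(η i : ℝ)| ≤ ∑ _i : Fin d, ‖zv η‖ := by
    refine Finset.sum_le_sum fun i _ => ?_
    have := PiLp.norm_apply_le (zv η) i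
    simpa [zv] using this
  have h2 : ∑ i, |(η i : ℝ)| ≤ (d + 1) * ‖zv η‖ := by
    simp at h1
    nlinarith [norm_nonneg (zv η)]
  calc c / (d + 1) * ∑ i, |(η i : ℝ)| ≤ c / (d + 1) * ((d + 1) * ‖zv η‖) := by gcongr
    _ = c * ‖zv η‖ := by field_simp

abbrev L2 (d : ℕ) := lp (fun _ : (Fin d → ℤ) => ℂ) 2

theorem aux_bound {d : ℕ} (b : (Fin d → ℤ) → ℝ) (K : ℝ) (hb : ∀ m, |b m| ≤ K)
    (η : Fin d → ℤ) (u : L2 d) :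
    Summable (fun m => ‖(b m : ℂ) * u (m + η)‖ ^ (2 : ENNReal).toReal) ∧
    ∑' m, ‖(b m : ℂ) * u (m + η)‖ ^ (2 : ENNReal).toReal ≤
      (K * ‖u‖) ^ (2 : ENNReal).toReal := by
  have hK : 0 ≤ K := (abs_nonneg _).trans (hb 0)
  have hs := lp.hasSum_norm (p := 2) (by simp) u
  have hs' : HasSum (fun m => K ^ (2 : ENNReal).toReal * ‖u (m + η)‖ ^ (2 : ENNReal).toReal)
      (K ^ (2 : ENNReal).toReal * ‖u‖ ^ (2 : ENNReal).toReal) :=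
    ((Equiv.addRight η).hasSum_iff.mpr hs).mul_left _
  have hle : ∀ m, ‖(b m : ℂ) * u (m + η)‖ ^ (2 : ENNReal).toReal ≤
      K ^ (2 : ENNReal).toReal * ‖u (m + η)‖ ^ (2 : ENNReal).toReal := by
    intro m
    rw [← Real.mul_rpow hK (norm_nonneg _), norm_mul, Complex.norm_real, Real.norm_eq_abs]
    gcongr
    exact hb m
  have hsum : Summable (fun m => ‖(b m : ℂ) * u (m + η)‖ ^ (2 : ENNReal).toReal) :=
    Summable.of_nonneg_of_le (fun m => by positivity) hle hs'.summable
  refine ⟨hsum, ?_⟩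
  rw [Real.mul_rpow hK (norm_nonneg _), ← hs'.tsum_eq]
  exact hsum.tsum_le_tsum hle hs'.summable

theorem aux_op {d : ℕ} (b : (Fin d → ℤ) → ℝ) (K : ℝ) (hb : ∀ m, |b m| ≤ K) (η : Fin d → ℤ) :
    ∃ S : L2 d →L[ℂ] L2 d, ‖S‖ ≤ K ∧ ∀ u m, (S u) m = (b m : ℂ) * u (m + η) := by
  have hK : 0 ≤ K := (abs_nonneg _).trans (hb 0)
  let S₀ : L2 d →ₗ[ℂ] L2 d :=
    { toFun := fun u => ⟨fun m => (b m : ℂ) * u (m + η), memℓp_gen (aux_bound b K hb η u).1⟩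
      map_add' := by
        intro u v
        ext m
        exact mul_add _ _ _
      map_smul' := by
        intro r u
        ext m
        simp [mul_left_comm] }
  refine ⟨S₀.mkContinuous K fun u => ?_, LinearMap.mkContinuous_norm_le _ hK _, fun u m => rfl⟩
  exact lp.norm_le_of_tsum_le (by simp) (by positivity) (aux_bound b K hb η u).2

theorem aux_coeff {d : ℕ} (c C : ℝ) (hC : 0 < C) (f : (Fin d → ℤ) → ℝ)
    (h1 : Summable (fun η : Fin d → ℤ => Real.exp (2 * c * ‖zv η‖) * (f η) ^ 2))
    (h2 : ∑' η : Fin d → ℤ, Real.exp (2 * c * ‖zv η‖) * (f η) ^ 2 ≤ C ^ 2) (η : Fin d → ℤ) :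
    |f η| ≤ C * Real.exp (-(c * ‖zv η‖)) := by
  have h3 := (h1.le_tsum η (fun j _ => by positivity)).trans h2
  have h4 : (Real.exp (c * ‖zv η‖) * |f η|) ^ 2 ≤ C ^ 2 := by
    rw [mul_pow, sq_abs, ← Real.exp_nat_mul]
    have h6 : ((2 : ℕ) : ℝ) * (c * ‖zv η‖) = 2 * c * ‖zv η‖ := by push_cast; ring
    rw [h6]
    exact h3
  have h5 := le_of_sq_le_sq h4 hC.le
  rw [Real.exp_neg, ← div_eq_mul_inv, le_div_iff₀ (Real.exp_pos _)]
  linarith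

/-- Lemma 1.2 (d), boundedness and symmetry: under the exponential ℓ²-decay of the
coefficients, `(Tu)(x) = Σ_η a_η(x) u(x+εη)` defines a bounded operator on `ℓ²((εℤ)^d)`
with norm bounded by a constant depending only on `C, c, d` (uniform in `ε` and `a`);
if moreover `a_η(x) = a_{-η}(x+εη)` then `T` is symmetric. -/
theorem stmt2 (d : ℕ) (c C : ℝ) (hc : 0 < c) (hC : 0 < C) :
    ∃ C' : ℝ, 0 < C' ∧
      ∀ ε ∈ Set.Ioc (0:ℝ) 1, ∀ a : (Fin d → ℤ) → (Fin d → ℝ) → ℝ,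
        (∀ m : Fin d → ℤ,
          Summable (fun η : Fin d → ℤ =>
            Real.exp (2 * c * ‖zv η‖) * (a η (pt d ε m)) ^ 2) ∧
          ∑' η : Fin d → ℤ, Real.exp (2 * c * ‖zv η‖) * (a η (pt d ε m)) ^ 2 ≤ C ^ 2) →
        ∃ T : lp (fun _ : (Fin d → ℤ) => ℂ) 2 →L[ℂ] lp (fun _ : (Fin d → ℤ) => ℂ) 2,
          ‖T‖ ≤ C' ∧
          (∀ (u : lp (fun _ : (Fin d → ℤ) => ℂ) 2) (m : Fin d → ℤ),
            (T u) m = ∑' η : Fin d → ℤ, ((a η (pt d ε m) : ℝ) : ℂ) * u (m + η)) ∧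
          ((∀ η m : Fin d → ℤ, a η (pt d ε m) = a (-η) (pt d ε (m + η))) →
            ∀ u v : lp (fun _ : (Fin d → ℤ) => ℂ) 2,
              (inner ℂ u (T v) : ℂ) = inner ℂ (T u) v) := by
  have hE := aux_summable_exp d c hc
  have hCE := hE.mul_left C
  refine ⟨∑' η : Fin d → ℤ, C * Real.exp (-(c * ‖zv η‖)),
    hCE.tsum_pos (fun η => by positivity) 0 (by positivity), ?_⟩
  intro ε _ a ha
  have hco : ∀ η m, |a η (pt d ε m)| ≤ C * Real.exp (-(c * ‖zv η‖)) := fun η m =>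
    aux_coeff c C hC (fun η => a η (pt d ε m)) (ha m).1 (ha m).2 η
  choose S hS1 hS2 using fun η : Fin d → ℤ =>
    aux_op (fun m => a η (pt d ε m)) _ (hco η) η
  have hSs : Summable S := Summable.of_norm_bounded hCE hS1
  have happ : ∀ u, HasSum (fun η => S η u) ((∑' η, S η) u) := fun u =>
    hSs.hasSum.mapL (ContinuousLinearMap.apply ℂ (L2 d) u)
  refine ⟨∑' η, S η, tsum_of_norm_bounded hCE.hasSum hS1, ?_, ?_⟩
  · intro u m
    have h := (happ u).mapL (lp.evalCLM ℂ (fun _ : (Fin d → ℤ) => ℂ) 2 m)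
    refine h.tsum_eq.symm.trans ?_
    exact tsum_congr fun η => hS2 η u m
  · intro hsym u v
    have hadj : ∀ η, (inner ℂ u (S η v) : ℂ) = inner ℂ (S (-η) u) v := by
      intro η
      rw [lp.inner_eq_tsum, lp.inner_eq_tsum, 
        ← (Equiv.addRight η).tsum_eq (fun m => (inner ℂ ((S (-η) u) m) (v m) : ℂ))]
      refine tsum_congr fun m => ?_
      simp only [Equiv.coe_addRight, hS2, hsym η m, add_neg_cancel_right]
      simp
      ring
    have h1 : HasSum (fun η => (inner ℂ u (S η v) : ℂ)) (inner ℂ u ((∑' η, S η) v)) :=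
      (happ v).mapL (innerSL ℂ u)
    have h2 : HasSum (fun η => (inner ℂ (S η u) v : ℂ)) (inner ℂ ((∑' η, S η) u) v) := by
      have h3 := ((happ u).mapL (innerSL ℂ v)).map (starRingEnd ℂ) Complex.continuous_conj
      simpa [Function.comp_def] using h3
    have h4 := (Equiv.neg (Fin d → ℤ)).hasSum_iff.mpr h2
    refine h1.unique ?_
    convert h4 using 1
    ext η
    exact hadj η
end
end

section
/- Let h ∈ C^∞(ℝ^d × ℝ^d, ℝ) be hyperconvex in each fibre, i.e. for every x ∈ ℝ^d there exists α(x) > 0 such that ⟨v, D²_ξ h(x,ξ) v⟩ ≥ α(x) |v|² for all ξ, v ∈ ℝ^d. Then the fibre derivative 𝒟_F h : ℝ^d × ℝ^d → ℝ^d × ℝ^d, (x, ξ) ↦ (x, ∇_ξ h(x,ξ)), is a C^∞ diffeomorphism of ℝ^{2d}; in particular, for each x the gradient map ξ ↦ ∇_ξ h(x,ξ) is a bijection of ℝ^d. -/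
open scoped RealInnerProductSpace Classical
noncomputable section

open InnerProductSpace in
lemma grad_formula (d : ℕ) (h : Ed d → Ed d → ℝ)
    (hsmooth : ContDiff ℝ (⊤ : ℕ∞) (fun p : Ed d × Ed d => h p.1 p.2)) (p : Ed d × Ed d) :
    gradient (h p.1) p.2 = (toDual ℝ (Ed d)).symm
      ((fderiv ℝ (fun p : Ed d × Ed d => h p.1 p.2) p).comp
        (ContinuousLinearMap.inr ℝ (Ed d) (Ed d))) := by
  unfold gradient
  congr 1
  have h1 : HasFDerivAt (fun p : Ed d × Ed d => h p.1 p.2)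
      (fderiv ℝ (fun p : Ed d × Ed d => h p.1 p.2) p) (p.1, p.2) :=
    ((hsmooth.differentiable (by simp)) p).hasFDerivAt
  exact (h1.comp p.2 (hasFDerivAt_prodMk_right p.1 p.2)).fderiv

lemma grad_smooth (d : ℕ) (h : Ed d → Ed d → ℝ)
    (hsmooth : ContDiff ℝ (⊤ : ℕ∞) (fun p : Ed d × Ed d => h p.1 p.2)) :
    ContDiff ℝ (⊤ : ℕ∞) (fun p : Ed d × Ed d => gradient (h p.1) p.2) := by
  simp_rw [grad_formula d h hsmooth]
  refine (LinearIsometryEquiv.contDiff _).comp ?_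
  exact (hsmooth.fderiv_right (m := (⊤ : ℕ∞)) (by simp)).clm_comp contDiff_const

lemma grad_deriv (d : ℕ) (f : Ed d → ℝ) (hf : ContDiff ℝ (⊤ : ℕ∞) f) (A : Ed d →L[ℝ] Ed d)
    (ξ : Ed d) (hA : HasFDerivAt (gradient f) A ξ) (v : Ed d) :
    ⟪A v, v⟫ = iteratedFDeriv ℝ 2 f ξ ![v, v] := by
  rw [iteratedFDeriv_two_apply]
  have h1 : HasFDerivAt (fderiv ℝ f) (fderiv ℝ (fderiv ℝ f) ξ) ξ :=
    (((hf.fderiv_right (m := (⊤ : ℕ∞)) (by simp)).differentiable (by simp)) ξ).hasFDerivAt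
  have h2 := h1.clm_apply (hasFDerivAt_const v ξ)
  have h3 := hA.inner ℝ (hasFDerivAt_const v ξ)
  have h4 : (fun η => ⟪gradient f η, v⟫) = fun η => fderiv ℝ f η v := by
    funext η; simp [gradient]
  rw [h4] at h3
  have h5 := congrArg (fun L => L v) (h3.unique h2)
  simpa using h5

lemma strong_mono (d : ℕ) (g : Ed d → Ed d) (A : Ed d → Ed d →L[ℝ] Ed d)
    (hA : ∀ ξ, HasFDerivAt g (A ξ) ξ) (α : ℝ)
    (hα : ∀ ξ v, α * ‖v‖ ^ 2 ≤ ⟪A ξ v, v⟫) (a b : Ed d) :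
    α * ‖b - a‖ ^ 2 ≤ ⟪g b - g a, b - a⟫ := by
  have hd : ∀ t : ℝ, HasDerivAt (fun t : ℝ => ⟪g (a + t • (b - a)), b - a⟫)
      ⟪A (a + t • (b - a)) (b - a), b - a⟫ t := by
    intro t
    have h0 : HasDerivAt (fun t : ℝ => a + t • (b - a)) (b - a) t := by
      simpa using ((hasDerivAt_id t).smul_const (b - a)).const_add a
    have h1 := (hA (a + t • (b - a))).comp_hasDerivAt t h0
    simpa using h1.inner ℝ (hasDerivAt_const t (b - a))
  have := mul_sub_le_image_sub_of_le_deriv (f := fun t : ℝ => ⟪g (a + t • (b - a)), b - a⟫)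
    (C := α * ‖b - a‖ ^ 2) (fun t => (hd t).differentiableAt)
    (fun t => by rw [(hd t).deriv]; exact hα _ _) (x := 0) (y := 1) zero_le_one
  simpa [inner_sub_left] using this

lemma grad_bij (d : ℕ) (g : Ed d → Ed d) (A : Ed d → Ed d →L[ℝ] Ed d)
    (hA : ∀ ξ, HasFDerivAt g (A ξ) ξ) (α : ℝ) (hpos : 0 < α)
    (hα : ∀ ξ v, α * ‖v‖ ^ 2 ≤ ⟪A ξ v, v⟫) : Function.Bijective g := by
  have hm := strong_mono d g A hA α hα
  have hl : ∀ a b, α * ‖b - a‖ ≤ ‖g b - g a‖ := by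
    intro a b
    have h1 := (hm a b).trans (real_inner_le_norm _ _)
    rcases (norm_nonneg (b - a)).eq_or_lt with h0 | h0
    · rw [← h0]; simp
    · refine le_of_mul_le_mul_right ?_ h0
      linarith [h1, sq (‖b - a‖), mul_assoc α ‖b - a‖ ‖b - a‖,
        congrArg (α * ·) (sq (‖b - a‖))]
  constructor
  · intro a b hab
    have := hl a b
    rw [hab, sub_self, norm_zero] at this
    have h2 : ‖b - a‖ ≤ 0 := by
      by_contra hc
      push Not at hc
      nlinarith [mul_pos hpos hc]
    exact (sub_eq_zero.mp (norm_le_zero_iff.mp h2)).symm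
  · intro y
    have hc : Continuous g := continuous_iff_continuousAt.2 fun ξ => (hA ξ).continuousAt
    have ht : Filter.Tendsto (fun ξ => ‖g ξ - y‖ ^ 2) (Filter.cocompact _) Filter.atTop := by
      refine (Filter.tendsto_pow_atTop two_ne_zero).comp ?_
      have h3 : Filter.Tendsto (fun ξ : Ed d => α * ‖ξ‖ - ‖g 0 - y‖)
          (Filter.cocompact _) Filter.atTop :=
        Filter.tendsto_atTop_add_const_right _ _
          ((tendsto_norm_cocompact_atTop).const_mul_atTop hpos)
      refine Filter.tendsto_atTop_mono (fun ξ => ?_) h3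
      have h4 := hl 0 ξ
      have h5 : ‖g ξ - g 0‖ ≤ ‖g ξ - y‖ + ‖g 0 - y‖ := by
        simpa using norm_sub_le (g ξ - y) (g 0 - y)
      rw [sub_zero] at h4
      linarith
    obtain ⟨ξ, hξ⟩ := Continuous.exists_forall_le (f := fun ξ => ‖g ξ - y‖ ^ 2)
      (by fun_prop) ht
    refine ⟨ξ, ?_⟩
    have hinj : Function.Injective (A ξ : Ed d →ₗ[ℝ] Ed d) := by
      refine (injective_iff_map_eq_zero _).2 fun v hv => ?_
      have h6 := hα ξ v
      have hv' : A ξ v = 0 := hv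
      rw [hv', inner_zero_left] at h6
      by_contra hne
      have := mul_pos hpos (pow_pos (norm_pos_iff.2 hne) 2)
      linarith
    obtain ⟨v, hv⟩ := LinearMap.surjective_of_injective hinj (g ξ - y)
    have hv' : A ξ v = g ξ - y := hv
    have hd := ((hA ξ).sub_const y).norm_sq
    have hz := IsLocalMin.hasFDerivAt_eq_zero (Filter.Eventually.of_forall hξ) hd
    have hz' := congrArg (fun L => L v) hz
    simp [hv', inner_sub_left] at hz'
    rw [← inner_sub_left, inner_self_eq_zero] at hz'
    exact sub_eq_zero.mp hz'

/-- Proposition 2.8: a smooth Hamilton function which is hyperconvex in each fibre is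
hyperregular, i.e. its fibre derivative `(x,ξ) ↦ (x, ∇_ξ h(x,ξ))` is a smooth diffeomorphism
of `ℝ^{2d}`; in particular each fibrewise gradient map `ξ ↦ ∇_ξ h(x,ξ)` is a bijection. -/
theorem stmt4 (d : ℕ) (h : Ed d → Ed d → ℝ)
    (hsmooth : ContDiff ℝ (⊤ : ℕ∞) (fun p : Ed d × Ed d => h p.1 p.2))
    (hconv : ∀ x : Ed d, ∃ α : ℝ, 0 < α ∧ ∀ ξ v : Ed d,
      α * ‖v‖ ^ 2 ≤ iteratedFDeriv ℝ 2 (h x) ξ ![v, v]) :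
    ∃ F : (Ed d × Ed d) ≃ (Ed d × Ed d),
      (∀ p : Ed d × Ed d, F p = (p.1, gradient (h p.1) p.2)) ∧
      ContDiff ℝ (⊤ : ℕ∞) ⇑F ∧
      ContDiff ℝ (⊤ : ℕ∞) ⇑F.symm ∧
      ∀ x : Ed d, Function.Bijective (fun ξ : Ed d => gradient (h x) ξ) := by
  have hG := grad_smooth d h hsmooth
  have hx : ∀ x, ContDiff ℝ (⊤ : ℕ∞) (h x) := fun x =>
    hsmooth.comp (contDiff_prodMk_right x)
  let G : Ed d × Ed d → Ed d := fun p => gradient (h p.1) p.2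
  let B : Ed d × Ed d → (Ed d × Ed d →L[ℝ] Ed d) := fun p => fderiv ℝ G p
  have hB : ∀ p, HasFDerivAt G (B p) p := fun p =>
    ((hG.differentiable (by simp)) p).hasFDerivAt
  have hA : ∀ x ξ, HasFDerivAt (gradient (h x))
      ((B (x, ξ)).comp (ContinuousLinearMap.inr ℝ (Ed d) (Ed d))) ξ := fun x ξ =>
    (hB (x, ξ)).comp ξ (hasFDerivAt_prodMk_right x ξ)
  have hpd : ∀ x, ∃ α : ℝ, 0 < α ∧ ∀ ξ v : Ed d, α * ‖v‖ ^ 2 ≤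
      ⟪((B (x, ξ)).comp (ContinuousLinearMap.inr ℝ (Ed d) (Ed d))) v, v⟫ := by
    intro x
    obtain ⟨α, h0, h1⟩ := hconv x
    refine ⟨α, h0, fun ξ v => ?_⟩
    rw [grad_deriv d (h x) (hx x) _ ξ (hA x ξ) v]
    exact h1 ξ v
  have hbij : ∀ x, Function.Bijective (gradient (h x)) := by
    intro x
    obtain ⟨α, h0, h1⟩ := hpd x
    exact grad_bij d _ _ (hA x) α h0 h1
  let Φ : Ed d × Ed d → Ed d × Ed d := fun p => (p.1, G p)
  have hΦs : ContDiff ℝ (⊤ : ℕ∞) Φ := contDiff_fst.prodMk hG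
  have hΦb : Function.Bijective Φ := by
    constructor
    · rintro ⟨x, ξ⟩ ⟨y, η⟩ he
      obtain ⟨h1, h2⟩ := Prod.mk.inj he
      dsimp only at h1
      subst h1
      exact Prod.ext rfl ((hbij x).1 h2)
    · rintro ⟨x, y⟩
      obtain ⟨ξ, hξ⟩ := (hbij x).2 y
      exact ⟨(x, ξ), Prod.ext rfl hξ⟩
  have hE : ∀ p, ∃ e : (Ed d × Ed d) ≃L[ℝ] (Ed d × Ed d),
      HasFDerivAt Φ (e : Ed d × Ed d →L[ℝ] Ed d × Ed d) p := by
    rintro ⟨x, ξ⟩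
    have hd : HasFDerivAt Φ ((ContinuousLinearMap.fst ℝ (Ed d) (Ed d)).prod (B (x, ξ))) (x, ξ) :=
      hasFDerivAt_fst.prodMk (hB (x, ξ))
    have hinj : Function.Injective
        (((ContinuousLinearMap.fst ℝ (Ed d) (Ed d)).prod (B (x, ξ)) :
          Ed d × Ed d →L[ℝ] Ed d × Ed d) : Ed d × Ed d →ₗ[ℝ] Ed d × Ed d) := by
      refine (injective_iff_map_eq_zero _).2 ?_
      rintro ⟨u, v⟩ huv
      obtain ⟨h1, h2⟩ := Prod.mk.inj huv
      have h1' : u = 0 := h1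
      subst h1'
      obtain ⟨α, h0, h3⟩ := hpd x
      have h4 := h3 ξ v
      have h5 : ((B (x, ξ)).comp (ContinuousLinearMap.inr ℝ (Ed d) (Ed d))) v = 0 := h2
      rw [h5, inner_zero_left] at h4
      have : v = 0 := by
        by_contra hne
        have := mul_pos h0 (pow_pos (norm_pos_iff.2 hne) 2)
        linarith
      rw [this]; rfl
    refine ⟨(LinearEquiv.ofInjectiveEndo _ hinj).toContinuousLinearEquiv, ?_⟩
    convert hd using 1
    ext p <;> rfl
  choose e he using hE
  have hopen : IsOpenMap Φ := isOpenMap_of_hasStrictFDerivAt_equiv (f' := e) fun p =>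
    hΦs.contDiffAt.hasStrictFDerivAt' (he p) (by simp)
  let H : (Ed d × Ed d) ≃ₜ (Ed d × Ed d) :=
    (Equiv.ofBijective Φ hΦb).toHomeomorphOfContinuousOpen hΦs.continuous hopen
  exact ⟨H.toEquiv, fun p => rfl, hΦs, H.contDiff_symm he hΦs, hbij⟩
end
end

section
/- Let h ∈ C^∞(ℝ^d × ℝ^d, ℝ) be hyperconvex and even in each fibre, with h(·,0) bounded from above, let ξ_h(x,·) := (∇_ξ h(x,·))^{-1}, fix E ∈ ℝ, and set M̃ := {x ∈ ℝ^d : h(x,0) < E}. Then there exists a unique function λ : M̃ × (ℝ^d \ {0}) → (0,∞) such that h(x, ξ_h(x, λ(x,v) v)) = E for all x ∈ M̃ and v ≠ 0. Moreover λ is C^∞ on M̃ × (ℝ^d \ {0}) and satisfies λ(x, cv) = c^{−1} λ(x,v) for every c > 0. -/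
open scoped RealInnerProductSpace Classical
noncomputable section

open scoped Topology ContDiff

lemma aux_ift {X Y Z : Type*} [NormedAddCommGroup X] [NormedSpace ℝ X] [CompleteSpace X]
    [NormedAddCommGroup Y] [NormedSpace ℝ Y] [FiniteDimensional ℝ Y]
    [NormedAddCommGroup Z] [NormedSpace ℝ Z] [FiniteDimensional ℝ Z]
    (hdim : Module.finrank ℝ Y = Module.finrank ℝ Z)
    (f : X × Y → Z) (u : X × Y) (hf : ContDiffAt ℝ (⊤ : ℕ∞) f u)
    (hinj : ∀ w : Y, fderiv ℝ f u (0, w) = 0 → w = 0)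
    (φ : X → Y)
    (hφ : ∀ᶠ p in 𝓝 u, f p = f u → p.2 = φ p.1) :
    ContDiffAt ℝ (⊤ : ℕ∞) φ u.1 := by
  have : CompleteSpace Y := FiniteDimensional.complete ℝ Y
  have : CompleteSpace Z := FiniteDimensional.complete ℝ Z
  have hinj' : Function.Injective ((fderiv ℝ f u ∘L .inr ℝ X Y : Y →L[ℝ] Z) : Y →ₗ[ℝ] Z) := by
    rw [← LinearMap.ker_eq_bot, LinearMap.ker_eq_bot']
    intro w hw
    exact hinj w (by simpa using hw)
  have hinv : (fderiv ℝ f u ∘L .inr ℝ X Y).IsInvertible := by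
    refine ⟨(LinearEquiv.ofInjectiveOfFinrankEq _ hinj' hdim).toContinuousLinearEquiv, ?_⟩
    ext w
    rfl
  have hn : ((⊤ : ℕ∞) : WithTop ℕ∞) ≠ 0 := by simp
  have h1 := hf.contDiffAt_implicitFunction hn hinv
  have h2 := hf.eventually_apply_implicitFunction hn hinv
  have h3 := hf.implicitFunction_apply_self hn hinv
  refine h1.congr_of_eventuallyEq ?_
  have hc : Filter.Tendsto (fun x => (x, hf.implicitFunction hn hinv x)) (𝓝 u.1) (𝓝 u) := by
    have := (continuousAt_id.prodMk h1.continuousAt : ContinuousAt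
      (fun x => (x, hf.implicitFunction hn hinv x)) u.1)
    have h4 := this.tendsto
    rw [h3] at h4
    exact h4
  filter_upwards [h2, hc.eventually hφ] with x hx1 hx2
  exact (hx2 hx1).symm

section
variable {d : ℕ} {h : Ed d → Ed d → ℝ}

lemma aux_fib (hsmooth : ContDiff ℝ (⊤ : ℕ∞) (fun p : Ed d × Ed d => h p.1 p.2)) (x : Ed d) :
    ContDiff ℝ (⊤ : ℕ∞) (h x) :=
  hsmooth.comp (contDiff_prodMk_right x)

lemma aux_grad (hsmooth : ContDiff ℝ (⊤ : ℕ∞) (fun p : Ed d × Ed d => h p.1 p.2)) (x ξ v : Ed d) :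
    gradient (h x) ξ = v ↔ fderiv ℝ (h x) ξ = innerSL ℝ v := by
  have hd : DifferentiableAt ℝ (h x) ξ := (aux_fib hsmooth x).differentiable (by simp) ξ
  constructor
  · intro hv
    have := hd.hasGradientAt
    rw [hv, hasGradientAt_iff_hasFDerivAt] at this
    rw [this.fderiv]
    rfl
  · intro hv
    have := hd.hasFDerivAt
    rw [hv] at this
    exact HasGradientAt.gradient (hasGradientAt_iff_hasFDerivAt.2 this)

lemma aux_D (hsmooth : ContDiff ℝ (⊤ : ℕ∞) (fun p : Ed d × Ed d => h p.1 p.2)) :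
    ContDiff ℝ (⊤ : ℕ∞) (fun p : Ed d × Ed d => fderiv ℝ (h p.1) p.2) := by
  have h1 : ContDiff ℝ (⊤ : ℕ∞) (fun p : Ed d × Ed d =>
      (fderiv ℝ (fun p : Ed d × Ed d => h p.1 p.2) p) ∘L .inr ℝ (Ed d) (Ed d)) :=
    (hsmooth.fderiv_right (m := (⊤ : ℕ∞)) (by simp)).clm_comp contDiff_const
  convert h1 using 2 with p
  have h2 : HasFDerivAt (fun p : Ed d × Ed d => h p.1 p.2)
    (fderiv ℝ (fun p : Ed d × Ed d => h p.1 p.2) p) (p.1, p.2) :=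
    (hsmooth.differentiable (by simp) p).hasFDerivAt
  exact (h2.comp p.2 (hasFDerivAt_prodMk_right p.1 p.2)).fderiv

/-- second derivative along the fibre is positive definite -/
lemma aux_pos (hconv : ∀ x : Ed d, ∃ α : ℝ, 0 < α ∧ ∀ ξ v : Ed d,
      α * ‖v‖ ^ 2 ≤ iteratedFDeriv ℝ 2 (h x) ξ ![v, v]) (x ξ w : Ed d) (hw : w ≠ 0) :
    0 < fderiv ℝ (fderiv ℝ (h x)) ξ w w := by
  obtain ⟨α, hα, H⟩ := hconv x
  have := H ξ w
  rw [iteratedFDeriv_two_apply] at this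
  have h2 : 0 < ‖w‖ := norm_pos_iff.2 hw
  have : 0 < α * ‖w‖^2 := by positivity
  simp at *
  linarith

lemma aux_ξ (hsmooth : ContDiff ℝ (⊤ : ℕ∞) (fun p : Ed d × Ed d => h p.1 p.2))
    (hconv : ∀ x : Ed d, ∃ α : ℝ, 0 < α ∧ ∀ ξ v : Ed d,
      α * ‖v‖ ^ 2 ≤ iteratedFDeriv ℝ 2 (h x) ξ ![v, v])
    (ξh : Ed d → Ed d → Ed d)
    (hξh1 : ∀ x v : Ed d, gradient (h x) (ξh x v) = v)
    (hξh2 : ∀ x ξ : Ed d, ξh x (gradient (h x) ξ) = ξ) :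
    ContDiff ℝ (⊤ : ℕ∞) (fun p : Ed d × Ed d => ξh p.1 p.2) := by
  rw [contDiff_iff_contDiffAt]
  rintro ⟨x, v⟩
  have hD := aux_D hsmooth
  let f : (Ed d × Ed d) × Ed d → (Ed d →L[ℝ] ℝ) := fun p =>
    fderiv ℝ (h p.1.1) p.2 - innerSL ℝ p.1.2
  have hf : ContDiff ℝ (⊤ : ℕ∞) f := by
    refine (hD.comp ((contDiff_fst.comp contDiff_fst).prodMk contDiff_snd)).sub ?_
    exact (innerSL ℝ : Ed d →L[ℝ] _).contDiff.comp (contDiff_snd.comp contDiff_fst)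
  have hfz : ∀ p, f p = 0 ↔ gradient (h p.1.1) p.2 = p.1.2 := by
    intro p
    rw [aux_grad hsmooth]
    exact sub_eq_zero
  refine aux_ift (u := ((x, v), ξh x v)) ?_ f hf.contDiffAt ?_ _ ?_
  · calc _ = Module.finrank ℝ (Module.Dual ℝ (Ed d)) := (Subspace.dual_finrank_eq).symm
      _ = _ := (LinearMap.toContinuousLinearMap (𝕜 := ℝ) (E := Ed d) (F' := ℝ)).finrank_eq
  · intro w hw
    by_contra hne
    have h1 := (hf.differentiable (by simp) ((x, v), ξh x v)).hasFDerivAt.comp (ξh x v)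
      (hasFDerivAt_prodMk_right (x, v) (ξh x v))
    have h2 : HasFDerivAt (f ∘ fun ξ => ((x, v), ξ)) (fderiv ℝ (fderiv ℝ (h x)) (ξh x v)) (ξh x v) := by
      have : DifferentiableAt ℝ (fderiv ℝ (h x)) (ξh x v) :=
        ((aux_fib hsmooth x).fderiv_right (m := (⊤ : ℕ∞)) (by simp)).differentiable (by simp) _
      exact this.hasFDerivAt.sub_const (innerSL ℝ v)
    have h3 := h1.unique h2
    have h4 := aux_pos hconv x (ξh x v) w hne
    rw [← h3] at h4
    simp [hw] at h4
  · refine Filter.Eventually.of_forall ?_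
    intro p hp
    have h0 : f ((x, v), ξh x v) = 0 := (hfz _).2 (hξh1 x v)
    rw [h0, hfz] at hp
    rw [← hp, hξh2]

lemma aux_deriv (hsmooth : ContDiff ℝ (⊤ : ℕ∞) (fun p : Ed d × Ed d => h p.1 p.2))
    (hconv : ∀ x : Ed d, ∃ α : ℝ, 0 < α ∧ ∀ ξ v : Ed d,
      α * ‖v‖ ^ 2 ≤ iteratedFDeriv ℝ 2 (h x) ξ ![v, v])
    (ξh : Ed d → Ed d → Ed d)
    (hξh1 : ∀ x v : Ed d, gradient (h x) (ξh x v) = v)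
    (hξh2 : ∀ x ξ : Ed d, ξh x (gradient (h x) ξ) = ξ) (x v : Ed d) (hv : v ≠ 0) (t : ℝ)
    (ht : 0 < t) :
    ∃ g', 0 < g' ∧ HasDerivAt (fun t : ℝ => h x (ξh x (t • v))) g' t := by
  have hξ := aux_ξ hsmooth hconv ξh hξh1 hξh2
  have hz : ContDiff ℝ (⊤ : ℕ∞) (fun t : ℝ => ξh x (t • v)) :=
    hξ.comp (contDiff_const.prodMk (contDiff_id.smul contDiff_const))
  have h1 := (hz.differentiable (by simp) t).hasDerivAt
  set w := deriv (fun t : ℝ => ξh x (t • v)) t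
  have hD : ∀ t : ℝ, fderiv ℝ (h x) (ξh x (t • v)) = innerSL ℝ (t • v) := fun t =>
    (aux_grad hsmooth _ _ _).1 (hξh1 x (t • v))
  have h2 : HasDerivAt (fun t : ℝ => h x (ξh x (t • v))) (fderiv ℝ (h x) (ξh x (t • v)) w) t :=
    ((aux_fib hsmooth x).differentiable (by simp) _).hasFDerivAt.comp_hasDerivAt t h1
  have h3 : HasDerivAt (fun t : ℝ => fderiv ℝ (h x) (ξh x (t • v)))
      (fderiv ℝ (fderiv ℝ (h x)) (ξh x (t • v)) w) t :=
    (((aux_fib hsmooth x).fderiv_right (m := (⊤ : ℕ∞)) (by simp)).differentiable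
      (by simp) _).hasFDerivAt.comp_hasDerivAt t h1
  have h4 : HasDerivAt (fun t : ℝ => fderiv ℝ (h x) (ξh x (t • v))) (innerSL ℝ v) t := by
    have e : (fun t : ℝ => fderiv ℝ (h x) (ξh x (t • v))) = fun t : ℝ => t • innerSL ℝ v := by
      funext t
      rw [hD, map_smul]
    rw [e]
    simpa using (hasDerivAt_id t).smul_const (innerSL ℝ v)
  have h5 := h3.unique h4
  have hw : w ≠ 0 := by
    intro h0
    rw [h0, map_zero] at h5
    have := congrArg (fun L : Ed d →L[ℝ] ℝ => L v) h5
    simp at this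
    first
      | exact hv this.symm
      | exact hv (norm_eq_zero.1 (pow_eq_zero_iff (two_ne_zero)|>.1 this.symm))
  have h6 := aux_pos hconv x (ξh x (t • v)) w hw
  rw [h5] at h6
  refine ⟨_, ?_, h2⟩
  rw [hD, map_smul]
  exact mul_pos ht h6

lemma aux_zero (hsmooth : ContDiff ℝ (⊤ : ℕ∞) (fun p : Ed d × Ed d => h p.1 p.2))
    (heven : ∀ x ξ : Ed d, h x ξ = h x (-ξ)) (x : Ed d) : fderiv ℝ (h x) 0 = 0 := by
  have h1 : HasFDerivAt (h x) (fderiv ℝ (h x) 0) 0 :=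
    ((aux_fib hsmooth x).differentiable (by simp) 0).hasFDerivAt
  have h1' : HasFDerivAt (h x) (fderiv ℝ (h x) 0) (-0) := by simpa using h1
  have h2 := HasFDerivAt.comp (0 : Ed d) h1' (hasFDerivAt_id (0 : Ed d)).neg
  have e : (h x ∘ fun y => -y) = h x := by
    funext y; exact (heven x y).symm
  have h3 : HasFDerivAt (h x) (-(fderiv ℝ (h x) 0)) 0 := by
    have e1 : (h x ∘ Neg.neg) = h x := e
    have e2 : fderiv ℝ (h x) 0 ∘L (-ContinuousLinearMap.id ℝ (Ed d)) = -fderiv ℝ (h x) 0 := by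
      ext w
      simp
    rw [← e2]
    rw [e1] at h2
    exact h2
  have h4 := h1.unique h3
  refine ContinuousLinearMap.ext fun w => ?_
  have h5 := congrArg (fun L : Ed d →L[ℝ] ℝ => L w) h4
  have h6 : fderiv ℝ (h x) 0 w = -(fderiv ℝ (h x) 0 w) := h5
  change fderiv ℝ (h x) 0 w = 0
  linarith

lemma aux_grow (hsmooth : ContDiff ℝ (⊤ : ℕ∞) (fun p : Ed d × Ed d => h p.1 p.2))
    (heven : ∀ x ξ : Ed d, h x ξ = h x (-ξ)) (x : Ed d) (α : ℝ)
    (H : ∀ ξ v : Ed d, α * ‖v‖ ^ 2 ≤ iteratedFDeriv ℝ 2 (h x) ξ ![v, v]) (ξ : Ed d) :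
    h x 0 + α / 2 * ‖ξ‖ ^ 2 ≤ h x ξ := by
  have hl : ∀ s : ℝ, HasDerivAt (fun s : ℝ => s • ξ) ξ s := fun s => by
    simpa using (hasDerivAt_id s).smul_const ξ
  have h1 : ∀ s : ℝ, HasDerivAt (fun s : ℝ => h x (s • ξ)) (fderiv ℝ (h x) (s • ξ) ξ) s := fun s =>
    ((aux_fib hsmooth x).differentiable (by simp) _).hasFDerivAt.comp_hasDerivAt s (hl s)
  have h2 : ∀ s : ℝ, HasDerivAt (fun s : ℝ => fderiv ℝ (h x) (s • ξ) ξ)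
      (fderiv ℝ (fderiv ℝ (h x)) (s • ξ) ξ ξ) s := fun s => by
    have h3 : HasDerivAt (fun s : ℝ => fderiv ℝ (h x) (s • ξ))
      (fderiv ℝ (fderiv ℝ (h x)) (s • ξ) ξ) s :=
      (((aux_fib hsmooth x).fderiv_right (m := (⊤ : ℕ∞)) (by simp)).differentiable
      (by simp) _).hasFDerivAt.comp_hasDerivAt s (hl s)
    simpa using h3.clm_apply (hasDerivAt_const s ξ)
  have hmono : Monotone (fun s : ℝ => fderiv ℝ (h x) (s • ξ) ξ - s * (α * ‖ξ‖ ^ 2)) := by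
    have hd : ∀ s : ℝ, HasDerivAt (fun s : ℝ => fderiv ℝ (h x) (s • ξ) ξ - s * (α * ‖ξ‖ ^ 2))
        (fderiv ℝ (fderiv ℝ (h x)) (s • ξ) ξ ξ - 1 * (α * ‖ξ‖ ^ 2)) s := fun s =>
      (h2 s).sub ((hasDerivAt_id s).mul_const _)
    refine monotone_of_deriv_nonneg (fun s => (hd s).differentiableAt) fun s => ?_
    rw [(hd s).deriv]
    have := H (s • ξ) ξ
    rw [iteratedFDeriv_two_apply] at this
    simp at this
    linarith
  have hmono2 : MonotoneOn (fun s : ℝ => h x (s • ξ) - s ^ 2 * (α / 2 * ‖ξ‖ ^ 2)) (Set.Ici 0) := by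
    have hd : ∀ s : ℝ, HasDerivAt (fun s : ℝ => h x (s • ξ) - s ^ 2 * (α / 2 * ‖ξ‖ ^ 2))
        (fderiv ℝ (h x) (s • ξ) ξ - (2 * s) * (α / 2 * ‖ξ‖ ^ 2)) s := fun s =>
      (h1 s).sub (by simpa using ((hasDerivAt_pow 2 s).mul_const (α / 2 * ‖ξ‖ ^ 2)))
    refine monotoneOn_of_deriv_nonneg (convex_Ici 0)
      (fun s _ => (hd s).continuousAt.continuousWithinAt)
      (fun s _ => (hd s).differentiableAt.differentiableWithinAt) fun s hs => ?_
    rw [interior_Ici, Set.mem_Ioi] at hs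
    rw [(hd s).deriv]
    have := hmono hs.le
    simp [aux_zero hsmooth heven x] at this
    linarith
  have := hmono2 (show (0 : ℝ) ∈ Set.Ici 0 by simp) (show (1 : ℝ) ∈ Set.Ici 0 by simp) zero_le_one
  simp at this
  linarith

lemma aux_exists (hsmooth : ContDiff ℝ (⊤ : ℕ∞) (fun p : Ed d × Ed d => h p.1 p.2))
    (hconv : ∀ x : Ed d, ∃ α : ℝ, 0 < α ∧ ∀ ξ v : Ed d,
      α * ‖v‖ ^ 2 ≤ iteratedFDeriv ℝ 2 (h x) ξ ![v, v])
    (heven : ∀ x ξ : Ed d, h x ξ = h x (-ξ))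
    (ξh : Ed d → Ed d → Ed d)
    (hξh1 : ∀ x v : Ed d, gradient (h x) (ξh x v) = v)
    (hξh2 : ∀ x ξ : Ed d, ξh x (gradient (h x) ξ) = ξ) (E : ℝ) (x v : Ed d) (hx : h x 0 < E)
    (hv : v ≠ 0) :
    ∃ t : ℝ, 0 < t ∧ h x (ξh x (t • v)) = E := by
  have hξ := aux_ξ hsmooth hconv ξh hξh1 hξh2
  have hz : Continuous (fun t : ℝ => h x (ξh x (t • v))) :=
    (aux_fib hsmooth x).continuous.comp
      (hξ.comp (contDiff_const.prodMk (contDiff_id.smul contDiff_const))).continuous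
  have h0 : ξh x ((0 : ℝ) • v) = 0 := by
    have : gradient (h x) 0 = 0 := by
      rw [aux_grad hsmooth, aux_zero hsmooth heven, map_zero]
    have h3 := hξh2 x 0
    rw [this] at h3
    rw [zero_smul, h3]
  obtain ⟨α, hα, H⟩ := hconv x
  have hbig : ∃ T : ℝ, 0 < T ∧ E ≤ h x (ξh x (T • v)) := by
    by_contra! hcon
    obtain ⟨R, hR⟩ : ∃ R : ℝ, ∀ ξ : Ed d, h x ξ < E → ‖ξ‖ ≤ R := by
      refine ⟨Real.sqrt ((E - h x 0) / (α / 2)), fun ξ hξ => Real.le_sqrt_of_sq_le ?_⟩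
      rw [le_div_iff₀ (by positivity)]
      have := aux_grow hsmooth heven x α H ξ
      linarith
    obtain ⟨C, hC⟩ := (isCompact_closedBall (0 : Ed d) R).exists_bound_of_continuousOn
      (f := fderiv ℝ (h x))
      (((aux_fib hsmooth x).fderiv_right (m := (⊤ : ℕ∞)) (by simp)).continuous.continuousOn)
    have hvp : 0 < ‖v‖ := norm_pos_iff.2 hv
    have hT : 0 < (|C| + 1) / ‖v‖ := by positivity
    have h5 := hC _ (by simpa using hR _ (hcon _ hT))
    rw [(aux_grad hsmooth _ _ _).1 (hξh1 x _), innerSL_apply_norm, norm_smul, Real.norm_of_nonneg hT.le,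
      div_mul_cancel₀ _ hvp.ne'] at h5
    linarith [le_abs_self C]
  obtain ⟨T, hT, hTE⟩ := hbig
  obtain ⟨t, ht, hte⟩ := intermediate_value_Icc hT.le hz.continuousOn
    (show E ∈ Set.Icc _ _ from ⟨by simp only [h0]; exact hx.le, hTE⟩)
  refine ⟨t, lt_of_le_of_ne ht.1 ?_, hte⟩
  rintro rfl
  simp only [h0] at hte
  linarith

end


/-- Theorem 2.10 (i): for a smooth Hamilton function `h`, hyperconvex and even in each
fibre, with `h(·,0)` bounded above, and for every energy `E`, there is a unique positive
function `λ(x,v)` on `M̃ × (ℝ^d \ {0})`, `M̃ = {h(x,0) < E}`, with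
`h(x, ξ_h(x, λ(x,v) v)) = E`; it is smooth and satisfies `λ(x,cv) = c⁻¹ λ(x,v)` for `c > 0`. -/
theorem stmt6 (d : ℕ) (h : Ed d → Ed d → ℝ)
    (hsmooth : ContDiff ℝ (⊤ : ℕ∞) (fun p : Ed d × Ed d => h p.1 p.2))
    (hconv : ∀ x : Ed d, ∃ α : ℝ, 0 < α ∧ ∀ ξ v : Ed d,
      α * ‖v‖ ^ 2 ≤ iteratedFDeriv ℝ 2 (h x) ξ ![v, v])
    (heven : ∀ x ξ : Ed d, h x ξ = h x (-ξ))
    (hbdd : ∃ K : ℝ, ∀ x : Ed d, h x 0 ≤ K)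
    (ξh : Ed d → Ed d → Ed d)
    (hξh1 : ∀ x v : Ed d, gradient (h x) (ξh x v) = v)
    (hξh2 : ∀ x ξ : Ed d, ξh x (gradient (h x) ξ) = ξ)
    (E : ℝ) :
    ∃ lam : Ed d → Ed d → ℝ,
      (∀ x : Ed d, h x 0 < E → ∀ v : Ed d, v ≠ 0 →
        0 < lam x v ∧ h x (ξh x (lam x v • v)) = E ∧
        (∀ t : ℝ, 0 < t → h x (ξh x (t • v)) = E → t = lam x v)) ∧
      ContDiffOn ℝ (⊤ : ℕ∞) (fun p : Ed d × Ed d => lam p.1 p.2)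
        ({x : Ed d | h x 0 < E} ×ˢ {v : Ed d | v ≠ 0}) ∧
      (∀ x : Ed d, h x 0 < E → ∀ v : Ed d, v ≠ 0 → ∀ c : ℝ, 0 < c →
        lam x (c • v) = c⁻¹ * lam x v) := by
  have hξ := aux_ξ hsmooth hconv ξh hξh1 hξh2
  have hex := aux_exists hsmooth hconv heven ξh hξh1 hξh2 E
  have hder := aux_deriv hsmooth hconv ξh hξh1 hξh2
  have hmono : ∀ x v : Ed d, v ≠ 0 →
      StrictMonoOn (fun t : ℝ => h x (ξh x (t • v))) (Set.Ioi 0) := by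
    intro x v hv
    refine strictMonoOn_of_deriv_pos (convex_Ioi 0) ?_ ?_
    · intro t ht
      obtain ⟨g', -, hg⟩ := hder x v hv t ht
      exact hg.continuousAt.continuousWithinAt
    · intro t ht
      rw [interior_Ioi] at ht
      obtain ⟨g', hg0, hg⟩ := hder x v hv t ht
      rw [hg.deriv]
      exact hg0
  let lam : Ed d → Ed d → ℝ := fun x v =>
    if hh : h x 0 < E ∧ v ≠ 0 then Classical.choose (hex x v hh.1 hh.2) else 0
  have hlam : ∀ x : Ed d, h x 0 < E → ∀ v : Ed d, v ≠ 0 →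
        0 < lam x v ∧ h x (ξh x (lam x v • v)) = E := by
    intro x hx v hv
    have e : lam x v = Classical.choose (hex x v hx hv) := dif_pos ⟨hx, hv⟩
    rw [e]
    exact Classical.choose_spec (hex x v hx hv)
  have huniq : ∀ x : Ed d, h x 0 < E → ∀ v : Ed d, v ≠ 0 →
      ∀ t : ℝ, 0 < t → h x (ξh x (t • v)) = E → t = lam x v := by
    intro x hx v hv t ht hte
    obtain ⟨h1, h2⟩ := hlam x hx v hv
    exact (hmono x v hv).injOn ht h1 (hte.trans h2.symm)
  refine ⟨lam, fun x hx v hv => ⟨(hlam x hx v hv).1, (hlam x hx v hv).2, huniq x hx v hv⟩, ?_, ?_⟩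
  · rintro ⟨x, v⟩ ⟨hx, hv⟩
    have hx' : h x 0 < E := hx
    have hv' : v ≠ 0 := hv
    refine ContDiffAt.contDiffWithinAt ?_
    obtain ⟨h1, h2⟩ := hlam x hx v hv
    let f : (Ed d × Ed d) × ℝ → ℝ := fun p => h p.1.1 (ξh p.1.1 (p.2 • p.1.2))
    have hf : ContDiff ℝ (⊤ : ℕ∞) f := by
      have a1 : ContDiff ℝ (⊤ : ℕ∞) (fun p : (Ed d × Ed d) × ℝ => p.1.1) :=
        contDiff_fst.comp contDiff_fst
      have a2 : ContDiff ℝ (⊤ : ℕ∞) (fun p : (Ed d × Ed d) × ℝ => p.2 • p.1.2) :=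
        contDiff_snd.smul (contDiff_snd.comp contDiff_fst)
      exact hsmooth.comp (a1.prodMk (hξ.comp (a1.prodMk a2)))
    refine aux_ift (u := ((x, v), lam x v)) rfl f hf.contDiffAt ?_ _ ?_
    · intro w hw
      obtain ⟨g', hg0, hg⟩ := hder x v hv _ h1
      have h3 := (hf.differentiable (by simp) ((x, v), lam x v)).hasFDerivAt.comp (lam x v)
        (hasFDerivAt_prodMk_right (x, v) (lam x v))
      have h4 := h3.unique (show HasFDerivAt (f ∘ fun t => ((x, v), t)) _ _ from hg.hasFDerivAt)
      have h5 := congrArg (fun L : ℝ →L[ℝ] ℝ => L w) h4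
      simp [hw] at h5
      exact h5.resolve_right hg0.ne'
    · have o1 : IsOpen {p : (Ed d × Ed d) × ℝ | h p.1.1 0 < E ∧ p.1.2 ≠ 0 ∧ 0 < p.2} := by
        have c1 : Continuous (fun p : (Ed d × Ed d) × ℝ => h p.1.1 0) :=
          hsmooth.continuous.comp (g := fun p : Ed d × Ed d => h p.1 p.2)
            (f := fun p : (Ed d × Ed d) × ℝ => (p.1.1, 0)) (by fun_prop)
        refine (isOpen_lt c1 continuous_const).inter (IsOpen.inter ?_ ?_)
        · exact isOpen_ne_fun (by fun_prop) continuous_const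
        · exact isOpen_lt continuous_const continuous_snd
      filter_upwards [o1.mem_nhds (show ((x, v), lam x v) ∈ _ from ⟨hx', hv', h1⟩)] with p hp hpe
      exact huniq _ hp.1 _ hp.2.1 _ hp.2.2 (hpe.trans h2)
  · intro x hx v hv c hc
    obtain ⟨h1, h2⟩ := hlam x hx v hv
    refine (huniq x hx (c • v) (smul_ne_zero hc.ne' hv) _ (by positivity) ?_).symm
    rw [smul_smul, mul_right_comm, inv_mul_cancel₀ hc.ne', one_mul]
    exact h2
end
end

section
/- Let h ∈ C^∞(ℝ^d × ℝ^d, ℝ) be hyperconvex and even in each fibre with h(·,0) bounded from above, fix E ∈ ℝ, set M̃ := {x : h(x,0) < E}, let ξ_h(x,·) := (∇_ξ h(x,·))^{-1}, and let λ(x,v) be the unique positive number with h(x, ξ_h(x, λ(x,v)v)) = E (x ∈ M̃, v ≠ 0). Define ℓ(x,v) := ξ_h(x, λ(x,v) v) · v for v ≠ 0 and ℓ(x,0) := 0. Then ℓ(x, cv) = |c| ℓ(x,v) for every c ∈ ℝ, x ∈ M̃, v ∈ ℝ^d (absolute homogeneity of order one), and ℓ(x,v) > 0 for every v ≠ 0.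 -/
open scoped RealInnerProductSpace Classical
noncomputable section

theorem aux_mono {V : Type*} [NormedAddCommGroup V] [NormedSpace ℝ V]
    (f : V → ℝ) (hf : ContDiff ℝ 2 f)
    (hpos : ∀ ξ v : V, v ≠ 0 → 0 < iteratedFDeriv ℝ 2 f ξ ![v, v])
    (a w : V) (hw : w ≠ 0) :
    StrictMono (fun t : ℝ => fderiv ℝ f (a + t • w) w) := by
  have hd : Differentiable ℝ (fderiv ℝ f) :=
    (hf.fderiv_right (m := 1) (le_of_eq one_add_one_eq_two)).differentiable one_ne_zero
  apply strictMono_of_deriv_pos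
  intro t
  have h1 : HasDerivAt (fun t : ℝ => a + t • w) w t := by
    simpa using ((hasDerivAt_id t).smul_const w).const_add a
  have h2 : HasDerivAt (fun t : ℝ => fderiv ℝ f (a + t • w))
      (fderiv ℝ (fderiv ℝ f) (a + t • w) w) t :=
    (hd (a + t • w)).hasFDerivAt.comp_hasDerivAt t h1
  have h3 : 0 < fderiv ℝ (fderiv ℝ f) (a + t • w) w w := by
    have h3 := hpos (a + t • w) w hw
    rw [iteratedFDeriv_two_apply] at h3
    exact h3
  have h4 : HasDerivAt (fun t : ℝ => fderiv ℝ f (a + t • w) w)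
      (fderiv ℝ (fderiv ℝ f) (a + t • w) w w) t :=
    (ContinuousLinearMap.apply ℝ ℝ w).hasFDerivAt.comp_hasDerivAt t h2
  rw [h4.deriv]
  exact h3

theorem aux_grad_s7 (d : ℕ) (f : Ed d → ℝ) (a w : Ed d) :
    fderiv ℝ f a w = ⟪gradient f a, w⟫ := by
  rw [gradient, InnerProductSpace.toDual_symm_apply]

theorem aux_ineq (d : ℕ) (f : Ed d → ℝ) (hf : ContDiff ℝ 2 f)
    (hpos : ∀ ξ v : Ed d, v ≠ 0 → 0 < iteratedFDeriv ℝ 2 f ξ ![v, v])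
    (a b : Ed d) (hab : a ≠ b) :
    ⟪gradient f a, b - a⟫ < f b - f a ∧ ⟪gradient f a, b - a⟫ < ⟪gradient f b, b - a⟫ := by
  have hw : b - a ≠ 0 := sub_ne_zero.2 hab.symm
  have hm := aux_mono f hf hpos a (b - a) hw
  constructor
  · have hd : ∀ t : ℝ, HasDerivAt (fun t : ℝ => f (a + t • (b - a)))
        (fderiv ℝ f (a + t • (b - a)) (b - a)) t := by
      intro t
      have h1 : HasDerivAt (fun t : ℝ => a + t • (b - a)) (b - a) t := by
        simpa using ((hasDerivAt_id t).smul_const (b - a)).const_add a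
      exact ((hf.differentiable (by norm_num)) _).hasFDerivAt.comp_hasDerivAt t h1
    obtain ⟨c, hc, he⟩ := exists_hasDerivAt_eq_slope (fun t : ℝ => f (a + t • (b - a))) _
      (zero_lt_one) (fun t _ => (hd t).continuousAt.continuousWithinAt) (fun t _ => hd t)
    have h0 := hm hc.1
    simp only [] at h0
    rw [he] at h0
    simp only [zero_smul, one_smul, add_zero, add_sub_cancel, sub_zero, div_one] at h0
    rwa [aux_grad_s7] at h0
  · have h0 := hm (zero_lt_one)
    simp only [zero_smul, one_smul, add_zero, add_sub_cancel] at h0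
    rwa [aux_grad_s7, aux_grad_s7] at h0

theorem aux_odd (d : ℕ) (f : Ed d → ℝ) (hf : Differentiable ℝ f)
    (heven : ∀ ξ, f ξ = f (-ξ)) (a : Ed d) : gradient f (-a) = - gradient f a := by
  refine ext_inner_right ℝ fun w => ?_
  rw [inner_neg_left, ← aux_grad_s7, ← aux_grad_s7]
  have h1 : HasFDerivAt (fun ξ => f (-ξ)) ((fderiv ℝ f (-a)).comp (-(ContinuousLinearMap.id ℝ (Ed d)))) a :=
    (hf (-a)).hasFDerivAt.comp a (hasFDerivAt_id a).neg
  have h2 : (fun ξ => f (-ξ)) = f := by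
    funext ξ; exact (heven ξ).symm
  rw [h2] at h1
  rw [h1.fderiv]
  simp

/-- Theorem 2.10 (ii), homogeneity and positivity: the function
`ℓ(x,v) = ξ_h(x, λ(x,v)v)·v` (with `ℓ(x,0) = 0`) associated to a hyperconvex, even
Hamilton function `h` at energy `E` is absolutely homogeneous of order one in `v`
and is positive for `v ≠ 0`, for every `x` in `M̃ = {h(x,0) < E}`. -/
theorem stmt7 (d : ℕ) (h : Ed d → Ed d → ℝ)
    (hsmooth : ContDiff ℝ (⊤ : ℕ∞) (fun p : Ed d × Ed d => h p.1 p.2))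
    (hconv : ∀ x : Ed d, ∃ α : ℝ, 0 < α ∧ ∀ ξ v : Ed d,
      α * ‖v‖ ^ 2 ≤ iteratedFDeriv ℝ 2 (h x) ξ ![v, v])
    (heven : ∀ x ξ : Ed d, h x ξ = h x (-ξ))
    (hbdd : ∃ K : ℝ, ∀ x : Ed d, h x 0 ≤ K)
    (ξh : Ed d → Ed d → Ed d)
    (hξh1 : ∀ x v : Ed d, gradient (h x) (ξh x v) = v)
    (hξh2 : ∀ x ξ : Ed d, ξh x (gradient (h x) ξ) = ξ)
    (E : ℝ)
    (lam : Ed d → Ed d → ℝ)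
    (hlam : ∀ x : Ed d, h x 0 < E → ∀ v : Ed d, v ≠ 0 →
      0 < lam x v ∧ h x (ξh x (lam x v • v)) = E)
    (ℓ : Ed d → Ed d → ℝ)
    (hℓ : ∀ x v : Ed d, ℓ x v = if v = 0 then 0 else ⟪ξh x (lam x v • v), v⟫) :
    ∀ x : Ed d, h x 0 < E →
      (∀ (v : Ed d) (c : ℝ), ℓ x (c • v) = |c| * ℓ x v)
      ∧ (∀ v : Ed d, v ≠ 0 → 0 < ℓ x v) := by
  intro x hx
  have hf : ContDiff ℝ 2 (h x) := by
    have h1 : ContDiff ℝ (⊤ : ℕ∞) (h x) :=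
      hsmooth.comp (contDiff_const.prodMk contDiff_id)
    exact h1.of_le (WithTop.coe_le_coe.2 (le_top : (2 : ℕ∞) ≤ ⊤))
  have hpos : ∀ ξ v : Ed d, v ≠ 0 → 0 < iteratedFDeriv ℝ 2 (h x) ξ ![v, v] := by
    intro ξ v hv
    obtain ⟨α, hα, H⟩ := hconv x
    have : 0 < ‖v‖ := norm_pos_iff.2 hv
    exact lt_of_lt_of_le (by positivity) (H ξ v)
  have hodd := aux_odd d (h x) (hf.differentiable (by norm_num)) (heven x)
  have hineq := aux_ineq d (h x) hf hpos
  have hG0 : gradient (h x) 0 = 0 := by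
    have h1 := hodd 0
    rw [neg_zero] at h1
    have h2 : (2 : ℝ) • gradient (h x) 0 = 0 := by
      rw [two_smul]
      exact eq_neg_iff_add_eq_zero.1 h1
    exact (smul_eq_zero.1 h2).resolve_left two_ne_zero
  have hξodd : ∀ v, ξh x (-v) = - ξh x v := by
    intro v
    have := hξh2 x (-(ξh x v))
    rwa [hodd, hξh1] at this
  have hmono : ∀ v : Ed d, v ≠ 0 → ∀ s t : ℝ, 0 < s → s < t →
      h x (ξh x (s • v)) < h x (ξh x (t • v)) := by
    intro v hv s t hs hst
    have hne : ξh x (s • v) ≠ ξh x (t • v) := by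
      intro he
      have h1 := congrArg (gradient (h x)) he
      rw [hξh1, hξh1] at h1
      exact hst.ne (smul_left_injective ℝ hv h1)
    obtain ⟨h1, h2⟩ := hineq _ _ hne
    simp only [hξh1, real_inner_smul_left] at h1 h2
    have h3 : 0 < ⟪v, ξh x (t • v) - ξh x (s • v)⟫ := by
      by_contra hcon
      nlinarith
    nlinarith [mul_pos hs h3]
  have huniq : ∀ v : Ed d, v ≠ 0 → ∀ s t : ℝ, 0 < s → 0 < t →
      h x (ξh x (s • v)) = E → h x (ξh x (t • v)) = E → s = t := by
    intro v hv s t hs ht h1 h2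
    rcases lt_trichotomy s t with h3 | h3 | h3
    · have := hmono v hv s t hs h3
      linarith
    · exact h3
    · have := hmono v hv t s ht h3
      linarith
  refine ⟨?_, ?_⟩
  · intro v c
    by_cases hv : v = 0
    · simp [hℓ, hv]
    by_cases hc : c = 0
    · simp [hℓ, hc]
    have hcv : c • v ≠ 0 := smul_ne_zero hc hv
    obtain ⟨hl1, hl2⟩ := hlam x hx v hv
    obtain ⟨hm1, hm2⟩ := hlam x hx _ hcv
    rw [hℓ, hℓ, if_neg hv, if_neg hcv]
    rcases lt_or_gt_of_ne hc with hc | hc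
    · have e : lam x (c • v) • c • v = -((lam x (c • v) * (-c)) • v) := by
        rw [smul_smul, ← neg_smul]; congr 1; ring
      rw [e, hξodd, ← heven] at hm2
      have := huniq v hv _ _ (mul_pos hm1 (neg_pos.2 hc)) hl1 hm2 hl2
      rw [e, hξodd, this, abs_of_neg hc, inner_neg_left, real_inner_smul_right]
      ring
    · have e : lam x (c • v) • c • v = (lam x (c • v) * c) • v := by
        rw [smul_smul]
      rw [e] at hm2
      have := huniq v hv _ _ (mul_pos hm1 hc) hl1 hm2 hl2
      rw [e, this, abs_of_pos hc, real_inner_smul_right]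
  · intro v hv
    obtain ⟨hl1, hl2⟩ := hlam x hx v hv
    rw [hℓ, if_neg hv]
    have hne : (0 : Ed d) ≠ ξh x (lam x v • v) := by
      intro he
      have h1 := congrArg (gradient (h x)) he
      rw [hξh1, hG0] at h1
      exact smul_ne_zero hl1.ne' hv h1.symm
    have h2 := (hineq _ _ hne).2
    rw [hG0, hξh1, inner_zero_left, sub_zero, real_inner_smul_left] at h2
    rw [real_inner_comm]
    exact pos_of_mul_pos_right h2 hl1.le
end
end

section
/- Let h ∈ C^∞(ℝ^d × ℝ^d, ℝ) be hyperconvex and even in each fibre with h(·,0) bounded from above, fix E ∈ ℝ, M̃ := {x : h(x,0) < E}, ξ_h(x,·) := (∇_ξ h(x,·))^{-1}, λ(x,v) the unique positive number with h(x, ξ_h(x, λ(x,v)v)) = E, and ℓ(x,v) := ξ_h(x, λ(x,v)v)·v for v ≠ 0. Then for every x ∈ M̃ and v ∈ ℝ^d \ {0}, the bilinear form g_{(x,v)}(w,w′) := D²_v ((1/2) ℓ(x,·)²)|_v (w,w′) (the second derivative in the fibre variable of (1/2)ℓ² at v) is positive definite: g_{(x,v)}(w,w) > 0 for all w ≠ 0.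 -/
open scoped RealInnerProductSpace Classical
noncomputable section

section aux
variable {V : Type*} [NormedAddCommGroup V] [InnerProductSpace ℝ V]

theorem aux_convex {f : V → ℝ} {G : V → V} {H : V → V →L[ℝ] V}
    (hf : ∀ p, HasFDerivAt f (innerSL ℝ (G p)) p)
    (hG : ∀ p, HasFDerivAt G (H p) p)
    (hH : ∀ p u, u ≠ 0 → 0 < ⟪H p u, u⟫) (p q : V) (hpq : p ≠ q) :
    ⟪G p, q - p⟫ < f q - f p := by
  set u := q - p with hu
  have hu0 : u ≠ 0 := sub_ne_zero.2 hpq.symm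
  have hline : ∀ t : ℝ, HasDerivAt (fun t : ℝ => p + t • u) u t := by
    intro t
    simpa using ((hasDerivAt_id t).smul_const u).const_add p
  have h1 : ∀ t : ℝ, HasDerivAt (fun t : ℝ => f (p + t • u)) ⟪G (p + t • u), u⟫ t := by
    intro t
    have := (hf (p + t • u)).comp_hasDerivAt t (hline t)
    simpa [Function.comp_def] using this
  have h2 : ∀ t : ℝ, HasDerivAt (fun t : ℝ => ⟪G (p + t • u), u⟫)
      ⟪H (p + t • u) u, u⟫ t := by
    intro t
    have := ((hG (p + t • u)).comp_hasDerivAt t (hline t)).inner ℝ (hasDerivAt_const t u)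
    simpa [Function.comp_def] using this
  have hmono : StrictMono (fun t : ℝ => ⟪G (p + t • u), u⟫) := by
    apply strictMono_of_deriv_pos
    intro t
    rw [(h2 t).deriv]
    exact hH _ _ hu0
  obtain ⟨c, hc, hc'⟩ := exists_hasDerivAt_eq_slope (fun t : ℝ => f (p + t • u)) _
    (zero_lt_one) (fun t _ => (h1 t).continuousAt.continuousWithinAt) (fun t _ => h1 t)
  have := hmono hc.1
  simp only [zero_smul, add_zero, one_smul, sub_zero, div_one] at this hc'
  rw [hc'] at this
  simpa [hu] using this

theorem aux_diff [FiniteDimensional ℝ V] {f : V → ℝ} {G : V → V} {H : V → V →L[ℝ] V}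
    (hf : ∀ p, HasStrictFDerivAt f (innerSL ℝ (G p)) p)
    (hG : ∀ p, HasStrictFDerivAt G (H p) p)
    (hH : ∀ p u, u ≠ 0 → 0 < ⟪H p u, u⟫)
    {E : ℝ} {η : V → V} {s : V → ℝ}
    (hs : ∀ v, v ≠ 0 → 0 < s v) (hη : ∀ v, v ≠ 0 → f (η v) = E)
    (hη' : ∀ v, v ≠ 0 → s v • G (η v) = v) (v : V) (hv : v ≠ 0) :
    DifferentiableAt ℝ η v ∧ DifferentiableAt ℝ s v := by
  let Φ : V × ℝ → V × ℝ := fun z => (z.2 • G z.1, f z.1)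
  have hinj : ∀ p q : V, ∀ a b : ℝ, 0 < a → 0 < b → a • G p = b • G q → a • G p ≠ 0 →
      f p = f q → p = q ∧ a = b := by
    intro p q a b ha hb hab h0 hfe
    have hpq : p = q := by
      by_contra hpq
      have h1 := aux_convex (fun p => (hf p).hasFDerivAt) (fun p => (hG p).hasFDerivAt) hH p q hpq
      have h2 := aux_convex (fun p => (hf p).hasFDerivAt) (fun p => (hG p).hasFDerivAt) hH q p
        (Ne.symm hpq)
      rw [hfe, sub_self] at h1
      rw [hfe, sub_self] at h2
      have h3 : a * ⟪G p, q - p⟫ = - (b * ⟪G q, p - q⟫) := by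
        rw [← real_inner_smul_left, ← real_inner_smul_left, hab, ← inner_neg_right, neg_sub]
      nlinarith [mul_neg_of_pos_of_neg ha h1, mul_neg_of_pos_of_neg hb h2]
    refine ⟨hpq, ?_⟩
    subst hpq
    have : G p ≠ 0 := fun h => h0 (by rw [h, smul_zero])
    exact smul_left_injective ℝ this hab
  set p := η v with hp
  set a := s v with ha
  have hGp : G p ≠ 0 := fun h => hv (by rw [← hη' v hv, ← hp, h, smul_zero])
  let L : V × ℝ →L[ℝ] V × ℝ :=
    (a • (H p).comp (ContinuousLinearMap.fst ℝ V ℝ) +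
      (ContinuousLinearMap.snd ℝ V ℝ).smulRight (G p)).prod
      ((innerSL ℝ (G p)).comp (ContinuousLinearMap.fst ℝ V ℝ))
  have hΦ : HasStrictFDerivAt Φ L (p, a) := by
    have h1 : HasStrictFDerivAt (fun z : V × ℝ => z.1) (ContinuousLinearMap.fst ℝ V ℝ) (p, a) :=
      hasStrictFDerivAt_fst
    have h2 : HasStrictFDerivAt (fun z : V × ℝ => z.2) (ContinuousLinearMap.snd ℝ V ℝ) (p, a) :=
      hasStrictFDerivAt_snd
    have h3 : HasStrictFDerivAt (fun z : V × ℝ => G z.1)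
      ((H p).comp (ContinuousLinearMap.fst ℝ V ℝ)) (p, a) :=
      HasStrictFDerivAt.comp (g := G) (p, a) (hG p) h1
    have h4 : HasStrictFDerivAt (fun z : V × ℝ => f z.1)
      ((innerSL ℝ (G p)).comp (ContinuousLinearMap.fst ℝ V ℝ)) (p, a) :=
      HasStrictFDerivAt.comp (g := f) (p, a) (hf p) h1
    exact (h2.smul h3).prodMk h4
  have hL : Function.Injective L := by
    rw [injective_iff_map_eq_zero]
    rintro ⟨u, r⟩ hur
    have e1 : a • H p u + r • G p = 0 := congrArg Prod.fst hur
    have e2 : ⟪G p, u⟫ = 0 := congrArg Prod.snd hur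
    have hu : u = 0 := by
      by_contra hu
      have h1 := hH p u hu
      have h2 : ⟪a • H p u + r • G p, u⟫ = 0 := by rw [e1, inner_zero_left]
      rw [inner_add_left, real_inner_smul_left, real_inner_smul_left, e2] at h2
      nlinarith [mul_pos (hs v hv) h1]
    subst hu
    simp only [map_zero, smul_zero, zero_add, smul_eq_zero, hGp, or_false] at e1
    rw [e1]; rfl
  let e : (V × ℝ) ≃L[ℝ] (V × ℝ) :=
    (LinearEquiv.ofInjectiveEndo (L : V × ℝ →ₗ[ℝ] V × ℝ) hL).toContinuousLinearEquiv
  have he : (e : V × ℝ →L[ℝ] V × ℝ) = L := by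
    ext z <;> rfl
  have hΦ' : HasStrictFDerivAt Φ (e : V × ℝ →L[ℝ] V × ℝ) (p, a) := by rw [he]; exact hΦ
  have hval : Φ (p, a) = (v, E) := by
    simp only [Φ, hp, ha, hη v hv, hη' v hv]
  set g := hΦ'.localInverse Φ e (p, a) with hg
  have hgd : HasStrictFDerivAt g (e.symm : V × ℝ →L[ℝ] V × ℝ) (v, E) := by
    rw [← hval]; exact hΦ'.to_localInverse
  have hgv : g (v, E) = (p, a) := by
    rw [← hval]; exact hΦ'.localInverse_apply_image
  have hright : ∀ᶠ z in nhds (v, E), Φ (g z) = z := by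
    rw [← hval]; exact hΦ'.eventually_right_inverse
  have hpos : ∀ᶠ z in nhds (v, E), 0 < (g z).2 := by
    have : ContinuousAt (fun z => (g z).2) (v, E) := continuous_snd.continuousAt.comp hgd.continuousAt
    apply this.eventually (lt_mem_nhds _)
    simp only [hgv]; exact hs v hv
  have hι : ContinuousAt (fun w : V => (w, E)) v := by fun_prop
  have key : ∀ᶠ w in nhds v, g (w, E) = (η w, s w) := by
    filter_upwards [hι.eventually hright, hι.eventually hpos, eventually_ne_nhds hv] with w h1 h2 h3
    have e1 : (g (w, E)).2 • G (g (w, E)).1 = w := congrArg Prod.fst h1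
    have e2 : f (g (w, E)).1 = E := congrArg Prod.snd h1
    have := hinj _ (η w) _ (s w) h2 (hs w h3) (by rw [e1, hη' w h3]) (by rw [e1]; exact h3)
      (by rw [e2, hη w h3])
    exact Prod.ext this.1 this.2
  have hd : DifferentiableAt ℝ (fun w : V => g (w, E)) v := by
    have h1 : DifferentiableAt ℝ g (v, E) := hgd.hasFDerivAt.differentiableAt
    have h2 : DifferentiableAt ℝ (fun w : V => (w, E)) v := by fun_prop
    exact DifferentiableAt.comp (g := g) v h1 h2
  exact ⟨hd.fst.congr_of_eventuallyEq (key.mono fun w hw => by simp [hw]),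
    hd.snd.congr_of_eventuallyEq (key.mono fun w hw => by simp [hw])⟩

theorem aux_main [FiniteDimensional ℝ V] {f : V → ℝ} {G : V → V} {H : V → V →L[ℝ] V}
    (hf : ∀ p, HasStrictFDerivAt f (innerSL ℝ (G p)) p)
    (hG : ∀ p, HasStrictFDerivAt G (H p) p)
    (hH : ∀ p u, u ≠ 0 → 0 < ⟪H p u, u⟫)
    {E : ℝ} (hE : f 0 < E) {η : V → V} {s : V → ℝ}
    (hs : ∀ v, v ≠ 0 → 0 < s v) (hη : ∀ v, v ≠ 0 → f (η v) = E)
    (hη' : ∀ v, v ≠ 0 → s v • G (η v) = v) (ℓ : V → ℝ)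
    (hℓ : ∀ v, v ≠ 0 → ℓ v = ⟪η v, v⟫) (v : V) (hv : v ≠ 0) (w : V) (hw : w ≠ 0) :
    0 < iteratedFDeriv ℝ 2 (fun v' : V => (1/2) * (ℓ v') ^ 2) v ![w, w] := by
  have hd := aux_diff hf hG hH hs hη hη'
  have horth : ∀ v, v ≠ 0 → ∀ u, ⟪v, fderiv ℝ η v u⟫ = 0 := by
    intro v hv u
    have h1 : HasFDerivAt (fun v => f (η v)) ((innerSL ℝ (G (η v))).comp (fderiv ℝ η v)) v :=
      HasFDerivAt.comp (g := f) v (hf (η v)).hasFDerivAt (hd v hv).1.hasFDerivAt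
    have h2 : HasFDerivAt (fun v => f (η v)) (0 : V →L[ℝ] ℝ) v :=
      (hasFDerivAt_const E v).congr_of_eventuallyEq
        ((eventually_ne_nhds hv).mono fun y hy => hη y hy)
    have h3 := congrArg (fun T : V →L[ℝ] ℝ => T u) (h1.unique h2)
    have h4 : ⟪G (η v), fderiv ℝ η v u⟫ = 0 := h3
    have h5 : ⟪s v • G (η v), fderiv ℝ η v u⟫ = 0 := by rw [real_inner_smul_left, h4, mul_zero]
    rwa [hη' v hv] at h5
  have hdl : ∀ v, v ≠ 0 → HasFDerivAt ℓ (innerSL ℝ (η v)) v := by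
    intro v hv
    have h1 := ((hd v hv).1.hasFDerivAt.inner ℝ (hasFDerivAt_id v)).congr_of_eventuallyEq
        ((eventually_ne_nhds hv).mono fun y hy => hℓ y hy)
    refine h1.congr_fderiv ?_
    ext u
    have := horth v hv u
    rw [real_inner_comm] at this
    simp [fderivInnerCLM_apply, this]
  have hdq : ∀ v, v ≠ 0 → HasFDerivAt (fun v' : V => (1/2) * (ℓ v') ^ 2)
      (ℓ v • innerSL ℝ (η v)) v := by
    intro v hv
    refine (((hdl v hv).pow 2).const_mul (1/2)).congr_fderiv ?_
    ext u
    simp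
    ring
  have hpos : 0 < ℓ v := by
    have hne : η v ≠ 0 := fun h => by
      have := hη v hv
      rw [h] at this
      linarith
    have h1 := aux_convex (fun p => (hf p).hasFDerivAt) (fun p => (hG p).hasFDerivAt) hH (η v) 0 hne
    rw [hη v hv, zero_sub, inner_neg_right] at h1
    have h2 : ⟪v, η v⟫ = s v * ⟪G (η v), η v⟫ := by
      rw [← real_inner_smul_left, hη' v hv]
    rw [hℓ v hv, real_inner_comm, h2]
    exact mul_pos (hs v hv) (by linarith)
  let J : V →L[ℝ] V →L[ℝ] ℝ :=
    { toFun := fun u => innerSL ℝ u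
      map_add' := fun u u' => map_add _ u u'
      map_smul' := fun c u => by simp
      cont := (innerSL ℝ).continuous }
  have hJ : ∀ u u', J u u' = ⟪u, u'⟫ := fun u u' => rfl
  have hdd : HasFDerivAt (fderiv ℝ (fun v' : V => (1/2) * (ℓ v') ^ 2))
      (ℓ v • J.comp (fderiv ℝ η v) + (innerSL ℝ (η v)).smulRight (innerSL ℝ (η v))) v := by
    have h1 : HasFDerivAt (fun v => innerSL ℝ (η v)) (J.comp (fderiv ℝ η v)) v :=
      HasFDerivAt.comp (g := J) v J.hasFDerivAt (hd v hv).1.hasFDerivAt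
    exact ((hdl v hv).smul h1).congr_of_eventuallyEq
      ((eventually_ne_nhds hv).mono fun y hy => (hdq y hy).fderiv)
  rw [iteratedFDeriv_two_apply, hdd.fderiv]
  have hgoal : (ℓ v • J.comp (fderiv ℝ η v) +
      (innerSL ℝ (η v)).smulRight (innerSL ℝ (η v)) : V →L[ℝ] V →L[ℝ] ℝ) w w
      = ℓ v * ⟪fderiv ℝ η v w, w⟫ + ⟪η v, w⟫ * ⟪η v, w⟫ := by
    simp [hJ]
  simp only [Matrix.cons_val_zero, Matrix.cons_val_one]
  rw [hgoal]
  set a := fderiv ℝ η v w with ha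
  have hlin : s v • H (η v) a + (fderiv ℝ s v w) • G (η v) = w := by
    have h1 : HasFDerivAt (fun v => G (η v)) ((H (η v)).comp (fderiv ℝ η v)) v :=
      HasFDerivAt.comp (g := G) v (hG (η v)).hasFDerivAt (hd v hv).1.hasFDerivAt
    have h2 := (hd v hv).2.hasFDerivAt.smul h1
    have h3 := (hasFDerivAt_id (𝕜 := ℝ) v).congr_of_eventuallyEq
      ((eventually_ne_nhds hv).mono fun y hy => hη' y hy)
    have h4 := congrArg (fun T : V →L[ℝ] V => T w) (h2.unique h3)
    exact h4
  by_cases ha0 : a = 0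
  · rw [ha0, map_zero, smul_zero, zero_add] at hlin
    have hGv : G (η v) = (s v)⁻¹ • v := by
      rw [← hη' v hv, hη' v hv, eq_inv_smul_iff₀ (hs v hv).ne', hη' v hv]
    have : ⟪η v, w⟫ ≠ 0 := by
      rw [← hlin, hGv, inner_smul_right, inner_smul_right, ← hℓ v hv]
      have h1 : fderiv ℝ s v w ≠ 0 := fun h => hw (by rw [← hlin, h, zero_smul])
      exact mul_ne_zero h1 (mul_ne_zero (inv_ne_zero (hs v hv).ne') hpos.ne')
    rw [ha0, inner_zero_left, mul_zero, zero_add]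
    exact mul_self_pos.2 this
  · have h1 : ⟪a, w⟫ = s v * ⟪H (η v) a, a⟫ := by
      have h0 : ⟪G (η v), a⟫ = 0 := by
        have := horth v hv w
        rw [← ha, ← hη' v hv, hη' v hv] at this
        have h6 : s v * ⟪G (η v), a⟫ = 0 := by
          rw [← real_inner_smul_left, hη' v hv]; exact this
        exact (mul_eq_zero.1 h6).resolve_left (hs v hv).ne'
      calc ⟪a, w⟫ = ⟪w, a⟫ := real_inner_comm _ _
        _ = ⟪s v • H (η v) a + (fderiv ℝ s v w) • G (η v), a⟫ := by rw [hlin]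
        _ = _ := by rw [inner_add_left, real_inner_smul_left, real_inner_smul_left, h0]; ring
    have h2 := mul_pos hpos (mul_pos (hs v hv) (hH (η v) a ha0))
    rw [h1]
    nlinarith [mul_self_nonneg ⟪η v, w⟫]

end aux

/-- Theorem 2.10 (ii), positivity of the fundamental tensor: for the Finsler function
`ℓ(x,v) = ξ_h(x, λ(x,v)v)·v` of a hyperconvex, even Hamilton function `h` at energy `E`,
the bilinear form `g_{(x,v)}(w,w) = D²_v((1/2)ℓ(x,·)²)|_v(w,w)` is positive definite for
all `x ∈ M̃ = {h(x,0) < E}` and `v ≠ 0`. -/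
theorem stmt8 (d : ℕ) (h : Ed d → Ed d → ℝ)
    (hsmooth : ContDiff ℝ (⊤ : ℕ∞) (fun p : Ed d × Ed d => h p.1 p.2))
    (hconv : ∀ x : Ed d, ∃ α : ℝ, 0 < α ∧ ∀ ξ v : Ed d,
      α * ‖v‖ ^ 2 ≤ iteratedFDeriv ℝ 2 (h x) ξ ![v, v])
    (heven : ∀ x ξ : Ed d, h x ξ = h x (-ξ))
    (hbdd : ∃ K : ℝ, ∀ x : Ed d, h x 0 ≤ K)
    (ξh : Ed d → Ed d → Ed d)
    (hξh1 : ∀ x v : Ed d, gradient (h x) (ξh x v) = v)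
    (hξh2 : ∀ x ξ : Ed d, ξh x (gradient (h x) ξ) = ξ)
    (E : ℝ)
    (lam : Ed d → Ed d → ℝ)
    (hlam : ∀ x : Ed d, h x 0 < E → ∀ v : Ed d, v ≠ 0 →
      0 < lam x v ∧ h x (ξh x (lam x v • v)) = E)
    (ℓ : Ed d → Ed d → ℝ)
    (hℓ : ∀ x v : Ed d, ℓ x v = if v = 0 then 0 else ⟪ξh x (lam x v • v), v⟫) :
    ∀ x : Ed d, h x 0 < E → ∀ v : Ed d, v ≠ 0 → ∀ w : Ed d, w ≠ 0 →
      0 < iteratedFDeriv ℝ 2 (fun v' : Ed d => (1/2) * (ℓ x v') ^ 2) v ![w, w] := by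
  intro x hx v hv w hw
  have hfs : ContDiff ℝ (⊤ : ℕ∞) (h x) :=
    hsmooth.comp (contDiff_const.prodMk contDiff_id)
  have hfd : ContDiff ℝ 1 (fderiv ℝ (h x)) := hfs.fderiv_right (by norm_cast)
  let T : (Ed d →L[ℝ] ℝ) →L[ℝ] Ed d :=
    { toFun := fun φ => (InnerProductSpace.toDual ℝ (Ed d)).symm φ
      map_add' := fun u u' => map_add _ u u'
      map_smul' := fun c u => by simp
      cont := (InnerProductSpace.toDual ℝ (Ed d)).symm.continuous }
  have hT : ∀ φ u, ⟪T φ, u⟫ = φ u := fun φ u => InnerProductSpace.toDual_symm_apply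
  have hf : ∀ p, HasStrictFDerivAt (h x) (innerSL ℝ (gradient (h x) p)) p := by
    intro p
    have h1 := (hfs.contDiffAt (x := p)).hasStrictFDerivAt (by simp)
    have h2 : innerSL ℝ (gradient (h x) p) = fderiv ℝ (h x) p := by
      ext u
      exact hT _ _
    rw [h2]; exact h1
  have hG : ∀ p, HasStrictFDerivAt (gradient (h x)) (T.comp (fderiv ℝ (fderiv ℝ (h x)) p)) p := by
    intro p
    have h1 := (hfd.contDiffAt (x := p)).hasStrictFDerivAt (by simp)
    exact HasStrictFDerivAt.comp (g := T) p T.hasStrictFDerivAt h1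
  refine aux_main (f := h x) (G := gradient (h x))
    (H := fun p => T.comp (fderiv ℝ (fderiv ℝ (h x)) p)) hf hG ?_ hx
    (η := fun v => ξh x (lam x v • v)) (s := fun v => (lam x v)⁻¹) ?_ ?_ ?_ (ℓ x) ?_ v hv w hw
  · intro p u hu
    obtain ⟨α, hα, hc⟩ := hconv x
    have h1 := hc p u
    rw [iteratedFDeriv_two_apply] at h1
    have h2 : 0 < α * ‖u‖ ^ 2 := by have := norm_pos_iff.2 hu; positivity
    have h3 : ⟪T (fderiv ℝ (fderiv ℝ (h x)) p u), u⟫ = fderiv ℝ (fderiv ℝ (h x)) p u u := hT _ _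
    exact (h2.trans_le h1).trans_eq h3.symm
  · intro v hv
    exact inv_pos.2 (hlam x hx v hv).1
  · intro v hv
    exact (hlam x hx v hv).2
  · intro v hv
    simp only [hξh1]
    exact inv_smul_smul₀ (hlam x hx v hv).1.ne' v
  · intro v hv
    rw [hℓ, if_neg hv]
end
end

section
/- Let h ∈ C^∞(ℝ^d × ℝ^d, ℝ) be hyperconvex and even in each fibre with h(·,0) bounded from above, fix E ∈ ℝ, M̃ := {x : h(x,0) < E}, and let ℓ = ℓ_{h,E} be the associated Finsler function: ℓ(x,v) := ξ_h(x, λ(x,v)v)·v where ξ_h(x,·) := (∇_ξ h(x,·))^{-1} and λ(x,v) > 0 is the unique number with h(x, ξ_h(x, λ(x,v)v)) = E. Let γ₀ : [a,b] → M̃ and ξ₀ : [a,b] → ℝ^d solve Hamilton's equations γ̇₀(t) = ∇_ξ h(γ₀(t), ξ₀(t)), ξ̇₀(t) = −∇_x h(γ₀(t), ξ₀(t)), with h(γ₀(t), ξ₀(t)) = E for all t. Then γ₀ is a geodesic of ℓ in the sense of vanishing first variation: for every δ > 0 and every C² map Γ : [a,b] × (−δ,δ) → M̃ with Γ(t,0)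 = γ₀(t) for all t, Γ(a,u) = γ₀(a) and Γ(b,u) = γ₀(b) for all u, and ∂_t Γ(t,u) ≠ 0 everywhere, the function u ↦ ∫_a^b ℓ(Γ(t,u), ∂_t Γ(t,u)) dt is differentiable at u = 0 with derivative 0. -/
open scoped RealInnerProductSpace Classical
noncomputable section

section aux
set_option linter.unusedSectionVars false
variable {V : Type*} [NormedAddCommGroup V] [InnerProductSpace ℝ V] [FiniteDimensional ℝ V]

lemma aux_strict (f : V → ℝ) (hf : ContDiff ℝ 2 f)
    (hc : ∀ ξ v : V, v ≠ 0 → 0 < iteratedFDeriv ℝ 2 f ξ ![v, v]) (ξ η : V) (hne : ξ ≠ η) :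
    f ξ + fderiv ℝ f ξ (η - ξ) < f η := by
  set w := η - ξ with hw
  have hw0 : w ≠ 0 := sub_ne_zero.2 hne.symm
  have hline : ∀ s : ℝ, HasDerivAt (fun s : ℝ => ξ + s • w) w s := by
    intro s
    simpa using ((hasDerivAt_id s).smul_const w).const_add ξ
  have hd1 : ∀ s : ℝ, HasDerivAt (fun s : ℝ => f (ξ + s • w)) (fderiv ℝ f (ξ + s • w) w) s := by
    intro s
    exact ((hf.differentiable (by norm_num)) _).hasFDerivAt.comp_hasDerivAt s (hline s)
  have hf1 : ContDiff ℝ 1 (fderiv ℝ f) := hf.fderiv_right (by norm_num)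
  have hd2 : ∀ s : ℝ, HasDerivAt (fun s : ℝ => fderiv ℝ f (ξ + s • w) w)
      (fderiv ℝ (fderiv ℝ f) (ξ + s • w) w w) s := by
    intro s
    have h1 := ((hf1.differentiable (by norm_num)) (ξ + s • w)).hasFDerivAt.comp_hasDerivAt s
      (hline s)
    simpa using h1.clm_apply (hasDerivAt_const s w)
  have hmono : StrictMono (fun s : ℝ => fderiv ℝ f (ξ + s • w) w) := by
    apply strictMono_of_deriv_pos
    intro s
    rw [(hd2 s).deriv]
    have := hc (ξ + s • w) w hw0
    rwa [iteratedFDeriv_two_apply] at this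
  obtain ⟨c, hc', hcc⟩ := exists_hasDerivAt_eq_slope (fun s : ℝ => f (ξ + s • w)) _ zero_lt_one
    (fun s _ => (hd1 s).continuousAt.continuousWithinAt) (fun s _ => hd1 s)
  have := hmono hc'.1
  simp only [zero_smul, add_zero, one_smul, sub_zero, div_one] at this hcc
  rw [hcc] at this
  have he : ξ + w = η := by simp [hw]
  rw [he] at this
  linarith

lemma aux_unique (f : V → ℝ) (hf : ContDiff ℝ 2 f)
    (hc : ∀ ξ v : V, v ≠ 0 → 0 < iteratedFDeriv ℝ 2 f ξ ![v, v]) (ξ η v : V) (r s : ℝ)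
    (hr : 0 < r) (hs : 0 < s) (h1 : gradient f ξ = r • v) (h2 : gradient f η = s • v)
    (he : f ξ = f η) : ξ = η := by
  by_contra hne
  have g1 := aux_strict f hf hc ξ η hne
  have g2 := aux_strict f hf hc η ξ (Ne.symm hne)
  rw [← inner_gradient_left, h1, inner_smul_left] at g1
  rw [← inner_gradient_left, h2, inner_smul_left, ← neg_sub η ξ, inner_neg_right] at g2
  simp only [conj_trivial] at g1 g2
  rw [he] at g1
  rw [he] at g2
  have k1 : ⟪v, η - ξ⟫ < 0 := by
    by_contra hh
    nlinarith [mul_nonneg hr.le (not_lt.1 hh)]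
  nlinarith

lemma aux_gradient (h : V → V → ℝ) (hs : ContDiff ℝ (⊤ : ℕ∞) (fun p : V × V => h p.1 p.2)) :
    ContDiff ℝ 2 (fun p : V × V => gradient (h p.1) p.2) := by
  have : (fun p : V × V => gradient (h p.1) p.2) = fun p =>
      (InnerProductSpace.toDual ℝ V).symm ((fderiv ℝ (fun p : V × V => h p.1 p.2) p).comp
        (ContinuousLinearMap.inr ℝ V V)) := by
    funext p
    unfold gradient
    congr 1
    have h1 : HasFDerivAt (fun p : V × V => h p.1 p.2)
      (fderiv ℝ (fun p : V × V => h p.1 p.2) (p.1, p.2)) (p.1, p.2) :=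
      (hs.differentiable (by simp) _).hasFDerivAt
    exact (h1.comp p.2 (hasFDerivAt_prodMk_right p.1 p.2)).fderiv
  rw [this]
  have h2 : ContDiff ℝ 2 (fderiv ℝ (fun p : V × V => h p.1 p.2)) :=
    hs.fderiv_right (m := 2) (WithTop.coe_le_coe.2 (le_top : (2 + 1 : ℕ∞) ≤ ⊤))
  exact (InnerProductSpace.toDual ℝ V).symm.contDiff.comp (h2.clm_comp contDiff_const)

lemma aux_Xi (h : V → V → ℝ) (hs : ContDiff ℝ (⊤ : ℕ∞) (fun p : V × V => h p.1 p.2))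
    (hc : ∀ x ξ v : V, v ≠ 0 → 0 < iteratedFDeriv ℝ 2 (h x) ξ ![v, v])
    (E : ℝ) (Ξ : V × V → V) (lam : V × V → ℝ)
    (hΞ : ∀ p : V × V, h p.1 0 < E → p.2 ≠ 0 →
      0 < lam p ∧ gradient (h p.1) (Ξ p) = lam p • p.2 ∧ h p.1 (Ξ p) = E)
    (p : V × V) (hp : h p.1 0 < E) (hp2 : p.2 ≠ 0) : ContDiffAt ℝ 1 Ξ p := by
  have hC2 : ∀ x, ContDiff ℝ 2 (h x) := fun x =>
    (hs.of_le (WithTop.coe_le_coe.2 (le_top : (2 : ℕ∞) ≤ ⊤))).comp (contDiff_prodMk_right x)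
  set P : V × V → V := fun p => gradient (h p.1) p.2 with hP
  have hPs : ContDiff ℝ 2 P := aux_gradient h hs
  set H : V × V → ℝ := fun p => h p.1 p.2 with hH
  let Φ : V × V × ℝ → V × V × ℝ := fun q => (q.1, q.2.2 • P (q.1, q.2.1), H (q.1, q.2.1))
  have hH1 : ContDiff ℝ 1 H := hs.of_le (by exact_mod_cast le_top)
  have hP1 : ContDiff ℝ 1 P := hPs.of_le (by norm_num)
  have hΦ : ContDiff ℝ 1 Φ := by
    have e : ContDiff ℝ 1 (fun q : V × V × ℝ => (q.1, q.2.1)) := by fun_prop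
    have e1 := hP1.comp e
    have e2 := hH1.comp e
    have e3 : ContDiff ℝ 1 (fun q : V × V × ℝ => q.2.2) := by fun_prop
    exact contDiff_fst.prodMk ((e3.smul e1).prodMk e2)
  obtain ⟨hl, hg, he⟩ := hΞ p hp hp2
  set q0 : V × V × ℝ := (p.1, Ξ p, (lam p)⁻¹) with hq0
  have hΦ0 : Φ q0 = (p.1, p.2, E) := by
    simp only [Φ, hq0, hP, hH, hg, he]
    rw [inv_smul_smul₀ hl.ne']
  have hΦd : HasFDerivAt Φ (fderiv ℝ Φ q0) q0 := (hΦ.differentiable (by norm_num) _).hasFDerivAt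
  have hPd : HasFDerivAt P (fderiv ℝ P (p.1, Ξ p)) (p.1, Ξ p) :=
    (hP1.differentiable (by norm_num) _).hasFDerivAt
  have hHd : HasFDerivAt H (fderiv ℝ H (p.1, Ξ p)) (p.1, Ξ p) :=
    (hH1.differentiable (by norm_num) _).hasFDerivAt
  have hpos : ∀ w : V, w ≠ 0 → 0 < ⟪fderiv ℝ P (p.1, Ξ p) (0, w), w⟫ := by
    intro w hw
    have := hc p.1 (Ξ p) w hw
    rw [iteratedFDeriv_two_apply] at this
    simp only [Matrix.cons_val_zero, Matrix.cons_val_one] at this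
    have h1 : HasFDerivAt (fun η => P (p.1, η)) ((fderiv ℝ P (p.1, Ξ p)).comp
      (ContinuousLinearMap.inr ℝ V V)) (Ξ p) := hPd.comp (Ξ p) (hasFDerivAt_prodMk_right p.1 (Ξ p))
    have h4 : DifferentiableAt ℝ (fderiv ℝ (h p.1)) (Ξ p) :=
      ((hC2 p.1).fderiv_right (m := 1) (by norm_num)).differentiable (by norm_num) _
    have h3 := h4.hasFDerivAt.clm_apply (hasFDerivAt_const w (Ξ p))
    have h5 := h1.inner ℝ (hasFDerivAt_const w (Ξ p))
    have h6 : (fun η => fderiv ℝ (h p.1) η w) = fun η => ⟪P (p.1, η), w⟫ := by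
      funext η
      simp only [hP, inner_gradient_left]
    rw [h6] at h3
    have h7 := congrArg (fun L : V →L[ℝ] ℝ => L w) (h3.unique h5)
    simp at h7
    rw [h7] at this
    exact this
  have hHe : ∀ w : V, fderiv ℝ H (p.1, Ξ p) (0, w) = ⟪P (p.1, Ξ p), w⟫ := by
    intro w
    have h1 := (hHd.comp (Ξ p) (hasFDerivAt_prodMk_right p.1 (Ξ p))).fderiv
    simp only [hP, inner_gradient_left]
    have h2 : fderiv ℝ (h p.1) (Ξ p) = _ := h1
    rw [h2]
    simp
  have hinj : Function.Injective (fderiv ℝ Φ q0) := by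
    rw [injective_iff_map_eq_zero]
    rintro ⟨w1, w2, m⟩ hw
    have e : HasFDerivAt (fun q : V × V × ℝ => (q.1, q.2.1)) (_ : V × V × ℝ →L[ℝ] V × V) q0 :=
      hasFDerivAt_fst.prodMk (hasFDerivAt_fst.comp q0 hasFDerivAt_snd)
    have e1 := hPd.comp q0 e
    have e2 := hHd.comp q0 e
    have e3 : HasFDerivAt (fun q : V × V × ℝ => q.2.2) (_ : V × V × ℝ →L[ℝ] ℝ) q0 :=
      (hasFDerivAt_snd.comp q0 hasFDerivAt_snd)
    have e4 : HasFDerivAt Φ _ q0 := hasFDerivAt_fst.prodMk ((e3.smul e1).prodMk e2)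
    rw [e4.fderiv] at hw
    simp [hq0] at hw
    obtain ⟨rfl, hw2, hw3⟩ := hw
    have hg' : P (p.1, Ξ p) = lam p • p.2 := hg
    rw [hHe] at hw3
    have hw20 : w2 = 0 := by
      by_contra hne
      have k1 := hpos w2 hne
      have k2 := congrArg (fun z => ⟪z, w2⟫) hw2
      simp only [inner_add_left, inner_smul_left, hw3, inner_zero_left, conj_trivial,
        mul_zero, add_zero] at k2
      have := mul_pos (inv_pos.2 hl) k1
      linarith
    subst hw20
    have hz : ((0 : V), (0 : V)) = 0 := rfl
    simp [hz, hg', hl.ne', hp2] at hw2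
    simp [hw2]
  let e0 : (V × V × ℝ) ≃L[ℝ] (V × V × ℝ) :=
    (LinearEquiv.ofInjectiveEndo (fderiv ℝ Φ q0 : V × V × ℝ →ₗ[ℝ] V × V × ℝ) hinj).toContinuousLinearEquiv
  have hΦe : HasFDerivAt Φ (e0 : V × V × ℝ →L[ℝ] V × V × ℝ) q0 := by
    have : (e0 : V × V × ℝ →L[ℝ] V × V × ℝ) = fderiv ℝ Φ q0 := by
      apply ContinuousLinearMap.ext
      intro z
      rfl
    rw [this]
    exact hΦd
  have hAt : ContDiffAt ℝ 1 Φ q0 := hΦ.contDiffAt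
  have hstr : HasStrictFDerivAt Φ (e0 : V × V × ℝ →L[ℝ] V × V × ℝ) q0 :=
    hAt.hasStrictFDerivAt' hΦe (by norm_num)
  have hr := hstr.eventually_right_inverse
  have hi := hstr.localInverse_apply_image
  have hcd : ContDiffAt ℝ 1 (hstr.localInverse Φ e0 q0) (Φ q0) :=
    hAt.to_localInverse hΦe (by norm_num)
  set Ψ := hstr.localInverse Φ e0 q0 with hΨ
  rw [hΦ0] at hr hi hcd
  have hj : ContDiffAt ℝ 1 (fun z : V × V => (z.1, z.2, E)) p := by fun_prop
  have hq : ContDiffAt ℝ 1 (fun z : V × V => Ψ (z.1, z.2, E)) p :=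
    ContDiffAt.comp p (g := Ψ) hcd hj
  have hfin : ContDiffAt ℝ 1 (fun z : V × V => (Ψ (z.1, z.2, E)).2.1) p :=
    (contDiff_fst.comp contDiff_snd).contDiffAt.comp p hq
  refine hfin.congr_of_eventuallyEq ?_
  have ev1 := hj.continuousAt.eventually hr
  have ev2 : ∀ᶠ z : V × V in nhds p, 0 < (Ψ (z.1, z.2, E)).2.2 := by
    have : ContinuousAt (fun z : V × V => (Ψ (z.1, z.2, E)).2.2) p :=
      (continuous_snd.comp continuous_snd).continuousAt.comp hq.continuousAt
    refine this.eventually (lt_mem_nhds ?_)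
    show 0 < (Ψ (p.1, p.2, E)).2.2
    rw [hi]
    exact inv_pos.2 hl
  have ev3 : ∀ᶠ z : V × V in nhds p, h z.1 0 < E := by
    have : Continuous (fun z : V × V => h z.1 0) :=
      hs.continuous.comp (g := fun p : V × V => h p.1 p.2) (f := fun z : V × V => (z.1, (0 : V)))
        (by fun_prop)
    exact this.continuousAt.eventually (gt_mem_nhds hp)
  have ev4 : ∀ᶠ z : V × V in nhds p, z.2 ≠ 0 := continuous_snd.continuousAt.eventually_ne hp2
  filter_upwards [ev1, ev2, ev3, ev4] with z z1 z2 z3 z4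
  simp only [Φ, Prod.mk.injEq] at z1
  obtain ⟨y1, y2, y3⟩ := z1
  obtain ⟨u1, u2, u3⟩ := hΞ z z3 z4
  rw [y1] at y2 y3
  refine aux_unique (h z.1) (hC2 z.1) (hc z.1) _ _ z.2 (lam z) (Ψ (z.1, z.2, E)).2.2⁻¹ u1
    (inv_pos.2 z2) u2 ?_ (u3.trans y3.symm)
  rw [eq_inv_smul_iff₀ z2.ne']
  exact y2

lemma aux_int_s9 (G : ℝ × ℝ → ℝ) (a b δ : ℝ) (hab : a < b) (hδ : 0 < δ)
    (hG : ContDiffOn ℝ 1 G (Set.Icc a b ×ˢ Set.Ioo (-δ) δ)) :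
    IntervalIntegrable (fun t => fderivWithin ℝ G (Set.Icc a b ×ˢ Set.Ioo (-δ) δ) (t, 0) (0, 1))
      MeasureTheory.volume a b ∧
    HasDerivAt (fun u => ∫ t in a..b, G (t, u))
      (∫ t in a..b, fderivWithin ℝ G (Set.Icc a b ×ˢ Set.Ioo (-δ) δ) (t, 0) (0, 1)) 0 := by
  set S := Set.Icc a b ×ˢ Set.Ioo (-δ) δ with hS
  have hU : UniqueDiffOn ℝ S := (uniqueDiffOn_Icc hab).prod isOpen_Ioo.uniqueDiffOn
  have hcont : ContinuousOn (fderivWithin ℝ G S) S := hG.continuousOn_fderivWithin hU (by norm_num)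
  have hcont1 : ContinuousOn (fun p => fderivWithin ℝ G S p (0, 1)) S :=
    hcont.clm_apply continuousOn_const
  have hsl : ∀ u ∈ Set.Ioo (-δ) δ, Set.MapsTo (fun t : ℝ => (t, u)) (Set.uIcc a b) S := by
    intro u hu t ht
    rw [Set.uIcc_of_le hab.le] at ht
    exact ⟨ht, hu⟩
  have hslc : ∀ u : ℝ, ContinuousOn (fun t : ℝ => (t, u)) (Set.uIcc a b) := by
    intro u; fun_prop
  have hIG : ∀ u ∈ Set.Ioo (-δ) δ, IntervalIntegrable (fun t => G (t, u)) MeasureTheory.volume a b :=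
    fun u hu => (hG.continuousOn.comp (hslc u) (hsl u hu)).intervalIntegrable
  have h0 : (0 : ℝ) ∈ Set.Ioo (-δ) δ := ⟨by linarith, hδ⟩
  have hI' : IntervalIntegrable (fun t => fderivWithin ℝ G S (t, 0) (0, 1))
      MeasureTheory.volume a b := (hcont1.comp (hslc 0) (hsl 0 h0)).intervalIntegrable
  refine ⟨hI', ?_⟩
  have hK : IsCompact (Set.Icc a b ×ˢ Set.Icc (-(δ/2)) (δ/2)) := isCompact_Icc.prod isCompact_Icc
  have hKS : Set.Icc a b ×ˢ Set.Icc (-(δ/2)) (δ/2) ⊆ S := by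
    apply Set.prod_mono le_rfl
    intro u hu
    exact ⟨by linarith [hu.1], by linarith [hu.2]⟩
  obtain ⟨C, hC⟩ := hK.exists_bound_of_continuousOn (hcont1.mono hKS)
  have hmem : ∀ t ∈ Set.uIoc a b, t ∈ Set.Icc a b := by
    intro t ht
    rw [Set.uIoc_of_le hab.le] at ht
    exact ⟨ht.1.le, ht.2⟩
  refine (intervalIntegral.hasDerivAt_integral_of_dominated_loc_of_deriv_le
    (F := fun u t => G (t, u)) (F' := fun u t => fderivWithin ℝ G S (t, u) (0, 1))
    (bound := fun _ => C) (s := Set.Icc (-(δ/2)) (δ/2)) (x₀ := 0)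
    (Icc_mem_nhds (by linarith) (by linarith)) ?_ (hIG 0 h0) ?_ ?_ ?_ ?_).2
  · filter_upwards [isOpen_Ioo.mem_nhds h0] with u hu
    exact (intervalIntegrable_iff.1 (hIG u hu)).aestronglyMeasurable
  · exact (intervalIntegrable_iff.1 hI').aestronglyMeasurable
  · refine Filter.Eventually.of_forall fun t ht u hu => hC (t, u) ⟨hmem t ht, hu⟩
  · exact intervalIntegrable_const
  · refine Filter.Eventually.of_forall fun t ht u hu => ?_
    have hm : (t, u) ∈ S := hKS ⟨hmem t ht, hu⟩
    have h1 := ((hG.differentiableOn (by norm_num)) _ hm).hasFDerivWithinAt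
    have h2 : HasDerivAt (fun u : ℝ => (t, u)) ((0 : ℝ), (1 : ℝ)) u :=
      (hasDerivAt_const u t).prodMk (hasDerivAt_id u)
    refine HasFDerivWithinAt.comp_hasDerivAt (f := fun u : ℝ => (t, u)) u h1 h2 ?_
    filter_upwards [isOpen_Ioo.mem_nhds hm.2] with v hv
    exact ⟨hm.1, hv⟩

end aux

/-- Theorem 1.4 (a) (generalized Jacobi/Maupertuis theorem): a base integral curve
`γ₀` of the Hamiltonian vector field of `h` with energy `E` is a geodesic of the
associated Finsler function `ℓ = ℓ_{h,E}`: the first variation of the length functional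
vanishes at `γ₀` over all regular variations with fixed endpoints. -/
theorem stmt9 (d : ℕ) (h : Ed d → Ed d → ℝ)
    (hsmooth : ContDiff ℝ (⊤ : ℕ∞) (fun p : Ed d × Ed d => h p.1 p.2))
    (hconv : ∀ x : Ed d, ∃ α : ℝ, 0 < α ∧ ∀ ξ v : Ed d,
      α * ‖v‖ ^ 2 ≤ iteratedFDeriv ℝ 2 (h x) ξ ![v, v])
    (heven : ∀ x ξ : Ed d, h x ξ = h x (-ξ))
    (hbdd : ∃ K : ℝ, ∀ x : Ed d, h x 0 ≤ K)
    (ξh : Ed d → Ed d → Ed d)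
    (hξh1 : ∀ x v : Ed d, gradient (h x) (ξh x v) = v)
    (hξh2 : ∀ x ξ : Ed d, ξh x (gradient (h x) ξ) = ξ)
    (E : ℝ)
    (lam : Ed d → Ed d → ℝ)
    (hlam : ∀ x : Ed d, h x 0 < E → ∀ v : Ed d, v ≠ 0 →
      0 < lam x v ∧ h x (ξh x (lam x v • v)) = E)
    (ℓ : Ed d → Ed d → ℝ)
    (hℓ : ∀ x v : Ed d, ℓ x v = if v = 0 then 0 else ⟪ξh x (lam x v • v), v⟫)
    (a b : ℝ) (hab : a < b)
    (γ₀ ξ₀ : ℝ → Ed d)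
    (hγM : ∀ t ∈ Set.Icc a b, h (γ₀ t) 0 < E)
    (hham1 : ∀ t ∈ Set.Icc a b, HasDerivAt γ₀ (gradient (h (γ₀ t)) (ξ₀ t)) t)
    (hham2 : ∀ t ∈ Set.Icc a b,
      HasDerivAt ξ₀ (-(gradient (fun x : Ed d => h x (ξ₀ t)) (γ₀ t))) t)
    (hE : ∀ t ∈ Set.Icc a b, h (γ₀ t) (ξ₀ t) = E) :
    ∀ δ : ℝ, 0 < δ → ∀ Γ : ℝ → ℝ → Ed d,
      ContDiffOn ℝ 2 (fun p : ℝ × ℝ => Γ p.1 p.2) (Set.Icc a b ×ˢ Set.Ioo (-δ) δ) →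
      (∀ t ∈ Set.Icc a b, ∀ u ∈ Set.Ioo (-δ) δ, h (Γ t u) 0 < E) →
      (∀ t ∈ Set.Icc a b, Γ t 0 = γ₀ t) →
      (∀ u ∈ Set.Ioo (-δ) δ, Γ a u = γ₀ a ∧ Γ b u = γ₀ b) →
      (∀ t ∈ Set.Icc a b, ∀ u ∈ Set.Ioo (-δ) δ, deriv (fun s : ℝ => Γ s u) t ≠ 0) →
      HasDerivAt
        (fun u : ℝ => ∫ t in a..b, ℓ (Γ t u) (deriv (fun s : ℝ => Γ s u) t)) 0 0 := by
  intro δ hδ Γ hΓ hΓM hΓ0 hΓe hΓr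
  set S := Set.Icc a b ×ˢ Set.Ioo (-δ) δ with hS
  have hU : UniqueDiffOn ℝ S := (uniqueDiffOn_Icc hab).prod isOpen_Ioo.uniqueDiffOn
  have h0 : (0 : ℝ) ∈ Set.Ioo (-δ) δ := ⟨by linarith, hδ⟩
  set g : ℝ × ℝ → Ed d := fun p => Γ p.1 p.2 with hg
  have hfd : ContDiffOn ℝ 1 (fderivWithin ℝ g S) S := hΓ.fderivWithin hU (by norm_num)
  have hg1 : ContDiffOn ℝ 1 g S := hΓ.of_le (by norm_num)
  have hgd : ∀ p ∈ S, HasFDerivWithinAt g (fderivWithin ℝ g S p) S p := fun p hp =>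
    (hg1.differentiableOn (by norm_num) p hp).hasFDerivWithinAt
  set W : ℝ × ℝ → Ed d := fun p => fderivWithin ℝ g S p (1, 0) with hW
  have hW1 : ContDiffOn ℝ 1 W S := hfd.clm_apply contDiffOn_const
  have hWe : ∀ t ∈ Set.Icc a b, ∀ u ∈ Set.Ioo (-δ) δ, W (t, u) = deriv (fun s => Γ s u) t := by
    intro t ht u hu
    have h1 : HasDerivWithinAt (fun s => Γ s u) (deriv (fun s => Γ s u) t) (Set.Icc a b) t :=
      (differentiableAt_of_deriv_ne_zero (hΓr t ht u hu)).hasDerivAt.hasDerivWithinAt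
    have h2 : HasDerivWithinAt (fun s : ℝ => (s, u)) ((1 : ℝ), (0 : ℝ)) (Set.Icc a b) t :=
      ((hasDerivAt_id t).prodMk (hasDerivAt_const t u)).hasDerivWithinAt
    have h3 : HasDerivWithinAt (fun s => Γ s u) (W (t, u)) (Set.Icc a b) t :=
      HasFDerivWithinAt.comp_hasDerivWithinAt (f := fun s : ℝ => (s, u)) t (hgd (t, u) ⟨ht, hu⟩) h2
        (fun s hs => ⟨hs, hu⟩)
    exact (uniqueDiffOn_Icc hab t ht).eq_deriv _ h3 h1
  have hc : ∀ x ξ v : Ed d, v ≠ 0 → 0 < iteratedFDeriv ℝ 2 (h x) ξ ![v, v] := by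
    intro x ξ v hv
    obtain ⟨α, hα, hh⟩ := hconv x
    exact lt_of_lt_of_le (mul_pos hα (pow_pos (norm_pos_iff.2 hv) 2)) (hh ξ v)
  have hC2 : ∀ x, ContDiff ℝ 2 (h x) := fun x =>
    (hsmooth.of_le (WithTop.coe_le_coe.2 (le_top : (2 : ℕ∞) ≤ ⊤))).comp (contDiff_prodMk_right x)
  set Ξ : Ed d × Ed d → Ed d := fun q => ξh q.1 (lam q.1 q.2 • q.2) with hΞd
  have hΞ : ∀ p : Ed d × Ed d, h p.1 0 < E → p.2 ≠ 0 →
      0 < lam p.1 p.2 ∧ gradient (h p.1) (Ξ p) = lam p.1 p.2 • p.2 ∧ h p.1 (Ξ p) = E :=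
    fun p hp hp2 => ⟨(hlam p.1 hp p.2 hp2).1, hξh1 _ _, (hlam p.1 hp p.2 hp2).2⟩
  have hWne : ∀ p ∈ S, W p ≠ 0 := fun p hp => by
    have := hWe p.1 hp.1 p.2 hp.2
    rw [Prod.mk.eta] at this
    rw [this]
    exact hΓr p.1 hp.1 p.2 hp.2
  set X : ℝ × ℝ → Ed d := fun p => Ξ (g p, W p) with hX
  have hX1 : ContDiffOn ℝ 1 X S := fun p hp =>
    ContDiffAt.comp_contDiffWithinAt (f := fun p => (g p, W p)) p
      (aux_Xi h hsmooth hc E Ξ (fun p => lam p.1 p.2) hΞ (g p, W p)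
        (hΓM p.1 hp.1 p.2 hp.2) (hWne p hp)) ((hg1.prodMk hW1) p hp)
  have hXE : ∀ p ∈ S, h (g p) (X p) = E := fun p hp =>
    (hΞ (g p, W p) (hΓM p.1 hp.1 p.2 hp.2) (hWne p hp)).2.2
  set G : ℝ × ℝ → ℝ := fun p => ⟪X p, W p⟫ with hG
  have hG1 : ContDiffOn ℝ 1 G S := hX1.inner ℝ hW1
  obtain ⟨hint, hder⟩ := aux_int_s9 G a b δ hab hδ hG1
  have hvert : ∀ t u : ℝ, HasDerivAt (fun u : ℝ => (t, u)) ((0 : ℝ), (1 : ℝ)) u := fun t u =>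
    (hasDerivAt_const u t).prodMk (hasDerivAt_id u)
  set Y : ℝ → Ed d := fun t => fderivWithin ℝ g S (t, 0) (0, 1) with hY
  have hYd : ∀ t ∈ Set.Icc a b, HasDerivAt (fun u => g (t, u)) (Y t) 0 := by
    intro t ht
    refine HasFDerivWithinAt.comp_hasDerivAt (f := fun u : ℝ => (t, u)) 0
      (hgd (t, 0) ⟨ht, h0⟩) (hvert t 0) ?_
    filter_upwards [isOpen_Ioo.mem_nhds h0] with v hv
    exact ⟨ht, hv⟩
  have hYa : Y a = 0 := by
    refine (hYd a ⟨le_rfl, hab.le⟩).unique ((hasDerivAt_const 0 (γ₀ a)).congr_of_eventuallyEq ?_)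
    filter_upwards [isOpen_Ioo.mem_nhds h0] with v hv
    exact (hΓe v hv).1
  have hYb : Y b = 0 := by
    refine (hYd b ⟨hab.le, le_rfl⟩).unique ((hasDerivAt_const 0 (γ₀ b)).congr_of_eventuallyEq ?_)
    filter_upwards [isOpen_Ioo.mem_nhds h0] with v hv
    exact (hΓe v hv).2
  have hYc : ContinuousOn Y (Set.Icc a b) := by
    have h1 : ContinuousOn (fun p => fderivWithin ℝ g S p (0, 1)) S :=
      hfd.continuousOn.clm_apply continuousOn_const
    exact h1.comp (f := fun t : ℝ => (t, (0 : ℝ))) (by fun_prop) (fun t ht => ⟨ht, h0⟩)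
  have hzero : ∫ t in a..b, fderivWithin ℝ G S (t, 0) (0, 1) = 0 := by
    rw [intervalIntegral.integral_eq_sub_of_hasDerivAt_of_le (f := fun t => ⟪ξ₀ t, Y t⟫) hab.le ?_ ?_
      hint]
    · simp [hYa, hYb]
    · exact ContinuousOn.inner (𝕜 := ℝ)
        (fun t ht => (hham2 t ht).continuousAt.continuousWithinAt) hYc
    intro t ht
    have htc : t ∈ Set.Icc a b := ⟨ht.1.le, ht.2.le⟩
    have hp : (t, (0 : ℝ)) ∈ S := ⟨htc, h0⟩
    have hnhds : S ∈ nhds (t, (0 : ℝ)) := prod_mem_nhds (Icc_mem_nhds ht.1 ht.2)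
      (isOpen_Ioo.mem_nhds h0)
    have hXa : HasFDerivAt X (fderiv ℝ X (t, 0)) (t, 0) :=
      ((hX1.contDiffAt hnhds).differentiableAt (by norm_num)).hasFDerivAt
    have hGa : HasFDerivAt G (fderiv ℝ G (t, 0)) (t, 0) :=
      ((hG1.contDiffAt hnhds).differentiableAt (by norm_num)).hasFDerivAt
    have hsym : IsSymmSndFDerivAt ℝ g (t, 0) :=
      (hΓ.contDiffAt hnhds).isSymmSndFDerivAt (by simp)
    set D := fderivWithin ℝ g S with hD
    have hDe : D =ᶠ[nhds (t, (0 : ℝ))] fderiv ℝ g := by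
      filter_upwards [eventually_mem_nhds_iff.2 hnhds] with q hq
      exact fderivWithin_of_mem_nhds hq
    have hDa : HasFDerivAt D (fderiv ℝ (fderiv ℝ g) (t, 0)) (t, 0) := by
      rw [← hDe.fderiv_eq]
      exact ((hfd.contDiffAt hnhds).differentiableAt (by norm_num)).hasFDerivAt
    set B := fderiv ℝ (fderiv ℝ g) (t, 0) with hB
    have hWv : HasDerivAt (fun u => W (t, u)) (B (0, 1) (1, 0)) 0 := by
      have := (HasFDerivAt.comp_hasDerivAt (f := fun u : ℝ => (t, u)) 0 hDa (hvert t 0)).clm_apply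
        (hasDerivAt_const 0 ((1 : ℝ), (0 : ℝ)))
      simpa using this
    have hYt : HasDerivAt Y (B (0, 1) (1, 0)) t := by
      have e : HasDerivAt (fun s : ℝ => (s, (0 : ℝ))) ((1 : ℝ), (0 : ℝ)) t :=
        (hasDerivAt_id t).prodMk (hasDerivAt_const t 0)
      have := (HasFDerivAt.comp_hasDerivAt (f := fun s : ℝ => (s, (0 : ℝ))) t hDa e).clm_apply
        (hasDerivAt_const t ((0 : ℝ), (1 : ℝ)))
      rw [hsym.eq (0, 1) (1, 0)]
      simpa using this
    set X' := fderiv ℝ X (t, 0) (0, 1) with hX'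
    have hXv : HasDerivAt (fun u => X (t, u)) X' 0 :=
      HasFDerivAt.comp_hasDerivAt (f := fun u : ℝ => (t, u)) 0 hXa (hvert t 0)
    have hGv : HasDerivAt (fun u => G (t, u)) (fderiv ℝ G (t, 0) (0, 1)) 0 :=
      HasFDerivAt.comp_hasDerivAt (f := fun u : ℝ => (t, u)) 0 hGa (hvert t 0)
    have hGe := hGv.unique (hXv.inner ℝ hWv)
    have hgt : g (t, 0) = γ₀ t := hΓ0 t htc
    have hWt : W (t, 0) = gradient (h (γ₀ t)) (ξ₀ t) := by
      rw [hWe t htc 0 h0, ← (hham1 t htc).deriv]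
      apply Filter.EventuallyEq.deriv_eq
      filter_upwards [Icc_mem_nhds ht.1 ht.2] with s hs
      exact hΓ0 s hs
    have hXt : X (t, 0) = ξ₀ t := by
      obtain ⟨k1, k2, k3⟩ := hΞ (g (t, 0), W (t, 0)) (hΓM t htc 0 h0) (hWne _ hp)
      refine aux_unique (h (γ₀ t)) (hC2 _) (hc _) _ _ (W (t, 0)) _ 1 k1 one_pos ?_ ?_ ?_
      · rw [← hgt]; exact k2
      · rw [one_smul, hWt]
      · rw [hE t htc, ← hgt]; exact k3
    set H : Ed d × Ed d → ℝ := fun p => h p.1 p.2 with hH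
    have hHd : HasFDerivAt H (fderiv ℝ H (γ₀ t, ξ₀ t)) (γ₀ t, ξ₀ t) :=
      (hsmooth.differentiable (by simp) _).hasFDerivAt
    have hHv : HasDerivAt (fun u => H (g (t, u), X (t, u)))
        (fderiv ℝ H (γ₀ t, ξ₀ t) (Y t, X')) 0 := by
      have hHd' := hHd
      rw [← hgt, ← hXt] at hHd'
      have := HasFDerivAt.comp_hasDerivAt (f := fun u : ℝ => (g (t, u), X (t, u))) 0 hHd'
        ((hYd t htc).prodMk hXv)
      rw [hgt, hXt] at this
      exact this
    have hH0 : fderiv ℝ H (γ₀ t, ξ₀ t) (Y t, X') = 0 := by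
      refine hHv.unique ((hasDerivAt_const 0 E).congr_of_eventuallyEq ?_)
      filter_upwards [isOpen_Ioo.mem_nhds h0] with v hv
      exact hXE (t, v) ⟨htc, hv⟩
    have p1 : ⟪gradient (h (γ₀ t)) (ξ₀ t), X'⟫ = fderiv ℝ H (γ₀ t, ξ₀ t) (0, X') := by
      rw [inner_gradient_left]
      have h1 : fderiv ℝ (h (γ₀ t)) (ξ₀ t) = _ :=
        (hHd.comp (ξ₀ t) (hasFDerivAt_prodMk_right (γ₀ t) (ξ₀ t))).fderiv
      rw [h1]; simp
    have p2 : ⟪gradient (fun x => h x (ξ₀ t)) (γ₀ t), Y t⟫ = fderiv ℝ H (γ₀ t, ξ₀ t) (Y t, 0) := by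
      rw [inner_gradient_left]
      have h1 : fderiv ℝ (fun x => h x (ξ₀ t)) (γ₀ t) = _ :=
        (HasFDerivAt.comp (f := fun x => (x, ξ₀ t)) (γ₀ t) hHd
          (hasFDerivAt_prodMk_left (γ₀ t) (ξ₀ t))).fderiv
      rw [h1]; simp
    have p3 : fderiv ℝ H (γ₀ t, ξ₀ t) (Y t, 0) + fderiv ℝ H (γ₀ t, ξ₀ t) (0, X') = 0 := by
      rw [← map_add, ← hH0]; simp
    have hfin := (hham2 t htc).inner ℝ hYt
    suffices hval : fderivWithin ℝ G S (t, 0) (0, 1) = ⟪ξ₀ t, B (0, 1) (1, 0)⟫ +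
        ⟪-gradient (fun x => h x (ξ₀ t)) (γ₀ t), Y t⟫ by
      rw [hval]
      exact hfin
    rw [fderivWithin_of_mem_nhds hnhds, hGe, hXt, hWt, inner_neg_left, p2,
      real_inner_comm (gradient (h (γ₀ t)) (ξ₀ t)) X', p1]
    linarith
  rw [hzero] at hder
  refine hder.congr_of_eventuallyEq ?_
  filter_upwards [isOpen_Ioo.mem_nhds h0] with u hu
  apply intervalIntegral.integral_congr
  intro t ht
  rw [Set.uIcc_of_le hab.le] at ht
  simp only [hG, hX, hΞd, hWe t ht u hu, hℓ, if_neg (hΓr t ht u hu), hg]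
end
end

section
/- Let ã : ℤ^d → ℝ satisfy: ã_η ≤ 0 for every η ≠ 0; ã_η = ã_{−η} for all η; Σ_{η∈ℤ^d} e^{c|η|} |ã_η| < ∞ for every c > 0; and the real span of {η ∈ ℤ^d : ã_η < 0} is all of ℝ^d. Then t̃(ξ) := −Σ_{η∈ℤ^d} ã_η cosh(η·ξ) defines a smooth function on ℝ^d and there exists α > 0 such that ⟨v, D² t̃(ξ) v⟩ ≥ α |v|² for all ξ, v ∈ ℝ^d. -/
open scoped RealInnerProductSpace Classical
noncomputable section

lemma aux_iter_cosh (k : ℕ) (x : ℝ) : |iteratedDeriv k Real.cosh x| ≤ Real.exp |x| := by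
  have hc : ∀ x : ℝ, |Real.cosh x| ≤ Real.exp |x| := fun x => by
    rw [abs_of_pos (Real.cosh_pos x), Real.cosh_eq]
    have h1 := Real.exp_le_exp.2 (le_abs_self x)
    have h2 := Real.exp_le_exp.2 (neg_le_abs x)
    linarith
  have hs : ∀ x : ℝ, |Real.sinh x| ≤ Real.exp |x| := fun x => by
    rw [Real.sinh_eq, abs_le]
    have h1 := Real.exp_le_exp.2 (le_abs_self x)
    have h2 := Real.exp_le_exp.2 (neg_le_abs x)
    have h3 := Real.exp_pos x
    have h4 := Real.exp_pos (-x)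
    constructor <;> linarith
  rcases Nat.even_or_odd' k with ⟨n, rfl | rfl⟩
  · rw [Real.iteratedDeriv_even_cosh]; exact hc x
  · rw [Real.iteratedDeriv_odd_cosh]; exact hs x

/-- one term of the series -/
def gterm {E : Type*} [NormedAddCommGroup E] [InnerProductSpace ℝ E] (b : ℝ) (w : E) : E → ℝ :=
  (fun t => b * Real.cosh t) ∘ (innerSL ℝ w)

section
variable {E : Type*} [NormedAddCommGroup E] [InnerProductSpace ℝ E]

lemma gterm_contDiff (b : ℝ) (w : E) {n : WithTop ℕ∞} : ContDiff ℝ n (gterm b w) :=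
  (contDiff_const.mul Real.contDiff_cosh).comp (innerSL ℝ w).contDiff

lemma gterm_iter (b : ℝ) (w : E) (k : ℕ) (x : E) :
    iteratedFDeriv ℝ k (gterm b w) x =
      (iteratedFDeriv ℝ k (fun t => b * Real.cosh t) ⟪w, x⟫).compContinuousLinearMap
        fun _ => innerSL ℝ w := by
  have := (innerSL ℝ w).iteratedFDeriv_comp_right (n := (k : WithTop ℕ∞))
    (f := fun t => b * Real.cosh t) (contDiff_const.mul Real.contDiff_cosh) x (i := k) le_rfl
  simpa [gterm] using this

lemma gterm_iterDeriv (b : ℝ) (k : ℕ) (t : ℝ) :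
    iteratedDeriv k (fun t => b * Real.cosh t) t = b * iteratedDeriv k Real.cosh t := by
  rw [iteratedDeriv_const_mul_field]

lemma gterm_norm (b : ℝ) (w : E) (k : ℕ) (x : E) (R : ℝ) (hx : ‖x‖ ≤ R) :
    ‖iteratedFDeriv ℝ k (gterm b w) x‖ ≤
      (k.factorial : ℝ) * (Real.exp ((R + 1) * ‖w‖) * |b|) := by
  rw [gterm_iter]
  refine (ContinuousMultilinearMap.norm_compContinuousLinearMap_le _ _).trans ?_
  rw [norm_iteratedFDeriv_eq_norm_iteratedDeriv, gterm_iterDeriv]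
  simp only [Finset.prod_const, Finset.card_univ, Fintype.card_fin, innerSL_apply_norm,
    Real.norm_eq_abs, abs_mul]
  have h1 : |iteratedDeriv k Real.cosh ⟪w, x⟫| ≤ Real.exp (R * ‖w‖) := by
    refine (aux_iter_cosh k _).trans (Real.exp_le_exp.2 ?_)
    refine (abs_real_inner_le_norm w x).trans ?_
    rw [mul_comm]
    gcongr
  have h2 : ‖w‖ ^ k ≤ (k.factorial : ℝ) * Real.exp ‖w‖ := by
    have := Real.pow_div_factorial_le_exp ‖w‖ (norm_nonneg _) k
    rw [div_le_iff₀ (by positivity)] at this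
    linarith
  calc |b| * |iteratedDeriv k Real.cosh ⟪w, x⟫| * ‖w‖ ^ k
      ≤ |b| * Real.exp (R * ‖w‖) * ((k.factorial : ℝ) * Real.exp ‖w‖) := by gcongr
    _ = _ := by rw [add_mul, one_mul, Real.exp_add]; ring

lemma gterm_two (b : ℝ) (w x v : E) :
    iteratedFDeriv ℝ 2 (gterm b w) x ![v, v] = b * Real.cosh ⟪w, x⟫ * ⟪w, v⟫ ^ 2 := by
  rw [gterm_iter, ContinuousMultilinearMap.compContinuousLinearMap_apply,
    iteratedFDeriv_apply_eq_iteratedDeriv_mul_prod, gterm_iterDeriv,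
    show iteratedDeriv 2 Real.cosh = Real.cosh from Real.iteratedDeriv_even_cosh 1]
  simp [Fin.prod_univ_two]
  ring

lemma series_taylor {ι : Type*} (b : ι → ℝ) (w : ι → E)
    (hdecay : ∀ c : ℝ, 0 < c → Summable (fun i => Real.exp (c * ‖w i‖) * |b i|)) :
    (∀ k x, Summable fun i => iteratedFDeriv ℝ k (gterm (b i) (w i)) x) ∧
    HasFTaylorSeriesUpTo ((⊤ : ℕ∞) : WithTop ℕ∞) (fun x => ∑' i, gterm (b i) (w i) x)
      (fun x k => ∑' i, iteratedFDeriv ℝ k (gterm (b i) (w i)) x) := by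
  have hu : ∀ (k : ℕ) (R : ℝ), 0 ≤ R → Summable fun i =>
      (k.factorial : ℝ) * (Real.exp ((R + 1) * ‖w i‖) * |b i|) := fun k R hR =>
    (hdecay (R + 1) (by linarith)).mul_left _
  have hs : ∀ k x, Summable fun i => iteratedFDeriv ℝ k (gterm (b i) (w i)) x := fun k x =>
    Summable.of_norm_bounded (hu k ‖x‖ (norm_nonneg _)) fun i => gterm_norm _ _ _ _ _ le_rfl
  refine ⟨hs, ?_⟩
  refine (hasFTaylorSeriesUpTo_top_iff' le_rfl).2 ⟨?_, ?_⟩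
  · intro x
    change (∑' i, iteratedFDeriv ℝ 0 (gterm (b i) (w i)) x) 0 = _
    rw [ContinuousMultilinearMap.tsum_eval (hs 0 x)]
    simp
  · intro m x
    have hx : x ∈ Metric.ball (0 : E) (‖x‖ + 1) := by simp
    have key := hasFDerivAt_tsum_of_isPreconnected (𝕜 := ℝ)
      (f := fun i y => iteratedFDeriv ℝ m (gterm (b i) (w i)) y)
      (f' := fun i y => (iteratedFDeriv ℝ (m + 1) (gterm (b i) (w i)) y).curryLeft)
      (hu (m + 1) (‖x‖ + 1) (by positivity))
      Metric.isOpen_ball (convex_ball (0 : E) (‖x‖ + 1)).isPreconnected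
      (fun i y _ => ((hasFTaylorSeriesUpTo_top_iff' le_rfl).1
        (gterm_contDiff (b i) (w i) (n := ((⊤ : ℕ∞) : WithTop ℕ∞))).ftaylorSeries).2 m y)
      (fun i y hy => by
        rw [ContinuousMultilinearMap.curryLeft_norm]
        exact gterm_norm _ _ _ _ _ (by simpa using (mem_ball_zero_iff.1 hy).le))
      hx (hs m x) hx
    have he : (∑' i, iteratedFDeriv ℝ (m + 1) (gterm (b i) (w i)) x).curryLeft =
        ∑' i, (iteratedFDeriv ℝ (m + 1) (gterm (b i) (w i)) x).curryLeft :=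
      (continuousMultilinearCurryLeftEquiv ℝ
        (fun _ : Fin (m + 1) => E) ℝ).toContinuousLinearEquiv.map_tsum
    exact key.congr_fderiv he.symm

lemma quad_lower [FiniteDimensional ℝ E] {ι : Type*} (T : Finset ι) (b : ι → ℝ) (w : ι → E)
    (hb : ∀ i ∈ T, 0 < b i) (hsp : Submodule.span ℝ (w '' T) = ⊤) :
    ∃ α : ℝ, 0 < α ∧ ∀ v : E, α * ‖v‖ ^ 2 ≤ ∑ i ∈ T, b i * ⟪w i, v⟫ ^ 2 := by
  have hpos : ∀ v : E, v ≠ 0 → 0 < ∑ i ∈ T, b i * ⟪w i, v⟫ ^ 2 := by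
    intro v hv
    have hnn : ∀ i ∈ T, 0 ≤ b i * ⟪w i, v⟫ ^ 2 := fun i hi =>
      mul_nonneg (hb i hi).le (sq_nonneg _)
    refine lt_of_le_of_ne (Finset.sum_nonneg hnn) fun h0 => hv ?_
    have hz := (Finset.sum_eq_zero_iff_of_nonneg hnn).1 h0.symm
    have hle : Submodule.span ℝ (w '' T) ≤ LinearMap.ker (innerSL ℝ v).toLinearMap := by
      rw [Submodule.span_le]
      rintro _ ⟨i, hi, rfl⟩
      have := hz i hi
      have h2 : ⟪w i, v⟫ = 0 := by
        rcases mul_eq_zero.1 this with h | h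
        · exact absurd h (hb i hi).ne'
        · exact pow_eq_zero_iff (two_ne_zero) |>.1 h
      simpa [real_inner_comm] using h2
    rw [hsp] at hle
    have : v ∈ LinearMap.ker (innerSL ℝ v).toLinearMap := hle trivial
    simpa using this
  rcases subsingleton_or_nontrivial E with hE | hE
  · refine ⟨1, one_pos, fun v => ?_⟩
    rw [Subsingleton.elim v 0]; simp
  · obtain ⟨v0, hv0, hmin⟩ := (isCompact_sphere (0 : E) 1).exists_isMinOn
      (NormedSpace.sphere_nonempty.2 zero_le_one)
      (f := fun v => ∑ i ∈ T, b i * ⟪w i, v⟫ ^ 2) (by fun_prop)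
    have hv0' : ‖v0‖ = 1 := by simpa using hv0
    refine ⟨_, hpos v0 (by rintro rfl; simp at hv0'), fun v => ?_⟩
    by_cases hv : v = 0
    · subst hv; simp
    have hn : ‖v‖ ≠ 0 := norm_ne_zero_iff.2 hv
    have hm := isMinOn_iff.1 hmin (‖v‖⁻¹ • v) (by simp [norm_smul, hn])
    have he : ∑ i ∈ T, b i * ⟪w i, ‖v‖⁻¹ • v⟫ ^ 2 =
        (∑ i ∈ T, b i * ⟪w i, v⟫ ^ 2) / ‖v‖ ^ 2 := by
      rw [Finset.sum_div]
      refine Finset.sum_congr rfl fun i _ => ?_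
      rw [real_inner_smul_right]
      field_simp
    rw [he, le_div_iff₀ (by positivity)] at hm
    exact hm

end

/-- Proposition 2.17 (single fibre): under the sign, symmetry, exponential decay and span
conditions on `ã`, the function `t̃(ξ) = -Σ_η ã_η cosh(η·ξ)` is smooth and hyperconvex:
its Hessian is bounded below by a positive multiple of the identity, uniformly in `ξ`. -/
theorem stmt11 (d : ℕ) (a : (Fin d → ℤ) → ℝ)
    (hneg : ∀ η : Fin d → ℤ, η ≠ 0 → a η ≤ 0)
    (heven : ∀ η : Fin d → ℤ, a η = a (-η))
    (hdecay : ∀ c : ℝ, 0 < c →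
      Summable (fun η : Fin d → ℤ => Real.exp (c * ‖zv η‖) * |a η|))
    (hspan : Submodule.span ℝ {w : Ed d | ∃ η : Fin d → ℤ, a η < 0 ∧ w = zv η} = ⊤) :
    ContDiff ℝ (⊤ : ℕ∞) (fun ξ : Ed d => -∑' η : Fin d → ℤ, a η * Real.cosh ⟪zv η, ξ⟫)
    ∧ ∃ α : ℝ, 0 < α ∧ ∀ ξ v : Ed d,
        α * ‖v‖ ^ 2 ≤ iteratedFDeriv ℝ 2
          (fun ξ' : Ed d => -∑' η : Fin d → ℤ, a η * Real.cosh ⟪zv η, ξ'⟫) ξ ![v, v] := by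
  have hF : (fun ξ : Ed d => -∑' η : Fin d → ℤ, a η * Real.cosh ⟪zv η, ξ⟫) =
      fun ξ => ∑' η : Fin d → ℤ, gterm (-a η) (zv η) ξ := by
    funext ξ
    rw [← tsum_neg]
    exact tsum_congr fun η => by simp [gterm]
  rw [hF]
  obtain ⟨hs, hT⟩ := series_taylor (fun η : Fin d → ℤ => -a η) zv (by simpa using hdecay)
  refine ⟨hT.contDiff, ?_⟩
  obtain ⟨B, hB, hBsp, hBli⟩ := exists_linearIndependent ℝ
    {w : Ed d | ∃ η : Fin d → ℤ, a η < 0 ∧ w = zv η}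
  have hBfin : B.Finite := hBli.setFinite
  have hB' : (hBfin.toFinset : Set (Ed d)) ⊆ zv '' {η : Fin d → ℤ | a η < 0} := by
    intro w hw
    obtain ⟨η, h1, h2⟩ := hB (by simpa using hw)
    exact ⟨η, h1, h2.symm⟩
  obtain ⟨T, hTn, hTB⟩ := Finset.subset_set_image_iff.1 hB'
  have hsp : Submodule.span ℝ (zv '' (T : Set (Fin d → ℤ))) = ⊤ := by
    rw [← hspan, ← hBsp, ← Finset.coe_image, hTB, hBfin.coe_toFinset]
  obtain ⟨α, hα, hq⟩ := quad_lower T (fun η => -a η) zv (fun η hη => neg_pos.2 (hTn hη)) hsp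
  refine ⟨α, hα, fun ξ v => (hq v).trans ?_⟩
  rw [← hT.eq_iteratedFDeriv (m := 2) (WithTop.coe_le_coe.2 (le_top : ((2 : ℕ) : ℕ∞) ≤ ⊤)) ξ,
    ContinuousMultilinearMap.tsum_eval (hs 2 ξ)]
  have hsv := (ContinuousMultilinearMap.hasSum_eval (hs 2 ξ).hasSum ![v, v]).summable
  have hnn : ∀ η : Fin d → ℤ, 0 ≤ iteratedFDeriv ℝ 2 (gterm (-a η) (zv η)) ξ ![v, v] := by
    intro η
    rw [gterm_two]
    by_cases h : η = 0
    · have : (zv η : Ed d) = 0 := by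
        subst h; ext i; simp [zv]
      simp [this]
    · have := hneg η h
      exact mul_nonneg (mul_nonneg (by linarith) (Real.cosh_pos _).le) (sq_nonneg _)
  refine le_trans ?_ (hsv.sum_le_tsum T fun η _ => hnn η)
  refine Finset.sum_le_sum fun η hη => ?_
  rw [gterm_two]
  have h1 : 0 < -a η := neg_pos.2 (hTn hη)
  exact mul_le_mul_of_nonneg_right (le_mul_of_one_le_right h1.le (Real.one_le_cosh _))
    (sq_nonneg _)
end
end

section
/- Let ã : ℤ^d × ℝ^d → ℝ with each ã_η := ã(η,·) ∈ C^∞(ℝ^d), satisfying for every x ∈ ℝ^d: ã_η(x) ≤ 0 for η ≠ 0, ã_η(x) = ã_{−η}(x), and span{η : ã_η(x) < 0} = ℝ^d; and assume for every c > 0, every compact K ⊂ ℝ^d and every multi-index β that Σ_{η∈ℤ^d} e^{c|η|} sup_{x∈K} |∂_x^β ã_η(x)| < ∞. Let V₀ ∈ C^∞(ℝ^d, ℝ). Then h̃₀(x,ξ) := −Σ_{η∈ℤ^d} ã_η(x) cosh(η·ξ) − V₀(x) is a smooth function on ℝ^{2d} which is even and strictly convex in ξ for each x, and h̃₀ is hyperregular: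 the fibre derivative (x,ξ) ↦ (x, ∇_ξ h̃₀(x,ξ)) is a C^∞ diffeomorphism of ℝ^{2d}. -/
open scoped RealInnerProductSpace Classical
noncomputable section

theorem tsumLoc_hasFDerivAt {ι E F : Type} [NormedAddCommGroup E] [NormedSpace ℝ E]
    [NormedAddCommGroup F] [NormedSpace ℝ F] [CompleteSpace F] (f : ι → E → F)
    (hf : ∀ i, ContDiff ℝ (⊤ : ℕ∞) (f i))
    (hb : ∀ (n : ℕ) (R : ℝ), 0 < R → ∃ u : ι → ℝ, Summable u ∧
      ∀ i, ∀ x ∈ Metric.ball (0 : E) R, ‖iteratedFDeriv ℝ n (f i) x‖ ≤ u i) (x : E) :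
    HasFDerivAt (fun y => ∑' i, f i y) (∑' i, fderiv ℝ (f i) x) x ∧
    Summable (fun i => fderiv ℝ (f i) x) ∧ Summable (fun i => f i x) := by
  have hR : (0 : ℝ) < ‖x‖ + 1 := by positivity
  have hx : x ∈ Metric.ball (0 : E) (‖x‖ + 1) := by simp
  obtain ⟨u, hu, hub⟩ := hb 1 _ hR
  obtain ⟨w, hw, hwb⟩ := hb 0 _ hR
  have h0 : Summable (fun i => f i x) := by
    refine Summable.of_norm_bounded hw fun i => ?_
    simpa using hwb i x hx
  have h1 : ∀ i, ∀ y ∈ Metric.ball (0 : E) (‖x‖ + 1), ‖fderiv ℝ (f i) y‖ ≤ u i := by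
    intro i y hy
    rw [← norm_iteratedFDeriv_one]
    exact hub i y hy
  refine ⟨hasFDerivAt_tsum_of_isPreconnected hu Metric.isOpen_ball
    (convex_ball (0 : E) _).isPreconnected (fun i y _ => ?_) h1 hx h0 hx, 
    Summable.of_norm_bounded hu fun i => h1 i x hx, h0⟩
  exact ((hf i).differentiable (by simp) y).hasFDerivAt

theorem tsumLoc_contDiff_nat {ι E : Type} [NormedAddCommGroup E] [NormedSpace ℝ E] (n : ℕ) :
    ∀ {F : Type} [NormedAddCommGroup F] [NormedSpace ℝ F] [CompleteSpace F] (f : ι → E → F)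
    (_ : ∀ i, ContDiff ℝ (⊤ : ℕ∞) (f i))
    (_ : ∀ (n : ℕ) (R : ℝ), 0 < R → ∃ u : ι → ℝ, Summable u ∧
      ∀ i, ∀ x ∈ Metric.ball (0 : E) R, ‖iteratedFDeriv ℝ n (f i) x‖ ≤ u i),
    ContDiff ℝ n (fun y => ∑' i, f i y) := by
  induction n with
  | zero =>
    intro F _ _ _ f hf hb
    have : Differentiable ℝ (fun y => ∑' i, f i y) :=
      fun x => (tsumLoc_hasFDerivAt f hf hb x).1.differentiableAt
    exact contDiff_zero.2 this.continuous
  | succ n ih =>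
    intro F _ _ _ f hf hb
    have h := tsumLoc_hasFDerivAt f hf hb
    push_cast
    rw [contDiff_succ_iff_fderiv]
    refine ⟨fun x => (h x).1.differentiableAt, by simp, ?_⟩
    have e : fderiv ℝ (fun y => ∑' i, f i y) = fun x => ∑' i, fderiv ℝ (f i) x := by
      ext1 x
      exact (h x).1.fderiv
    rw [e]
    apply ih
    · intro i
      exact (hf i).fderiv_right (by simp)
    · intro k R hR
      obtain ⟨u, hu, hub⟩ := hb (k + 1) R hR
      refine ⟨u, hu, fun i x hx => ?_⟩
      rw [norm_iteratedFDeriv_fderiv]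
      exact hub i x hx

theorem tsumLoc_contDiff {ι E F : Type} [NormedAddCommGroup E] [NormedSpace ℝ E]
    [NormedAddCommGroup F] [NormedSpace ℝ F] [CompleteSpace F] (f : ι → E → F)
    (hf : ∀ i, ContDiff ℝ (⊤ : ℕ∞) (f i))
    (hb : ∀ (n : ℕ) (R : ℝ), 0 < R → ∃ u : ι → ℝ, Summable u ∧
      ∀ i, ∀ x ∈ Metric.ball (0 : E) R, ‖iteratedFDeriv ℝ n (f i) x‖ ≤ u i) :
    ContDiff ℝ (⊤ : ℕ∞) (fun y => ∑' i, f i y) :=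
  contDiff_infty.2 fun n => tsumLoc_contDiff_nat n f hf hb

theorem cosh_le_exp_abs' (t : ℝ) : Real.cosh t ≤ Real.exp |t| := by
  rw [← Real.cosh_abs, Real.cosh_eq]
  have : Real.exp (-|t|) ≤ Real.exp |t| := Real.exp_le_exp.2 (by linarith [abs_nonneg t])
  linarith

theorem abs_sinh_le_exp_abs' (t : ℝ) : |Real.sinh t| ≤ Real.exp |t| := by
  refine le_trans ?_ (cosh_le_exp_abs' t)
  rw [Real.abs_sinh, ← Real.cosh_abs]
  exact (Real.sinh_lt_cosh _).le

theorem iteratedDeriv_cosh_bound (n : ℕ) (t : ℝ) :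
    |iteratedDeriv n Real.cosh t| ≤ Real.exp |t| := by
  have h : iteratedDeriv n Real.cosh = Real.cosh ∨ iteratedDeriv n Real.cosh = Real.sinh := by
    obtain ⟨k, hk⟩ := Nat.even_or_odd' n
    rcases hk with rfl | rfl
    · exact Or.inl (Real.iteratedDeriv_even_cosh k)
    · exact Or.inr (Real.iteratedDeriv_odd_cosh k)
  rcases h with h | h <;> rw [h]
  · rw [abs_of_pos (Real.cosh_pos t)]
    exact cosh_le_exp_abs' t
  · exact abs_sinh_le_exp_abs' t

theorem norm_iteratedFDeriv_comp_clm_le {E F G : Type} [NormedAddCommGroup E] [NormedSpace ℝ E]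
    [NormedAddCommGroup F] [NormedSpace ℝ F] [NormedAddCommGroup G] [NormedSpace ℝ G]
    (g : G →L[ℝ] E) (f : E → F) (hf : ContDiff ℝ (⊤ : ℕ∞) f) (x : G) (n : ℕ) :
    ‖iteratedFDeriv ℝ n (fun y => f (g y)) x‖ ≤ ‖iteratedFDeriv ℝ n f (g x)‖ * ‖g‖ ^ n := by
  have := g.iteratedFDeriv_comp_right hf x (i := n) (by exact_mod_cast le_top)
  change ‖iteratedFDeriv ℝ n (f ∘ g) x‖ ≤ _
  rw [this]
  refine (ContinuousMultilinearMap.norm_compContinuousLinearMap_le _ _).trans ?_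
  simp

def Lz {d : ℕ} (η : Fin d → ℤ) : Ed d × Ed d →L[ℝ] ℝ :=
  (innerSL ℝ (zv η)).comp (ContinuousLinearMap.snd ℝ (Ed d) (Ed d))

theorem Lz_apply {d : ℕ} (η : Fin d → ℤ) (p : Ed d × Ed d) : Lz η p = ⟪zv η, p.2⟫ := rfl

theorem Lz_norm {d : ℕ} (η : Fin d → ℤ) : ‖Lz η‖ ≤ ‖zv η‖ := by
  refine ContinuousLinearMap.opNorm_le_bound _ (norm_nonneg _) fun p => ?_
  rw [Lz_apply]
  exact (norm_inner_le_norm _ _).trans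
    (mul_le_mul_of_nonneg_left (norm_snd_le p) (norm_nonneg _))

theorem term_bound {d : ℕ} (a : Ed d → ℝ) (ha : ContDiff ℝ (⊤ : ℕ∞) a) (η : Fin d → ℤ)
    (n : ℕ) (R : ℝ) (_hR : 0 < R) (M : ℕ → ℝ)
    (hM : ∀ k, ∀ x ∈ Metric.closedBall (0 : Ed d) R, ‖iteratedFDeriv ℝ k a x‖ ≤ M k)
    (p : Ed d × Ed d) (hp : p ∈ Metric.ball (0 : Ed d × Ed d) R) :
    ‖iteratedFDeriv ℝ n (fun p : Ed d × Ed d => a p.1 * Real.cosh ⟪zv η, p.2⟫) p‖ ≤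
      ∑ k ∈ Finset.range (n + 1), (n.choose k : ℝ) * (n - k).factorial *
        (Real.exp ((R + 1) * ‖zv η‖) * M k) := by
  have hpn : ‖p‖ < R := by simpa using hp
  have h1 : ‖p.1‖ ≤ R := (norm_fst_le p).trans hpn.le
  have h2 : ‖p.2‖ ≤ R := (norm_snd_le p).trans hpn.le
  have hA : ContDiff ℝ (⊤ : ℕ∞) (fun p : Ed d × Ed d => a p.1) := ha.comp contDiff_fst
  have hC : ContDiff ℝ (⊤ : ℕ∞) (fun p : Ed d × Ed d => Real.cosh (Lz η p)) :=
    Real.contDiff_cosh.comp (Lz η).contDiff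
  refine (norm_iteratedFDeriv_mul_le (n := n) hA hC p (by exact_mod_cast le_top)).trans ?_
  refine Finset.sum_le_sum fun k hk => ?_
  have b1 : ‖iteratedFDeriv ℝ k (fun p : Ed d × Ed d => a p.1) p‖ ≤ M k := by
    refine (norm_iteratedFDeriv_comp_clm_le (ContinuousLinearMap.fst ℝ (Ed d) (Ed d)) a ha p k).trans
      (le_trans ?_ (hM k p.1 (by simpa using h1)))
    exact mul_le_of_le_one_right (norm_nonneg _)
      (pow_le_one₀ (norm_nonneg _) (ContinuousLinearMap.norm_fst_le ℝ (Ed d) (Ed d)))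
  have b2 : ‖iteratedFDeriv ℝ (n - k) (fun p : Ed d × Ed d => Real.cosh (Lz η p)) p‖ ≤
      (n - k).factorial * Real.exp ((R + 1) * ‖zv η‖) := by
    refine (norm_iteratedFDeriv_comp_clm_le (Lz η) Real.cosh Real.contDiff_cosh p (n - k)).trans ?_
    rw [norm_iteratedFDeriv_eq_norm_iteratedDeriv]
    have c1 : ‖iteratedDeriv (n - k) Real.cosh (Lz η p)‖ ≤ Real.exp (R * ‖zv η‖) := by
      refine (iteratedDeriv_cosh_bound _ _).trans (Real.exp_le_exp.2 ?_)
      rw [Lz_apply]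
      refine (abs_real_inner_le_norm _ _).trans ?_
      rw [mul_comm]
      gcongr
    have c2 : ‖Lz η‖ ^ (n - k) ≤ (n - k).factorial * Real.exp (‖zv η‖) := by
      refine (pow_le_pow_left₀ (norm_nonneg _) (Lz_norm η) _).trans ?_
      have := Real.pow_div_factorial_le_exp ‖zv η‖ (norm_nonneg _) (n - k)
      rw [div_le_iff₀ (by positivity)] at this
      linarith
    calc _ ≤ Real.exp (R * ‖zv η‖) * ((n - k).factorial * Real.exp (‖zv η‖)) := by gcongr
      _ = _ := by rw [add_mul, Real.exp_add, one_mul]; ring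
  have hM0 : 0 ≤ M k := (norm_nonneg _).trans b1
  calc _ ≤ (n.choose k : ℝ) * M k * ((n - k).factorial * Real.exp ((R + 1) * ‖zv η‖)) := by
        gcongr
    _ = _ := by ring

theorem sum_hyp {d : ℕ} (a : (Fin d → ℤ) → Ed d → ℝ)
    (hsm : ∀ η : Fin d → ℤ, ContDiff ℝ (⊤ : ℕ∞) (a η))
    (hdecay : ∀ c : ℝ, 0 < c → ∀ K : Set (Ed d), IsCompact K → ∀ n : ℕ,
      ∃ M : (Fin d → ℤ) → ℝ,
        (∀ η : Fin d → ℤ, ∀ x ∈ K, ‖iteratedFDeriv ℝ n (a η) x‖ ≤ M η) ∧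
        Summable (fun η : Fin d → ℤ => Real.exp (c * ‖zv η‖) * M η)) :
    ∀ (n : ℕ) (R : ℝ), 0 < R → ∃ u : (Fin d → ℤ) → ℝ, Summable u ∧
      ∀ η, ∀ p ∈ Metric.ball (0 : Ed d × Ed d) R,
      ‖iteratedFDeriv ℝ n (fun p : Ed d × Ed d => a η p.1 * Real.cosh ⟪zv η, p.2⟫) p‖ ≤ u η := by
  intro n R hR
  choose M hM hMs using fun k => hdecay (R + 1) (by positivity)
    (Metric.closedBall (0 : Ed d) R) (isCompact_closedBall _ _) k
  refine ⟨_, ?_, fun η p hp => term_bound (a η) (hsm η) η n R hR (fun k => M k η)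
    (fun k => hM k η) p hp⟩
  exact summable_sum fun k _ => (hMs k).mul_left _

theorem strictConvexOn_cosh' : StrictConvexOn ℝ Set.univ Real.cosh := by
  refine StrictMono.strictConvexOn_univ_of_deriv Real.continuous_cosh ?_
  rw [Real.deriv_cosh]
  exact Real.sinh_strictMono

theorem sinh_mono_sq (s t : ℝ) : (s - t) ^ 2 ≤ (Real.sinh s - Real.sinh t) * (s - t) := by
  have hm := Real.sinh_sub_id_strictMono.monotone
  rcases le_total s t with h | h
  · have := hm h
    simp only at this
    nlinarith
  · have := hm h
    simp only at this
    nlinarith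

theorem cosh_quad (t : ℝ) : 1 + t ^ 2 / 2 ≤ Real.cosh t := by
  have h : Real.cosh t = 1 + 2 * Real.sinh (t / 2) ^ 2 := by
    have h1 := Real.cosh_two_mul (t / 2)
    have h2 := Real.cosh_sq (t / 2)
    rw [show 2 * (t / 2) = t by ring] at h1
    linarith
  have h2 := sinh_mono_sq (t / 2) 0
  have h3 : (t / 2) ^ 2 ≤ Real.sinh (t / 2) ^ 2 := by
    simp only [Real.sinh_zero, sub_zero] at h2
    nlinarith [sq_nonneg (Real.sinh (t / 2) - t / 2)]
  rw [h]
  nlinarith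

theorem zv_zero {d : ℕ} : zv (0 : Fin d → ℤ) = 0 := by
  ext i
  simp [zv]

theorem exists_inner_ne {d : ℕ} (a : (Fin d → ℤ) → ℝ)
    (hspan : Submodule.span ℝ {w : Ed d | ∃ η : Fin d → ℤ, a η < 0 ∧ w = zv η} = ⊤)
    (v : Ed d) (hv : v ≠ 0) : ∃ η, a η < 0 ∧ ⟪zv η, v⟫ ≠ 0 := by
  by_contra! hcon
  apply hv
  have hle : Submodule.span ℝ {w : Ed d | ∃ η : Fin d → ℤ, a η < 0 ∧ w = zv η} ≤
      LinearMap.ker (innerSL ℝ v).toLinearMap := by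
    rw [Submodule.span_le]
    rintro w ⟨η, hη, rfl⟩
    have := hcon η hη
    rw [real_inner_comm] at this
    simpa using this
  rw [hspan] at hle
  have : v ∈ LinearMap.ker (innerSL ℝ v).toLinearMap := hle trivial
  simpa using this

theorem quad_lower_s12 {d : ℕ} (a : (Fin d → ℤ) → ℝ)
    (hneg : ∀ η : Fin d → ℤ, η ≠ 0 → a η ≤ 0)
    (hspan : Submodule.span ℝ {w : Ed d | ∃ η : Fin d → ℤ, a η < 0 ∧ w = zv η} = ⊤)
    (hs : ∀ c : ℝ, 0 < c → Summable (fun η => Real.exp (c * ‖zv η‖) * |a η|)) :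
    ∃ c : ℝ, 0 < c ∧ ∀ v : Ed d, Summable (fun η => -a η * ⟪zv η, v⟫ ^ 2) ∧
      c * ‖v‖ ^ 2 ≤ ∑' η, -a η * ⟪zv η, v⟫ ^ 2 := by
  have hnn : ∀ (v : Ed d) η, 0 ≤ -a η * ⟪zv η, v⟫ ^ 2 := by
    intro v η
    by_cases h : η = 0
    · simp [h, zv_zero]
    · have := hneg η h
      have : 0 ≤ -a η := by linarith
      positivity
  have hbd : ∀ η, ∀ v ∈ Metric.sphere (0 : Ed d) 1,
      ‖-a η * ⟪zv η, v⟫ ^ 2‖ ≤ 2 * (Real.exp (1 * ‖zv η‖) * |a η|) := by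
    intro η v hv
    have hv1 : ‖v‖ = 1 := by simpa using hv
    have h1 : |⟪zv η, v⟫| ≤ ‖zv η‖ := by simpa [hv1] using abs_real_inner_le_norm (zv η) v
    have h2 : ⟪zv η, v⟫ ^ 2 ≤ ‖zv η‖ ^ 2 := sq_le_sq' (abs_le.1 h1).1 (abs_le.1 h1).2
    have h3 := Real.quadratic_le_exp_of_nonneg (norm_nonneg (zv η))
    have h4 : ⟪zv η, v⟫ ^ 2 ≤ 2 * Real.exp ‖zv η‖ := by nlinarith [norm_nonneg (zv η)]
    rw [norm_mul, norm_neg, Real.norm_eq_abs, Real.norm_eq_abs, abs_of_nonneg (sq_nonneg ⟪zv η, v⟫), one_mul]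
    nlinarith [abs_nonneg (a η)]
  have hsum1 := (hs 1 one_pos).mul_left 2
  have hsph : ∀ v ∈ Metric.sphere (0 : Ed d) 1, Summable (fun η => -a η * ⟪zv η, v⟫ ^ 2) :=
    fun v hv => Summable.of_norm_bounded hsum1 fun η => hbd η v hv
  have hcont : ContinuousOn (fun v : Ed d => ∑' η, -a η * ⟪zv η, v⟫ ^ 2)
      (Metric.sphere (0 : Ed d) 1) :=
    continuousOn_tsum (fun η => by fun_prop) hsum1 hbd
  obtain ⟨c, hc, hcb⟩ := (isCompact_sphere (0 : Ed d) 1).exists_forall_le' hcont (a := 0) (by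
    intro v hv
    have hv0 : v ≠ 0 := by
      rintro rfl
      simp at hv
    obtain ⟨η, hη, hi⟩ := exists_inner_ne a hspan v hv0
    refine (hsph v hv).tsum_pos (hnn v) η ?_
    have : 0 < -a η := by linarith
    positivity)
  refine ⟨c, hc, fun v => ?_⟩
  by_cases hv : v = 0
  · subst hv
    simp [summable_zero]
  have hvn : ‖v‖ ≠ 0 := by simpa using hv
  set u : Ed d := ‖v‖⁻¹ • v with hu
  have hus : u ∈ Metric.sphere (0 : Ed d) 1 := by
    simp [hu, norm_smul, hvn]
  have hvu : v = ‖v‖ • u := by simp [hu, smul_smul, hvn]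
  have he : (fun η => -a η * ⟪zv η, v⟫ ^ 2) = fun η => ‖v‖ ^ 2 * (-a η * ⟪zv η, u⟫ ^ 2) := by
    ext η
    have : ⟪zv η, v⟫ = ‖v‖ * ⟪zv η, u⟫ := by
      rw [hu, inner_smul_right]
      field_simp
    rw [this]
    ring
  rw [he, tsum_mul_left]
  refine ⟨(hsph u hus).mul_left _, ?_⟩
  have := hcb u hus
  rw [mul_comm]
  gcongr

theorem grad_hasSum {d : ℕ} (a : (Fin d → ℤ) → Ed d → ℝ) (V₀ : Ed d → ℝ)
    (hsm : ∀ η : Fin d → ℤ, ContDiff ℝ (⊤ : ℕ∞) (a η))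
    (hdecay : ∀ c : ℝ, 0 < c → ∀ K : Set (Ed d), IsCompact K → ∀ n : ℕ,
      ∃ M : (Fin d → ℤ) → ℝ,
        (∀ η : Fin d → ℤ, ∀ x ∈ K, ‖iteratedFDeriv ℝ n (a η) x‖ ≤ M η) ∧
        Summable (fun η : Fin d → ℤ => Real.exp (c * ‖zv η‖) * M η))
    (h0 : Ed d → Ed d → ℝ)
    (hh0 : ∀ x ξ : Ed d,
      h0 x ξ = -(∑' η : Fin d → ℤ, a η x * Real.cosh ⟪zv η, ξ⟫) - V₀ x) (x ξ : Ed d) :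
    Summable (fun η => a η x * Real.cosh ⟪zv η, ξ⟫) ∧ DifferentiableAt ℝ (h0 x) ξ ∧
    ∀ v, HasSum (fun η => -a η x * Real.sinh ⟪zv η, ξ⟫ * ⟪zv η, v⟫) (fderiv ℝ (h0 x) ξ v) := by
  have hf : ∀ η, ContDiff ℝ (⊤ : ℕ∞)
      (fun p : Ed d × Ed d => a η p.1 * Real.cosh ⟪zv η, p.2⟫) := fun η =>
    ((hsm η).comp contDiff_fst).mul (Real.contDiff_cosh.comp (Lz η).contDiff)
  obtain ⟨h1, h2, h3⟩ := tsumLoc_hasFDerivAt _ hf (sum_hyp a hsm hdecay) (x, ξ)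
  have hpair : HasFDerivAt (fun ζ : Ed d => (x, ζ)) (ContinuousLinearMap.inr ℝ (Ed d) (Ed d)) ξ :=
    hasFDerivAt_prodMk_right x ξ
  have h4 := ((h1.comp ξ hpair).neg).sub_const (V₀ x)
  have h5 : HasFDerivAt (h0 x) (-((∑' η, fderiv ℝ
      (fun p : Ed d × Ed d => a η p.1 * Real.cosh ⟪zv η, p.2⟫) (x, ξ)).comp
      (ContinuousLinearMap.inr ℝ (Ed d) (Ed d)))) ξ := by
    refine h4.congr_of_eventuallyEq (Filter.Eventually.of_forall fun ζ => ?_)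
    rw [hh0]
    rfl
  refine ⟨h3, h5.differentiableAt, fun v => ?_⟩
  rw [h5.fderiv]
  have h6 := ((ContinuousLinearMap.apply ℝ ℝ ((0 : Ed d), v)).hasSum h2.hasSum).neg
  convert! h6 using 1
  · ext η
    have e1 : HasFDerivAt (fun ζ : Ed d => a η x * Real.cosh ⟪zv η, ζ⟫)
      ((fderiv ℝ (fun p : Ed d × Ed d => a η p.1 * Real.cosh ⟪zv η, p.2⟫) (x, ξ)).comp
        (ContinuousLinearMap.inr ℝ (Ed d) (Ed d))) ξ :=
      (((hf η).differentiable (by simp) (x, ξ)).hasFDerivAt).comp ξ hpair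
    have e2 : HasFDerivAt (fun ζ : Ed d => a η x * Real.cosh ⟪zv η, ζ⟫)
      (a η x • (Real.sinh ⟪zv η, ξ⟫ • innerSL ℝ (zv η))) ξ :=
      (((innerSL ℝ (zv η)).hasFDerivAt (x := ξ)).cosh).const_mul (a η x)
    have e3 := congrArg (fun L => L v) (e1.unique e2)
    simp only [ContinuousLinearMap.comp_apply, ContinuousLinearMap.inr_apply,
      smul_apply, smul_eq_mul, innerSL_apply_apply] at e3
    simp only [ContinuousLinearMap.apply_apply]
    rw [e3]
    ring

theorem fibre_bijective {d : ℕ} (h : Ed d → ℝ) (hd : Differentiable ℝ h) (c : ℝ) (hc : 0 < c)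
    (hmono : ∀ ξ ζ : Ed d, c * ‖ξ - ζ‖ ^ 2 ≤ ⟪gradient h ξ - gradient h ζ, ξ - ζ⟫)
    (hco : ∀ ξ, h 0 + c / 2 * ‖ξ‖ ^ 2 ≤ h ξ) : Function.Bijective (gradient h) := by
  constructor
  · intro ξ ζ he
    have := hmono ξ ζ
    rw [he, sub_self, inner_zero_left] at this
    have h2 : ‖ξ - ζ‖ ^ 2 ≤ 0 := by
      by_contra! hlt
      have := mul_pos hc hlt
      linarith
    have h3 : ‖ξ - ζ‖ = 0 := by
      have := le_antisymm h2 (sq_nonneg _)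
      exact pow_eq_zero_iff (two_ne_zero) |>.1 this
    exact sub_eq_zero.1 (norm_eq_zero.1 h3)
  · intro w
    have hcont : Continuous (fun ξ => h ξ - ⟪w, ξ⟫) := hd.continuous.sub (by fun_prop)
    obtain ⟨ξ, hξ⟩ := hcont.exists_forall_le' (0 : Ed d) (by
      have hev : ∀ᶠ ξ : Ed d in Filter.cocompact (Ed d), 2 * ‖w‖ / c ≤ ‖ξ‖ :=
        (tendsto_norm_cocompact_atTop (E := Ed d)).eventually (Filter.eventually_ge_atTop _)
      filter_upwards [hev] with ξ hξ
      have h1 := hco ξ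
      have h2 := real_inner_le_norm w ξ
      rw [div_le_iff₀ hc] at hξ
      simp only [inner_zero_right, sub_zero]
      nlinarith [norm_nonneg ξ])
    refine ⟨ξ, ?_⟩
    have hfd : HasFDerivAt (fun ξ => h ξ - ⟪w, ξ⟫) (fderiv ℝ h ξ - innerSL ℝ w) ξ :=
      (hd ξ).hasFDerivAt.sub (innerSL ℝ w).hasFDerivAt
    have hmin : IsLocalMin (fun ξ => h ξ - ⟪w, ξ⟫) ξ := Filter.Eventually.of_forall hξ
    have hz := hmin.hasFDerivAt_eq_zero hfd
    have hz2 : fderiv ℝ h ξ = innerSL ℝ w := sub_eq_zero.1 hz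
    refine ext_inner_right ℝ fun v => ?_
    rw [gradient, InnerProductSpace.toDual_symm_apply, hz2]
    rfl

theorem diffeo_of_mono {d : ℕ} (h : Ed d → Ed d → ℝ)
    (hsm : ContDiff ℝ (⊤ : ℕ∞) (fun p : Ed d × Ed d => h p.1 p.2))
    (hm : ∀ x, ∃ c : ℝ, 0 < c ∧ 
      (∀ ξ ζ : Ed d, c * ‖ξ - ζ‖ ^ 2 ≤ ⟪gradient (h x) ξ - gradient (h x) ζ, ξ - ζ⟫) ∧
      (∀ ξ, h x 0 + c / 2 * ‖ξ‖ ^ 2 ≤ h x ξ)) :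
    ∃ F : (Ed d × Ed d) ≃ (Ed d × Ed d),
        (∀ p : Ed d × Ed d, F p = (p.1, gradient (h p.1) p.2)) ∧
        ContDiff ℝ (⊤ : ℕ∞) ⇑F ∧ ContDiff ℝ (⊤ : ℕ∞) ⇑F.symm := by
  have hd : ∀ x, Differentiable ℝ (h x) := fun x =>
    (hsm.comp (contDiff_prodMk_right x)).differentiable (by simp)
  let f : Ed d × Ed d → Ed d × Ed d := fun p => (p.1, gradient (h p.1) p.2)
  have hbij : Function.Bijective f := by
    have hb : ∀ x, Function.Bijective (gradient (h x)) := fun x => by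
      obtain ⟨c, hc, h1, h2⟩ := hm x
      exact fibre_bijective (h x) (hd x) c hc h1 h2
    constructor
    · rintro ⟨x, ξ⟩ ⟨y, ζ⟩ he
      simp only [f, Prod.mk.injEq] at he
      obtain ⟨rfl, he⟩ := he
      rw [(hb x).1 he]
    · rintro ⟨x, w⟩
      obtain ⟨ξ, hξ⟩ := (hb x).2 w
      exact ⟨(x, ξ), by simp only [f, hξ]⟩
  have hG : ContDiff ℝ (⊤ : ℕ∞) (fun p : Ed d × Ed d => gradient (h p.1) p.2) := by
    have h1 : ContDiff ℝ (⊤ : ℕ∞) (fun p : Ed d × Ed d => fderiv ℝ (h p.1) p.2) :=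
      ContDiff.fderiv (m := ((⊤ : ℕ∞) : WithTop ℕ∞)) (f := fun p : Ed d × Ed d => h p.1)
        (hsm.comp (((contDiff_fst).comp contDiff_fst).prodMk contDiff_snd)) contDiff_snd (by simp)
    exact (InnerProductSpace.toDual ℝ (Ed d)).symm.contDiff.comp h1
  have hf : ContDiff ℝ (⊤ : ℕ∞) f := contDiff_fst.prodMk hG
  have hinj : ∀ p, Function.Injective (fderiv ℝ f p) := by
    rintro ⟨x, ξ⟩
    rw [injective_iff_map_eq_zero]
    rintro ⟨u, v⟩ huv
    have hfp : HasFDerivAt f (fderiv ℝ f (x, ξ)) (x, ξ) :=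
      (hf.differentiable (by simp) _).hasFDerivAt
    have hu : u = 0 := by
      have e1 : HasFDerivAt (fun p => (f p).1)
        ((ContinuousLinearMap.fst ℝ (Ed d) (Ed d)).comp (fderiv ℝ f (x, ξ))) (x, ξ) := hfp.fst
      have e2 : HasFDerivAt (fun p => (f p).1) (ContinuousLinearMap.fst ℝ (Ed d) (Ed d)) (x, ξ) :=
        hasFDerivAt_fst
      have e3 := congrArg (fun L => L (u, v)) (e1.unique e2)
      simp only [ContinuousLinearMap.comp_apply, huv] at e3
      simpa using e3.symm
    subst hu
    obtain ⟨c, hc, h1, -⟩ := hm x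
    -- the derivative along `v` of the gradient vanishes
    have hline : HasDerivAt (fun t : ℝ => ((x, ξ + t • v) : Ed d × Ed d)) ((0 : Ed d), v) 0 := by
      have : HasDerivAt (fun t : ℝ => ξ + t • v) v 0 := by
        simpa using ((hasDerivAt_id (0 : ℝ)).smul_const v).const_add ξ
      exact (hasDerivAt_const _ _).prodMk this
    have hfp' : HasFDerivAt f (fderiv ℝ f (x, ξ)) (x, ξ + (0 : ℝ) • v) := by simpa using hfp
    have hder := hfp'.comp_hasDerivAt (0 : ℝ) hline
    rw [huv] at hder
    have hder2 : HasDerivAt (fun t : ℝ => ⟪gradient (h x) (ξ + t • v), v⟫) 0 0 := by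
      have := ((innerSL ℝ v).comp (ContinuousLinearMap.snd ℝ (Ed d) (Ed d))).hasFDerivAt.comp_hasDerivAt
        (0 : ℝ) hder
      simp only [map_zero] at this
      refine this.congr_of_eventuallyEq (Filter.Eventually.of_forall fun t => ?_)
      simp [f, real_inner_comm]
    have hlim := hder2.tendsto_slope_zero_right
    have hge : c * ‖v‖ ^ 2 ≤ 0 := by
      refine ge_of_tendsto hlim ?_
      filter_upwards [self_mem_nhdsWithin] with t ht
      have ht' : 0 < t := ht
      have := h1 (ξ + t • v) ξ
      rw [add_sub_cancel_left, norm_smul, inner_smul_right, Real.norm_eq_abs, mul_pow, sq_abs,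
        inner_sub_left] at this
      simp only [zero_add, zero_smul, add_zero, smul_eq_mul]
      rw [← mul_le_mul_iff_right₀ ht', ← mul_le_mul_iff_right₀ ht']
      field_simp
      nlinarith
    have hv : ‖v‖ ^ 2 ≤ 0 := by
      by_contra! hlt
      have := mul_pos hc hlt
      linarith
    have h3 : ‖v‖ = 0 := by
      have := le_antisymm hv (sq_nonneg _)
      exact pow_eq_zero_iff (two_ne_zero) |>.1 this
    rw [norm_eq_zero.1 h3]
    rfl
  let f' : Ed d × Ed d → (Ed d × Ed d) ≃L[ℝ] (Ed d × Ed d) := fun p =>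
    (LinearEquiv.ofInjectiveEndo (fderiv ℝ f p).toLinearMap (hinj p)).toContinuousLinearEquiv
  have hf'e : ∀ p, ((f' p : (Ed d × Ed d) →L[ℝ] (Ed d × Ed d))) = fderiv ℝ f p := by
    intro p
    refine ContinuousLinearMap.ext fun v => ?_
    rfl
  have hopen : IsOpenMap f := by
    refine isOpenMap_of_hasStrictFDerivAt_equiv (f' := f') fun p => ?_
    rw [hf'e]
    exact hf.contDiffAt.hasStrictFDerivAt (by simp)
  let e := Equiv.ofBijective f hbij
  let H : (Ed d × Ed d) ≃ₜ (Ed d × Ed d) := e.toHomeomorphOfContinuousOpen hf.continuous hopen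
  refine ⟨e, fun p => rfl, hf, ?_⟩
  have := H.contDiff_symm (f₀' := f') (n := ((⊤ : ℕ∞) : WithTop ℕ∞)) (fun p => by
    rw [hf'e]
    exact (hf.differentiable (by simp) p).hasFDerivAt) hf
  exact this

/-- Corollary 2.18: the Hamilton function `h̃₀(x,ξ) = -Σ_η ã_η(x) cosh(η·ξ) - V₀(x)` is
smooth, even and strictly convex in each fibre, and hyperregular: its fibre derivative
`(x,ξ) ↦ (x, ∇_ξ h̃₀(x,ξ))` is a smooth diffeomorphism of `ℝ^{2d}`. -/
theorem stmt12 (d : ℕ) (a : (Fin d → ℤ) → Ed d → ℝ) (V₀ : Ed d → ℝ)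
    (hsm : ∀ η : Fin d → ℤ, ContDiff ℝ (⊤ : ℕ∞) (a η))
    (hneg : ∀ η : Fin d → ℤ, η ≠ 0 → ∀ x : Ed d, a η x ≤ 0)
    (heven : ∀ (η : Fin d → ℤ) (x : Ed d), a η x = a (-η) x)
    (hspan : ∀ x : Ed d,
      Submodule.span ℝ {w : Ed d | ∃ η : Fin d → ℤ, a η x < 0 ∧ w = zv η} = ⊤)
    (hdecay : ∀ c : ℝ, 0 < c → ∀ K : Set (Ed d), IsCompact K → ∀ n : ℕ,
      ∃ M : (Fin d → ℤ) → ℝ,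
        (∀ η : Fin d → ℤ, ∀ x ∈ K, ‖iteratedFDeriv ℝ n (a η) x‖ ≤ M η) ∧
        Summable (fun η : Fin d → ℤ => Real.exp (c * ‖zv η‖) * M η))
    (hV : ContDiff ℝ (⊤ : ℕ∞) V₀)
    (h0 : Ed d → Ed d → ℝ)
    (hh0 : ∀ x ξ : Ed d,
      h0 x ξ = -(∑' η : Fin d → ℤ, a η x * Real.cosh ⟪zv η, ξ⟫) - V₀ x) :
    ContDiff ℝ (⊤ : ℕ∞) (fun p : Ed d × Ed d => h0 p.1 p.2)
    ∧ (∀ x ξ : Ed d, h0 x ξ = h0 x (-ξ))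
    ∧ (∀ x : Ed d, StrictConvexOn ℝ Set.univ (h0 x))
    ∧ ∃ F : (Ed d × Ed d) ≃ (Ed d × Ed d),
        (∀ p : Ed d × Ed d, F p = (p.1, gradient (h0 p.1) p.2)) ∧
        ContDiff ℝ (⊤ : ℕ∞) ⇑F ∧ ContDiff ℝ (⊤ : ℕ∞) ⇑F.symm := by
  have hsmooth : ContDiff ℝ (⊤ : ℕ∞) (fun p : Ed d × Ed d => h0 p.1 p.2) := by
    have hf : ∀ η, ContDiff ℝ (⊤ : ℕ∞)
        (fun p : Ed d × Ed d => a η p.1 * Real.cosh ⟪zv η, p.2⟫) := fun η =>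
      ((hsm η).comp contDiff_fst).mul (Real.contDiff_cosh.comp (Lz η).contDiff)
    have h1 := tsumLoc_contDiff _ hf (sum_hyp a hsm hdecay)
    have h2 := h1.neg.sub (hV.comp contDiff_fst)
    convert! h2 using 1
    ext p
    exact hh0 p.1 p.2
  have hg := grad_hasSum a V₀ hsm hdecay h0 hh0
  refine ⟨hsmooth, ?_, ?_, ?_⟩
  · intro x ξ
    rw [hh0, hh0]
    simp only [inner_neg_right, Real.cosh_neg]
  · intro x
    refine ⟨convex_univ, ?_⟩
    intro ξ _ ζ _ hne s t hs ht hst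
    have hle : ∀ η, s * (-a η x * Real.cosh ⟪zv η, ξ⟫) + t * (-a η x * Real.cosh ⟪zv η, ζ⟫) ≥
        -a η x * Real.cosh ⟪zv η, s • ξ + t • ζ⟫ := by
      intro η
      by_cases hη : η = 0
      · subst hη
        simp only [zv_zero, inner_zero_left, Real.cosh_zero]
        have : t = 1 - s := by linarith
        subst this
        linarith
      · have h1 := hneg η hη x
        have h2 := strictConvexOn_cosh'.convexOn.2 (Set.mem_univ ⟪zv η, ξ⟫)
          (Set.mem_univ ⟪zv η, ζ⟫) hs.le ht.le hst
        simp only [smul_eq_mul] at h2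
        rw [inner_add_right, inner_smul_right, inner_smul_right]
        nlinarith
    obtain ⟨η, hη, hi⟩ := exists_inner_ne (fun η => a η x) (hspan x) (ξ - ζ) (sub_ne_zero.2 hne)
    have hlt : -a η x * Real.cosh ⟪zv η, s • ξ + t • ζ⟫ <
        s * (-a η x * Real.cosh ⟪zv η, ξ⟫) + t * (-a η x * Real.cosh ⟪zv η, ζ⟫) := by
      have hne' : ⟪zv η, ξ⟫ ≠ ⟪zv η, ζ⟫ := by
        rw [inner_sub_right] at hi
        exact sub_ne_zero.1 hi
      have h2 := strictConvexOn_cosh'.2 (Set.mem_univ ⟪zv η, ξ⟫)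
        (Set.mem_univ ⟪zv η, ζ⟫) hne' hs ht hst
      simp only [smul_eq_mul] at h2
      rw [inner_add_right, inner_smul_right, inner_smul_right]
      nlinarith
    have s1 : ∀ ξ, HasSum (fun η => -a η x * Real.cosh ⟪zv η, ξ⟫) (h0 x ξ + V₀ x) := by
      intro ξ
      have := (hg x ξ).1.hasSum.neg
      rw [hh0]
      convert! this using 1
      · ext η
        ring
      · ring
    have key := hasSum_lt hle hlt (s1 (s • ξ + t • ζ)) (((s1 ξ).mul_left s).add ((s1 ζ).mul_left t))
    have hV1 : s * V₀ x + t * V₀ x = V₀ x := by rw [← add_mul, hst, one_mul]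
    simp only [smul_eq_mul]
    linarith
  · refine diffeo_of_mono h0 hsmooth fun x => ?_
    have hsx : ∀ c : ℝ, 0 < c → Summable (fun η => Real.exp (c * ‖zv η‖) * |a η x|) := by
      intro c hc
      obtain ⟨M, hM, hMs⟩ := hdecay c hc {x} isCompact_singleton 0
      refine Summable.of_nonneg_of_le (fun η => by positivity) (fun η => ?_) hMs
      have := hM η x rfl
      rw [norm_iteratedFDeriv_zero, Real.norm_eq_abs] at this
      gcongr
    obtain ⟨c, hc, hq⟩ := quad_lower_s12 (fun η => a η x) (fun η hη => hneg η hη x) (hspan x) hsx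
    refine ⟨c, hc, fun ξ ζ => ?_, fun ξ => ?_⟩
    · refine (hq (ξ - ζ)).2.trans ?_
      have h1 := ((hg x ξ).2.2 (ξ - ζ)).sub ((hg x ζ).2.2 (ξ - ζ))
      rw [inner_sub_left, gradient, gradient, InnerProductSpace.toDual_symm_apply,
        InnerProductSpace.toDual_symm_apply]
      refine hasSum_le (fun η => ?_) (hq (ξ - ζ)).1.hasSum h1
      by_cases hη : η = 0
      · subst hη
        simp [zv_zero]
      · have h2 := hneg η hη x
        have h3 := sinh_mono_sq ⟪zv η, ξ⟫ ⟪zv η, ζ⟫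
        rw [inner_sub_right]
        nlinarith
    · have h1 := (hg x ξ).1.hasSum.neg
      have h2 := (hg x 0).1.hasSum.neg
      have h3 := h1.sub h2
      have h4 := hasSum_le (fun η => ?_) ((hq ξ).1.hasSum.mul_left (1 / 2)) h3
      · have h5 := (hq ξ).2
        rw [hh0 x ξ, hh0 x 0]
        linarith
      · by_cases hη : η = 0
        · subst hη
          simp [zv_zero]
        · have h2 := hneg η hη x
          have h3 := cosh_quad ⟪zv η, ξ⟫
          simp only [inner_zero_right, Real.cosh_zero]
          nlinarith
end
end
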